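/- Let Δ = [a,b] ⊂ ℝ be a segment and let f : Δ → ℝ be continuous. If f belongs to the Gonchar class R(Δ), i.e. liminf_{n→∞} ρ_n(f)^{1/n} < 1, then the graph Γ_f = {(x, f(x)) ∈ ℂ² : x ∈ Δ} (where Δ is regarded as a subset of ℂ) is a pluripolar subset of ℂ². -/

import Mathlib

open Filter Metric

noncomputable section

/-- A subharmonic function on `ℂ` with values in `[-∞, ∞)`: upper semicontinuous,
never `+∞`, and dominated on every closed disk by every continuous function which is
harmonic inside the disk (i.e. locally the real part of a holomorphic function) and
dominates it on the boundary circle. The constant `-∞` function is allowed here;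
non-triviality is required separately in the definition of (pluri)polar sets. -/
def SubharmonicFn (u : ℂ → EReal) : Prop :=
  UpperSemicontinuous u ∧ (∀ z, u z ≠ ⊤) ∧
  ∀ (c : ℂ) (r : ℝ), 0 < r →
    ∀ h : ℂ → ℝ, ContinuousOn h (closedBall c r) →
      (∃ F : ℂ → ℂ, DifferentiableOn ℂ F (ball c r) ∧ ∀ z ∈ ball c r, h z = (F z).re) →
      (∀ z ∈ sphere c r, u z ≤ ((h z : ℝ) : EReal)) →
      ∀ z ∈ closedBall c r, u z ≤ ((h z : ℝ) : EReal)

/-- A plurisubharmonic function on a complex normed space: upper semicontinuous,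
never `+∞`, and subharmonic along every complex line. -/
def PshFn {E : Type*} [NormedAddCommGroup E] [NormedSpace ℂ E] (u : E → EReal) : Prop :=
  UpperSemicontinuous u ∧ (∀ z, u z ≠ ⊤) ∧
  ∀ a v : E, SubharmonicFn (fun w : ℂ => u (a + w • v))

/-- A set is pluripolar if it is contained in the `-∞` set of a plurisubharmonic
function which is not identically `-∞`. -/
def Pluripolar {E : Type*} [NormedAddCommGroup E] [NormedSpace ℂ E] (S : Set E) : Prop :=
  ∃ u : E → EReal, PshFn u ∧ (∃ z, u z ≠ ⊥) ∧ ∀ p ∈ S, u p = ⊥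

/-- `rhoReal f a b n` : the deviation of the best uniform approximation of `f` on
`[a,b]` by real rational functions of degree at most `n`. -/
def rhoReal (f : ℝ → ℝ) (a b : ℝ) (n : ℕ) : ℝ :=
  sInf {t : ℝ | ∃ p q : Polynomial ℝ, p.natDegree ≤ n ∧ q.natDegree ≤ n ∧
    (∀ x ∈ Set.Icc a b, q.eval x ≠ 0) ∧
    ∀ x ∈ Set.Icc a b, |f x - p.eval x / q.eval x| ≤ t}

set_option linter.all false
open Polynomial Filter Topology MeasureTheory

open Polynomial

lemma gp_chain {α : Type*} (E : Set α) (e : ℕ → α → ℂ) (c : ℕ → ℝ) (hc0 : ∀ i, 0 ≤ c i) :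
    ∀ N : ℕ, (∀ i < N, ∀ a : ℕ → ℂ, ∃ ζ ∈ E, c i ≤ ‖e i ζ + ∑ j ∈ Finset.range i, a j * e j ζ‖) →
    ∃ ζ : Fin N → α, (∀ i, ζ i ∈ E) ∧
      ∏ i ∈ Finset.range N, c i ≤ ‖(Matrix.of fun i j : Fin N => e i (ζ j)).det‖ := by
  intro N
  induction N with
  | zero => intro _; exact ⟨Fin.elim0, fun i => i.elim0, by simp⟩
  | succ N ih =>
    intro h
    obtain ⟨ζ, hζ, hd⟩ := ih (fun i hi => h i (by omega))
    set D := (Matrix.of fun i j : Fin N => e i (ζ j)).det with hD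
    by_cases hD0 : D = 0
    · obtain ⟨z, hz, -⟩ := h N (by omega) 0
      refine ⟨fun _ => z, fun _ => hz, ?_⟩
      rw [Finset.prod_range_succ]
      have h0 : ∏ i ∈ Finset.range N, c i = 0 :=
        le_antisymm (by simpa [hD0] using hd) (Finset.prod_nonneg fun i _ => hc0 i)
      rw [h0, zero_mul]; exact norm_nonneg _
    · let m : ℕ → ℂ := fun i => if hi : i < N + 1 then (-1) ^ (i + N) *
        (Matrix.of fun (p : Fin N) (q : Fin N) => e ((⟨i, hi⟩ : Fin (N+1)).succAbove p) (ζ q)).det else 0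
      have hexp : ∀ z : α, (Matrix.of fun i j : Fin (N+1) => e i (Fin.snoc (α := fun _ => α) ζ z j)).det
          = ∑ i ∈ Finset.range (N+1), m i * e i z := by
        intro z
        rw [Matrix.det_succ_column _ (Fin.last N), Finset.sum_range]
        refine Finset.sum_congr rfl fun i _ => ?_
        simp only [m, i.2, dif_pos, Matrix.of_apply, Fin.snoc_last, Fin.val_last]
        have : (Matrix.of fun i j : Fin (N+1) => e i (Fin.snoc (α := fun _ => α) ζ z j)).submatrix
            i.succAbove (Fin.last N).succAbove
            = Matrix.of fun (p : Fin N) (q : Fin N) => e (i.succAbove p) (ζ q) := by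
          ext p q
          simp [Matrix.submatrix_apply, Fin.succAbove_last]
        rw [this]; ring
      have hmN : m N = D := by
        simp only [m, Nat.lt_succ_self, dif_pos, hD]
        have : ((-1 : ℂ)) ^ (N + N) = 1 := by rw [← two_mul]; simp
        rw [this, one_mul]
        congr 1
        ext p q
        have : (⟨N, Nat.lt_succ_self N⟩ : Fin (N+1)) = Fin.last N := rfl
        simp [this, Fin.succAbove_last]
      obtain ⟨z, hz, hzc⟩ := h N (by omega) (fun i => m i / D)
      refine ⟨Fin.snoc (α := fun _ => α) ζ z, ?_, ?_⟩
      · intro i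
        refine Fin.lastCases ?_ (fun i => ?_) i
        · simpa using hz
        · simpa using hζ i
      · rw [hexp z, Finset.sum_range_succ, hmN, Finset.prod_range_succ]
        have : ∑ i ∈ Finset.range N, m i * e i z + D * e N z
            = D * (e N z + ∑ j ∈ Finset.range N, m j / D * e j z) := by
          rw [mul_add, Finset.mul_sum, add_comm]
          congr 1
          refine Finset.sum_congr rfl fun j _ => ?_
          field_simp
        rw [this, norm_mul]
        exact mul_le_mul hd hzc (hc0 N) (norm_nonneg _)

lemma gp_det_le {ι : Type*} [Fintype ι] [DecidableEq ι] (A : Matrix ι ι ℂ) (B : ι → ℝ)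
    (h : ∀ i j, ‖A i j‖ ≤ B i) : ‖A.det‖ ≤ (Fintype.card ι).factorial * ∏ i, B i := by
  rw [← Matrix.det_transpose, Matrix.det_apply]
  refine (norm_sum_le _ _).trans ?_
  have : ∀ σ ∈ (Finset.univ : Finset (Equiv.Perm ι)),
      ‖Equiv.Perm.sign σ • ∏ i, A.transpose (σ i) i‖ ≤ ∏ i, B i := by
    intro σ _
    have h1 : ‖Equiv.Perm.sign σ • ∏ i, A.transpose (σ i) i‖ = ‖∏ i, A.transpose (σ i) i‖ := by
      rcases Int.units_eq_one_or (Equiv.Perm.sign σ) with h | h <;> simp [h]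
    rw [h1, norm_prod]
    exact Finset.prod_le_prod (fun i _ => norm_nonneg _) (fun i _ => h _ _)
  refine (Finset.sum_le_sum this).trans ?_
  simp [Fintype.card_perm]

set_option linter.unusedSimpArgs false
open Polynomial

noncomputable def gpRow {R : Type*} [CommRing R] (f g : R[X]) (d ν K : ℕ) : R[X] :=
  f ^ (K / d) * g ^ (ν - 1 - K / d) * X ^ (K % d)

lemma gp_detB (f g : ℂ[X]) (d : ℕ) (hd : 0 < d) (hf : f.natDegree = d) (hg : g.natDegree ≤ d) :
    ∀ ν n : ℕ, n = ν * d →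
    (Matrix.of fun K K' : Fin n => (gpRow f g d ν K).coeff K').det =
      (f.leadingCoeff ^ d * (f.roots.map fun z => g.eval z).prod) ^ (∑ i ∈ Finset.range ν, i) := by
  intro ν
  induction ν with
  | zero => intro n hn; have : n = 0 := by simpa using hn
            subst this; simp
  | succ ν ih =>
    intro n hn
    have : n = d + ν * d := by rw [hn]; ring
    subst this
    have hres : (Polynomial.sylvester f (g ^ ν) d (ν * d)).det =
        (f.leadingCoeff ^ d * (f.roots.map fun z => g.eval z).prod) ^ ν := by
      have := Polynomial.resultant_eq_prod_eval f (g ^ ν) (ν * d)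
        (natDegree_pow_le.trans (Nat.mul_le_mul_left _ hg)) (IsAlgClosed.splits f)
      rw [hf, Polynomial.resultant] at this
      rw [this, mul_pow, ← pow_mul, mul_comm d ν, ← Multiset.prod_map_pow]
      simp
    have key : (Matrix.of fun K K' : Fin (d + ν * d) => (gpRow f g d (ν + 1) K).coeff K') =
        (Matrix.reindex finSumFinEquiv finSumFinEquiv (Matrix.fromBlocks (1 : Matrix (Fin d) (Fin d) ℂ) 0 0
          (Matrix.of fun K K' : Fin (ν * d) => (gpRow f g d ν K).coeff K'))) *
        (Polynomial.sylvester f (g ^ ν) d (ν * d)).transpose := by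
      have hS1 : ∀ (j : Fin d) (i : Fin (d + ν * d)),
          Polynomial.sylvester f (g ^ ν) d (ν * d) i (Fin.castAdd _ j) = (g ^ ν * X ^ (j : ℕ)).coeff i := by
        intro j i
        simp only [Polynomial.sylvester, Matrix.of_apply, Fin.addCases_left, coeff_mul_X_pow', Set.mem_Icc]
        by_cases h : (j : ℕ) ≤ i
        · by_cases h2 : (i : ℕ) ≤ j + ν * d
          · simp [h, h2]
          · rw [if_neg (by tauto), if_pos h, coeff_eq_zero_of_natDegree_lt]
            exact (natDegree_pow_le.trans (Nat.mul_le_mul_left _ hg)).trans_lt (by omega)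
        · simp [h]
      have hS2 : ∀ (j : Fin (ν * d)) (i : Fin (d + ν * d)),
          Polynomial.sylvester f (g ^ ν) d (ν * d) i (Fin.natAdd _ j) = (f * X ^ (j : ℕ)).coeff i := by
        intro j i
        simp only [Polynomial.sylvester, Matrix.of_apply, Fin.addCases_right, coeff_mul_X_pow', Set.mem_Icc]
        by_cases h : (j : ℕ) ≤ i
        · by_cases h2 : (i : ℕ) ≤ j + d
          · simp [h, h2]
          · rw [if_neg (by tauto), if_pos h, coeff_eq_zero_of_natDegree_lt]
            omega
        · simp [h]
      ext K K'
      rw [Matrix.mul_apply, ← finSumFinEquiv.sum_comp, Fintype.sum_sum_type]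
      refine Fin.addCases (fun k => ?_) (fun k => ?_) K
      · have e0 : finSumFinEquiv.symm (Fin.castAdd (ν * d) k) = Sum.inl k := finSumFinEquiv_symm_apply_castAdd k
        simp only [Matrix.reindex_apply, Matrix.submatrix_apply, Equiv.symm_apply_apply, e0,
          Matrix.fromBlocks_apply₁₁, Matrix.fromBlocks_apply₁₂, Matrix.zero_apply, zero_mul,
          Finset.sum_const_zero, add_zero, finSumFinEquiv_apply_left, Matrix.transpose_apply, hS1]
        simp [Matrix.one_apply, gpRow, Nat.div_eq_of_lt k.2, Nat.mod_eq_of_lt k.2]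
      · have e0 : finSumFinEquiv.symm (Fin.natAdd d k) = Sum.inr k := finSumFinEquiv_symm_apply_natAdd k
        simp only [Matrix.reindex_apply, Matrix.submatrix_apply, Equiv.symm_apply_apply, e0,
          Matrix.fromBlocks_apply₂₁, Matrix.fromBlocks_apply₂₂, Matrix.zero_apply, zero_mul,
          Finset.sum_const_zero, zero_add, finSumFinEquiv_apply_right, Matrix.transpose_apply, hS2,
          Matrix.of_apply]
        have hk : (k : ℕ) / d < ν := Nat.div_lt_of_lt_mul (k.2.trans_eq (mul_comm _ _))
        have hrow : gpRow f g d (ν + 1) (Fin.natAdd d k : Fin (d + ν * d)) = f * gpRow f g d ν k := by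
          simp only [gpRow, Fin.val_natAdd, Nat.add_div_left _ hd, Nat.add_mod_left, Nat.succ_eq_add_one]
          rw [show ν + 1 - 1 - (k / d + 1) = ν - 1 - k / d by omega, pow_succ]
          ring
        have hdeg : (gpRow f g d ν k).natDegree < ν * d := by
          unfold gpRow
          have h1 : (f ^ ((k:ℕ) / d) * g ^ (ν - 1 - (k:ℕ) / d) * X ^ ((k:ℕ) % d)).natDegree
              ≤ (k:ℕ) / d * d + (ν - 1 - (k:ℕ)/d) * d + (k:ℕ) % d := by
            refine natDegree_mul_le.trans (add_le_add (natDegree_mul_le.trans (add_le_add ?_ ?_)) ?_)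
            · exact natDegree_pow_le.trans (by rw [hf])
            · exact natDegree_pow_le.trans (Nat.mul_le_mul_left _ hg)
            · simp
          have h2 := Nat.mod_lt (k : ℕ) hd
          have h3 : (k:ℕ) / d * d + (ν - 1 - (k:ℕ)/d) * d + d = ν * d := by
            rw [← add_mul, ← Nat.succ_mul]; congr 1; omega
          omega
        rw [hrow]
        conv_lhs => rw [Polynomial.as_sum_range' (gpRow f g d ν k) (ν * d) hdeg, Finset.mul_sum,
          Polynomial.finsetSum_coeff, Finset.sum_range]
        refine Finset.sum_congr rfl fun j _ => ?_
        rw [← C_mul_X_pow_eq_monomial, ← mul_assoc, mul_comm f (C _), mul_assoc, coeff_C_mul,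
          finSumFinEquiv_symm_apply_natAdd, Matrix.fromBlocks_apply₂₂, Matrix.of_apply]
    rw [key, Matrix.det_mul, Matrix.det_transpose, hres, Matrix.det_reindex_self,
      Matrix.det_fromBlocks_zero₂₁, Matrix.det_one, one_mul, ih _ rfl, Finset.sum_range_succ, pow_add]

open Polynomial

noncomputable def gpEv (F : ℂ[X][X]) (x w : ℂ) : ℂ := (F.map (evalRingHom w)).eval x

def gpWD (F : ℂ[X][X]) (j : ℕ) : Prop := ∀ k, (F.coeff k).natDegree ≤ j

lemma gpWD.mul {F G : ℂ[X][X]} {j k : ℕ} (hF : gpWD F j) (hG : gpWD G k) : gpWD (F * G) (j + k) := by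
  intro i
  rw [coeff_mul]
  exact natDegree_sum_le_of_forall_le _ _ fun p _ => natDegree_mul_le.trans (add_le_add (hF _) (hG _))

lemma gpWD.pow {F : ℂ[X][X]} {j : ℕ} (hF : gpWD F j) (n : ℕ) : gpWD (F ^ n) (n * j) := by
  induction n with
  | zero => intro i; rw [pow_zero, coeff_one]; split_ifs <;> simp
  | succ n ih => rw [pow_succ, Nat.succ_mul]; exact ih.mul hF

lemma gpWD.mono {F : ℂ[X][X]} {j k : ℕ} (hF : gpWD F j) (h : j ≤ k) : gpWD F k := fun i => (hF i).trans h

lemma gpWD.add {F G : ℂ[X][X]} {j : ℕ} (hF : gpWD F j) (hG : gpWD G j) : gpWD (F + G) j := by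
  intro i; rw [coeff_add]; exact natDegree_add_le_of_degree_le (hF i) (hG i)

lemma gpWD_C {p : ℂ[X]} {j : ℕ} (h : p.natDegree ≤ j) : gpWD (C p) j := by
  intro i; rw [coeff_C]; split_ifs <;> simp [h]

lemma gpWD_X : gpWD (X : ℂ[X][X]) 0 := by
  intro i; rw [coeff_X]; split_ifs <;> simp

lemma gpEv_mul (F G : ℂ[X][X]) (x w : ℂ) : gpEv (F * G) x w = gpEv F x w * gpEv G x w := by simp [gpEv]
lemma gpEv_add (F G : ℂ[X][X]) (x w : ℂ) : gpEv (F + G) x w = gpEv F x w + gpEv G x w := by simp [gpEv]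
lemma gpEv_pow (F : ℂ[X][X]) (n : ℕ) (x w : ℂ) : gpEv (F ^ n) x w = gpEv F x w ^ n := by simp [gpEv]
lemma gpEv_X (x w : ℂ) : gpEv X x w = x := by simp [gpEv]
lemma gpEv_C (p : ℂ[X]) (x w : ℂ) : gpEv (C p) x w = p.eval w := by simp [gpEv]

lemma gpEv_expand (F : ℂ[X][X]) (n L : ℕ) (h1 : F.natDegree < n) (h2 : ∀ k, (F.coeff k).natDegree < L) (x w : ℂ) :
    gpEv F x w = ∑ i : Fin n × Fin L, (F.coeff i.1).coeff i.2 * (x ^ (i.1 : ℕ) * w ^ (i.2 : ℕ)) := by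
  rw [Fintype.sum_prod_type, gpEv, eval_map, eval₂_eq_sum_range' _ h1, Finset.sum_range]
  refine Finset.sum_congr rfl fun k _ => ?_
  rw [coe_evalRingHom, eval_eq_sum_range' (h2 k), Finset.sum_range, Finset.sum_mul]
  exact Finset.sum_congr rfl fun l _ => by ring

noncomputable def gpG (F G : ℂ[X][X]) (d ν H K l : ℕ) : ℂ[X][X] :=
  (if l < H then gpRow F G d ν K else X ^ K) * C (X ^ l)

lemma gpRow_deg {R : Type*} [CommRing R] [Nontrivial R] (F G : R[X]) (d ν K : ℕ) (hd : 0 < d) (hF : F.natDegree ≤ d) (hG : G.natDegree ≤ d)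
    (hK : K < ν * d) : (gpRow F G d ν K).natDegree < ν * d := by
  have hk : K / d < ν := Nat.div_lt_of_lt_mul (hK.trans_eq (mul_comm _ _))
  unfold gpRow
  have h1 : (F ^ (K / d) * G ^ (ν - 1 - K / d) * X ^ (K % d)).natDegree
      ≤ K / d * d + (ν - 1 - K/d) * d + K % d := by
    refine natDegree_mul_le.trans (add_le_add (natDegree_mul_le.trans (add_le_add ?_ ?_)) ?_)
    · exact natDegree_pow_le.trans (Nat.mul_le_mul_left _ hF)
    · exact natDegree_pow_le.trans (Nat.mul_le_mul_left _ hG)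
    · simp
  have h2 := Nat.mod_lt K hd
  have h3 : K / d * d + (ν - 1 - K/d) * d + d = ν * d := by
    rw [← add_mul, ← Nat.succ_mul]; congr 1; omega
  omega

lemma gpRow_WD (F G : ℂ[X][X]) (d ν K j : ℕ) (hd : 0 < d) (hF : gpWD F j) (hG : gpWD G j)
    (hK : K < ν * d) : gpWD (gpRow F G d ν K) ((ν - 1) * j) := by
  have hk : K / d < ν := Nat.div_lt_of_lt_mul (hK.trans_eq (mul_comm _ _))
  refine (((hF.pow _).mul (hG.pow _)).mul (gpWD_X.pow _)).mono ?_
  rw [mul_zero, add_zero, ← add_mul]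
  exact Nat.mul_le_mul_right _ (by omega)

lemma gp_detM (F G : ℂ[X][X]) (d ν H L1 j : ℕ) (hd : 0 < d)
    (hF : F.natDegree ≤ d) (hG : G.natDegree ≤ d) (hf : (F.map (evalRingHom 0)).natDegree = d) (hH : H ≤ L1) :
    (Matrix.of fun p q : Fin (ν * d) × Fin L1 => ((gpG F G d ν H p.1 p.2).coeff q.1).coeff q.2).det =
    (((F.map (evalRingHom 0)).leadingCoeff ^ d *
      ((F.map (evalRingHom 0)).roots.map fun z => gpEv G z 0).prod) ^ (∑ i ∈ Finset.range ν, i)) ^ H := by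
  set M := (Matrix.of fun p q : Fin (ν * d) × Fin L1 => ((gpG F G d ν H p.1 p.2).coeff q.1).coeff q.2)
  have hcoef : ∀ p q : Fin (ν * d) × Fin L1, M p q = if (p.2 : ℕ) ≤ q.2 then
      ((if (p.2 : ℕ) < H then gpRow F G d ν p.1 else X ^ (p.1 : ℕ)).coeff q.1).coeff (q.2 - p.2) else 0 := by
    intro p q
    simp only [M, Matrix.of_apply, gpG, coeff_mul_C, coeff_mul_X_pow']
  have hBT : M.BlockTriangular (fun p => p.2) := by
    intro p q hpq
    rw [hcoef, if_neg]
    exact not_le.mpr hpq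
  rw [hBT.det_fintype]
  have hblock : ∀ l : Fin L1, (M.toSquareBlock (fun p => p.2) l).det = if (l : ℕ) < H then
      ((F.map (evalRingHom 0)).leadingCoeff ^ d *
      ((F.map (evalRingHom 0)).roots.map fun z => gpEv G z 0).prod) ^ (∑ i ∈ Finset.range ν, i) else 1 := by
    intro l
    let e : Fin (ν * d) ≃ {p : Fin (ν * d) × Fin L1 // p.2 = l} :=
      { toFun := fun K => ⟨(K, l), rfl⟩
        invFun := fun p => p.1.1
        left_inv := fun K => rfl
        right_inv := by rintro ⟨⟨K, l'⟩, rfl⟩; rfl }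
    rw [← Matrix.det_submatrix_equiv_self e]
    split_ifs with h
    · have hb := gp_detB (F.map (evalRingHom 0)) (G.map (evalRingHom 0)) d hd hf
        (natDegree_map_le.trans hG) ν _ rfl
      refine Eq.trans ?_ hb
      congr 1
      ext K K'
      have : gpRow (F.map (evalRingHom 0)) (G.map (evalRingHom 0)) d ν K
          = (gpRow F G d ν K).map (evalRingHom 0) := by simp [gpRow]
      simp only [Matrix.submatrix_apply, Matrix.toSquareBlock_def, Matrix.of_apply, e, Equiv.coe_fn_mk,
        hcoef, le_refl, if_true, h, Nat.sub_self, this, coeff_map, coe_evalRingHom, coeff_zero_eq_eval_zero]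
    · have : (M.toSquareBlock (fun p => p.2) l).submatrix e e = 1 := by
        ext K K'
        simp only [Matrix.submatrix_apply, Matrix.toSquareBlock_def, Matrix.of_apply, e, Equiv.coe_fn_mk,
          hcoef, le_refl, if_true, h, if_false, Nat.sub_self, coeff_X_pow, Matrix.one_apply, Fin.ext_iff, eq_comm]
        split_ifs <;> simp
      rw [this, Matrix.det_one]
  rw [Finset.prod_congr rfl fun l _ => hblock l]
  have := Fin.prod_univ_eq_prod_range (fun l => if l < H then ((F.map (evalRingHom 0)).leadingCoeff ^ d *
      ((F.map (evalRingHom 0)).roots.map fun z => gpEv G z 0).prod) ^ (∑ i ∈ Finset.range ν, i) else 1) L1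
  rw [this, Finset.prod_ite, Finset.prod_const_one, mul_one, Finset.prod_const]
  congr 1
  rw [show (Finset.range L1).filter (· < H) = Finset.range H by ext; simp; omega, Finset.card_range]

open Polynomial

lemma gp_sum_div (d ν : ℕ) (hd : 0 < d) : ∑ K ∈ Finset.range (ν * d), K / d = d * ∑ i ∈ Finset.range ν, i := by
  induction ν with
  | zero => simp
  | succ ν ih =>
    rw [Nat.succ_mul, Finset.sum_range_add, ih, Finset.sum_range_succ, mul_add]
    congr 1
    rw [Finset.sum_congr rfl (g := fun _ => ν), Finset.sum_const, Finset.card_range, smul_eq_mul]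
    intro x hx
    rw [mul_comm, Nat.mul_add_div hd, Nat.div_eq_of_lt (Finset.mem_range.mp hx), add_zero]

lemma gp_sum_div' (d ν : ℕ) (hd : 0 < d) : ∑ K ∈ Finset.range (ν * d), (ν - 1 - K / d) = d * ∑ i ∈ Finset.range ν, i := by
  have h : ∑ K ∈ Finset.range (ν * d), (ν - 1 - K / d) + ∑ K ∈ Finset.range (ν * d), K / d
      = ν * d * (ν - 1) := by
    rw [← Finset.sum_add_distrib, Finset.sum_congr rfl (g := fun _ => ν - 1), Finset.sum_const,
      Finset.card_range, smul_eq_mul]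
    intro x hx
    have : x / d < ν := Nat.div_lt_of_lt_mul ((Finset.mem_range.mp hx).trans_eq (mul_comm _ _))
    show ν - 1 - x / d + x / d = ν - 1
    generalize x / d = t at *
    omega
  rw [gp_sum_div d ν hd] at h
  have h2 := Finset.sum_range_id_mul_two ν
  have h3 : ν * d * (ν - 1) = d * (∑ i ∈ Finset.range ν, i) + d * (∑ i ∈ Finset.range ν, i) := by
    rw [mul_comm ν d, mul_assoc, ← h2]; ring
  omega

lemma gp_main_ineq (E : Set (ℂ × ℂ)) (F G : ℂ[X][X]) (d ν H L1 j : ℕ) (hd : 0 < d)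
    (hF : F.natDegree ≤ d) (hG : G.natDegree ≤ d) (hf : (F.map (evalRingHom 0)).natDegree = d)
    (hFj : gpWD F j) (hGj : gpWD G j) (hL : L1 = H + ν * j) (hH : 0 < L1)
    (R R' BF BG : ℝ) (hR : 1 ≤ R) (hR' : 1 ≤ R') (hBF0 : 0 ≤ BF) (hBG0 : 0 ≤ BG)
    (hEx : ∀ ζ ∈ E, ‖ζ.1‖ ≤ R) (hEy : ∀ ζ ∈ E, ‖ζ.2‖ ≤ R')
    (hBF : ∀ ζ ∈ E, ‖gpEv F ζ.1 ζ.2‖ ≤ BF) (hBG : ∀ ζ ∈ E, ‖gpEv G ζ.1 ζ.2‖ ≤ BG)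
    (c : ℕ → ℝ) (hc0 : ∀ k, 0 ≤ c k)
    (hc : ∀ n < ν * d * L1, ∀ a : ℕ → ℂ, ∃ ζ ∈ E, c (n / L1) ≤ ‖ζ.1 ^ (n / L1) * ζ.2 ^ (n % L1) +
      ∑ i ∈ Finset.range n, a i * (ζ.1 ^ (i / L1) * ζ.2 ^ (i % L1))‖) :
    ‖(((F.map (evalRingHom 0)).leadingCoeff ^ d *
      ((F.map (evalRingHom 0)).roots.map fun z => gpEv G z 0).prod) ^ (∑ i ∈ Finset.range ν, i)) ^ H‖
      * (∏ k ∈ Finset.range (ν * d), c k) ^ L1 ≤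
    (ν * d * L1).factorial * (((BF * BG) ^ (d * ∑ i ∈ Finset.range ν, i) * (R ^ d * R' ^ H) ^ (ν * d)) ^ H
      * ((R ^ (ν * d) * R' ^ L1) ^ (ν * d)) ^ (ν * j)) := by
  obtain ⟨ζ, hζ, hdet⟩ := gp_chain E (fun n ζ => ζ.1 ^ (n / L1) * ζ.2 ^ (n % L1)) (fun n => c (n / L1))
    (fun n => hc0 _) (ν * d * L1) hc
  let A : Matrix (Fin (ν * d) × Fin L1) (Fin (ν * d) × Fin L1) ℂ :=
    Matrix.of fun p q => (ζ (finProdFinEquiv q)).1 ^ (p.1 : ℕ) * (ζ (finProdFinEquiv q)).2 ^ (p.2 : ℕ)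
  let M : Matrix (Fin (ν * d) × Fin L1) (Fin (ν * d) × Fin L1) ℂ :=
    (Matrix.of fun p q : Fin (ν * d) × Fin L1 => ((gpG F G d ν H p.1 p.2).coeff q.1).coeff q.2)
  have hAdet : A.det = (Matrix.of fun i j : Fin (ν * d * L1) =>
      (ζ j).1 ^ ((i : ℕ) / L1) * (ζ j).2 ^ ((i : ℕ) % L1)).det := by
    rw [← Matrix.det_submatrix_equiv_self finProdFinEquiv]
    congr 1
    ext p q
    simp only [A, Matrix.submatrix_apply, Matrix.of_apply, finProdFinEquiv_apply_val]
    rw [Nat.add_mul_div_left _ _ hH, Nat.div_eq_of_lt p.2.2, zero_add, Nat.add_mul_mod_self_left,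
      Nat.mod_eq_of_lt p.2.2]
  have hcprod : ∏ i ∈ Finset.range (ν * d * L1), c (i / L1) = (∏ k ∈ Finset.range (ν * d), c k) ^ L1 := by
    rw [Finset.prod_range, ← finProdFinEquiv.prod_comp, Fintype.prod_prod_type, Finset.prod_range, ← Finset.prod_pow]
    refine Finset.prod_congr rfl fun k _ => ?_
    rw [Finset.prod_congr rfl (g := fun _ => c k), Finset.prod_const, Finset.card_univ, Fintype.card_fin]
    intro l _
    rw [finProdFinEquiv_apply_val, Nat.add_mul_div_left _ _ hH, Nat.div_eq_of_lt l.2, zero_add]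
  have hMA : ∀ p q, (M * A) p q = gpEv (gpG F G d ν H p.1 p.2) (ζ (finProdFinEquiv q)).1 (ζ (finProdFinEquiv q)).2 := by
    intro p q
    rw [gpEv_expand _ (ν * d) L1, Matrix.mul_apply]
    · rfl
    · unfold gpG
      refine natDegree_mul_le.trans_lt ?_
      rw [natDegree_C, add_zero]
      split_ifs
      · exact gpRow_deg F G d ν _ hd hF hG p.1.2
      · rw [natDegree_X_pow]; exact p.1.2
    · intro k
      have hp := p.2.2
      unfold gpG
      split_ifs with h
      · have := ((gpRow_WD F G d ν p.1 j hd hFj hGj p.1.2).mul (gpWD_C (natDegree_X_pow_le (p.2:ℕ)))) k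
        refine this.trans_lt ?_
        have : (ν - 1) * j ≤ ν * j := Nat.mul_le_mul_right _ (by omega)
        omega
      · have := ((gpWD_X.pow (p.1 : ℕ)).mul (gpWD_C (natDegree_X_pow_le (p.2:ℕ)))) k
        refine this.trans_lt ?_
        omega
  set BB : Fin (ν * d) × Fin L1 → ℝ := fun p => if (p.2 : ℕ) < H then
    BF ^ ((p.1 : ℕ) / d) * BG ^ (ν - 1 - (p.1 : ℕ) / d) * (R ^ d * R' ^ H) else R ^ (ν * d) * R' ^ L1 with hBB
  have hbd : ∀ p q, ‖(M * A) p q‖ ≤ BB p := by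
    intro p q
    rw [hMA]
    have hz := hζ (finProdFinEquiv q)
    set z := ζ (finProdFinEquiv q)
    have hx := hEx z hz
    have hy := hEy z hz
    have h1 := hBF z hz
    have h2 := hBG z hz
    have powle : ∀ {t S : ℝ} {m n : ℕ}, 0 ≤ t → t ≤ S → 1 ≤ S → m ≤ n → t ^ m ≤ S ^ n := by
      intro t S m n h0 h1 h2 h3
      exact (pow_le_pow_left₀ h0 h1 m).trans (pow_le_pow_right₀ h2 h3)
    simp only [hBB, gpG]
    split_ifs with h
    · rw [gpEv_mul, gpEv_C, gpRow, gpEv_mul, gpEv_mul, gpEv_pow, gpEv_pow, gpEv_pow, gpEv_X, eval_pow, eval_X,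
        norm_mul, norm_mul, norm_mul, norm_pow, norm_pow, norm_pow, norm_pow, mul_assoc (_ * _)]
      have := powle (norm_nonneg _) hx hR (Nat.mod_lt (p.1 : ℕ) hd).le
      have := powle (norm_nonneg _) hy hR' h.le
      gcongr
    · rw [gpEv_mul, gpEv_C, gpEv_pow, gpEv_X, eval_pow, eval_X, norm_mul, norm_pow, norm_pow]
      have := powle (norm_nonneg _) hx hR p.1.2.le
      have := powle (norm_nonneg _) hy hR' p.2.2.le
      gcongr
  have hdetle := gp_det_le _ BB hbd
  rw [Matrix.det_mul, norm_mul, hAdet, gp_detM F G d ν H L1 j hd hF hG hf (by omega)] at hdetle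
  rw [← hcprod]
  refine (mul_le_mul_of_nonneg_left hdet (norm_nonneg _)).trans (hdetle.trans ?_)
  rw [Fintype.card_prod, Fintype.card_fin, Fintype.card_fin]
  refine le_of_eq ?_
  congr 1
  rw [Fintype.prod_prod_type, Finset.prod_comm]
  simp only [hBB]
  have h1 : ∀ l : Fin L1, (∏ K : Fin (ν * d), if (l : ℕ) < H then
    BF ^ ((K : ℕ) / d) * BG ^ (ν - 1 - (K : ℕ) / d) * (R ^ d * R' ^ H) else R ^ (ν * d) * R' ^ L1) =
      if (l : ℕ) < H then ((BF * BG) ^ (d * ∑ i ∈ Finset.range ν, i) * (R ^ d * R' ^ H) ^ (ν * d)) else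
      (R ^ (ν * d) * R' ^ L1) ^ (ν * d) := by
    intro l
    split_ifs with h
    · rw [Finset.prod_mul_distrib, Finset.prod_mul_distrib, Finset.prod_const, Finset.card_univ, Fintype.card_fin,
        Finset.prod_pow_eq_pow_sum, Finset.prod_pow_eq_pow_sum, ← Finset.sum_range (fun K => K / d),
        ← Finset.sum_range (fun K => ν - 1 - K / d), gp_sum_div d ν hd, gp_sum_div' d ν hd, mul_pow BF BG]
    · simp
  rw [Finset.prod_congr rfl fun l _ => h1 l, ← Finset.prod_range (fun l => if l < H then
      ((BF * BG) ^ (d * ∑ i ∈ Finset.range ν, i) * (R ^ d * R' ^ H) ^ (ν * d)) else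
      (R ^ (ν * d) * R' ^ L1) ^ (ν * d)), hL, Finset.prod_range_add]
  congr 1
  · rw [Finset.prod_congr rfl fun l hl => if_pos (Finset.mem_range.mp hl), Finset.prod_const, Finset.card_range]
  · rw [Finset.prod_congr rfl fun l hl => if_neg (by omega), Finset.prod_const, Finset.card_range]

open Polynomial

/-- lower bound property on all bidegree `≤ D` monic-monic polynomials -/
def gpT (E : Set (ℂ × ℂ)) (T0 : ℝ) : Prop :=
  ∀ (D : ℕ) (F : ℂ[X][X]), 1 ≤ D → F.leadingCoeff.Monic → F.natDegree ≤ D → gpWD F D →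
    ∃ ζ ∈ E, Real.exp (-T0 * D) < ‖gpEv F ζ.1 ζ.2‖

def gpL (E : Set (ℂ × ℂ)) (γ : ℝ) (Θ : ℕ) : Prop :=
  ∀ (j : ℕ) (F : ℂ[X][X]), F.leadingCoeff.Monic → Θ ≤ F.natDegree → gpWD F j → Θ * j ≤ F.natDegree →
    ∃ ζ ∈ E, Real.exp (-γ * F.natDegree) < ‖gpEv F ζ.1 ζ.2‖

lemma gp_lead (L1 n : ℕ) (hL : 0 < L1) (a : ℕ → ℂ) : ∃ F : ℂ[X][X], F.leadingCoeff.Monic ∧ F.natDegree = n / L1 ∧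
    gpWD F (L1 - 1) ∧ ∀ x w, gpEv F x w = x ^ (n / L1) * w ^ (n % L1) +
      ∑ i ∈ Finset.range n, a i * (x ^ (i / L1) * w ^ (i % L1)) := by
  set F : ℂ[X][X] := X ^ (n / L1) * C (X ^ (n % L1)) +
    ∑ i ∈ Finset.range n, C (C (a i)) * (X ^ (i / L1) * C (X ^ (i % L1))) with hFdef
  have hcoef : ∀ k, F.coeff k = (if k = n / L1 then X ^ (n % L1) else 0) +
      ∑ i ∈ Finset.range n, (if k = i / L1 then C (a i) * X ^ (i % L1) else 0) := by
    intro k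
    simp only [hFdef, coeff_add, finsetSum_coeff, coeff_C_mul, coeff_mul_C, coeff_X_pow]
    congr 1
    · split_ifs <;> simp
    · refine Finset.sum_congr rfl fun i _ => ?_
      split_ifs <;> simp
  have hmod := Nat.mod_lt n hL
  have hmonic : (F.coeff (n / L1)).Monic := by
    rw [hcoef, if_pos rfl]
    refine monic_X_pow_add ?_
    rw [degree_lt_iff_coeff_zero]
    intro m hm
    rw [finsetSum_coeff]
    refine Finset.sum_eq_zero fun i hi => ?_
    have hi := Finset.mem_range.mp hi
    split_ifs with h
    · rw [coeff_C_mul, coeff_X_pow, if_neg, mul_zero]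
      have e1 := Nat.div_add_mod i L1
      have e2 := Nat.div_add_mod n L1
      rw [← h] at e1
      omega
    · simp
  have hdeg : F.natDegree = n / L1 := by
    refine le_antisymm ?_ (le_natDegree_of_ne_zero hmonic.ne_zero)
    rw [natDegree_le_iff_coeff_eq_zero]
    intro k hk
    rw [hcoef, if_neg (by omega), zero_add]
    refine Finset.sum_eq_zero fun i hi => if_neg ?_
    have := Nat.div_le_div_right (c := L1) (Finset.mem_range.mp hi).le
    omega
  refine ⟨F, ?_, hdeg, ?_, ?_⟩
  · rw [leadingCoeff, hdeg]; exact hmonic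
  · intro k
    rw [hcoef]
    refine natDegree_add_le_of_degree_le ?_ (natDegree_sum_le_of_forall_le _ _ fun i _ => ?_)
    · split_ifs
      · rw [natDegree_X_pow]; omega
      · simp
    · have := Nat.mod_lt i hL
      split_ifs
      · refine (natDegree_C_mul_le _ _).trans ?_
        rw [natDegree_X_pow]; omega
      · simp
  · intro x w
    have hs : ∀ (s : Finset ℕ) (g : ℕ → ℂ[X][X]), gpEv (∑ i ∈ s, g i) x w = ∑ i ∈ s, gpEv (g i) x w := by
      intro s g; simp [gpEv, Polynomial.map_sum, eval_finsetSum]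
    simp only [hFdef, gpEv_add, gpEv_mul, gpEv_pow, gpEv_X, gpEv_C, eval_pow, eval_X, hs, eval_C]

lemma gp_thmA_log (R R' T0 γ1 : ℝ) (Θ1 : ℕ) (hR : 1 ≤ R) (hR' : 1 ≤ R') (hT0 : 0 ≤ T0) (hΘ1 : 1 ≤ Θ1)
    (E : Set (ℂ × ℂ)) (hEx : ∀ ζ ∈ E, ‖ζ.1‖ ≤ R) (hEy : ∀ ζ ∈ E, ‖ζ.2‖ ≤ R')
    (hT : gpT E T0) (hL : gpL E γ1 Θ1)
    (F G : ℂ[X][X]) (d ν H L1 j : ℕ) (hd : 0 < d) (γF γG : ℝ)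
    (hF : F.natDegree ≤ d) (hG : G.natDegree ≤ d) (hf : (F.map (evalRingHom 0)).natDegree = d)
    (hFj : gpWD F j) (hGj : gpWD G j) (hL1 : L1 = H + ν * j) (hH : 0 < L1)
    (hBF : ∀ ζ ∈ E, ‖gpEv F ζ.1 ζ.2‖ ≤ Real.exp (-γF * d)) (hBG : ∀ ζ ∈ E, ‖gpEv G ζ.1 ζ.2‖ ≤ Real.exp (-γG * d))
    (hν : 0 < ν)
    (Res : ℂ) (hRes : Res = (F.map (evalRingHom 0)).leadingCoeff ^ d *
      ((F.map (evalRingHom 0)).roots.map fun z => gpEv G z 0).prod) (hRes0 : Res ≠ 0) :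
    (H : ℝ) * ((ν * (ν - 1) / 2 : ℝ) * Real.log ‖Res‖) -
      L1 * (γ1 * ((ν * d) * (ν * d - 1) / 2) + (T0 + |γ1|) * Θ1 ^ 2 * L1 ^ 2) ≤
     (ν * d * L1) * Real.log (ν * d * L1) + (H * (d * (ν * (ν - 1) / 2) * (-γF * d + -γG * d) +
       (ν * d) * (d * Real.log R + H * Real.log R')) + (ν * j) * ((ν * d) * ((ν * d) * Real.log R + L1 * Real.log R'))) := by
  have hP : ∀ m : ℕ, ((∑ i ∈ Finset.range m, i : ℕ) : ℝ) = m * (m - 1) / 2 := by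
    intro m
    induction m with
    | zero => simp
    | succ m ih => rw [Finset.sum_range_succ, Nat.cast_add, ih]; push_cast; ring
  set c : ℕ → ℝ := fun k => if k < Θ1 * L1 then Real.exp (-T0 * (Θ1 * L1 : ℕ)) else Real.exp (-γ1 * k) with hcdef
  have hcpos : ∀ k, 0 < c k := by intro k; simp only [hcdef]; split_ifs <;> positivity
  have hmain := gp_main_ineq E F G d ν H L1 j hd hF hG hf hFj hGj hL1 hH R R' _ _ hR hR' (Real.exp_pos _).le
    (Real.exp_pos _).le hEx hEy hBF hBG c (fun k => (hcpos k).le) ?_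
  swap
  · intro n hn a
    obtain ⟨P, hP1, hP2, hP3, hP4⟩ := gp_lead L1 n hH a
    simp only [← hP4, hcdef]
    split_ifs with h
    · obtain ⟨ζ, hζ, hz⟩ := hT (Θ1 * L1) P (Nat.mul_pos hΘ1 hH) hP1 (by omega)
        (hP3.mono (by nlinarith [Nat.sub_le L1 1]))
      exact ⟨ζ, hζ, hz.le⟩
    · obtain ⟨ζ, hζ, hz⟩ := hL (L1 - 1) P hP1 (by rw [hP2]; nlinarith) hP3
        (by rw [hP2]; nlinarith [Nat.sub_le L1 1, Nat.mul_le_mul_left Θ1 (Nat.sub_le L1 1)])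
      rw [hP2] at hz
      exact ⟨ζ, hζ, hz.le⟩
  rw [← hRes] at hmain
  have hνd : (0:ℝ) < ν * d := mul_pos (Nat.cast_pos.mpr hν) (Nat.cast_pos.mpr hd)
  have hL1' : (1:ℝ) ≤ L1 := by exact_mod_cast hH
  have hRes' : 0 < ‖Res‖ := norm_pos_iff.mpr hRes0
  have hprod : 0 < ∏ k ∈ Finset.range (ν * d), c k := Finset.prod_pos fun k _ => hcpos k
  have hlog := Real.log_le_log (mul_pos (by rw [norm_pow, norm_pow]; positivity) (pow_pos hprod _)) hmain
  have hR0 : 0 < R := by linarith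
  have hR'0 : 0 < R' := by linarith
  rw [norm_pow, norm_pow, Real.log_mul (by positivity) (by positivity), Real.log_pow, Real.log_pow, Real.log_pow,
    Real.log_mul (by positivity) (by positivity), Real.log_mul (by positivity) (by positivity),
    Real.log_pow, Real.log_pow, Real.log_mul (by positivity) (by positivity), Real.log_pow, Real.log_pow, Real.log_pow,
    Real.log_mul (by positivity) (by positivity), Real.log_mul (by positivity) (by positivity),
    Real.log_mul (by positivity) (by positivity), Real.log_pow, Real.log_pow, Real.log_pow, Real.log_pow, Real.log_exp,
    Real.log_exp, Real.log_prod (fun k _ => (hcpos k).ne')] at hlog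
  push_cast at hlog
  rw [← Nat.cast_sum, hP] at hlog
  have hfact : Real.log ((ν * d * L1).factorial) ≤ (ν * d * L1) * Real.log (ν * d * L1) := by
    have h1 : ((ν * d * L1).factorial : ℝ) ≤ (ν * d * L1 : ℝ) ^ (ν * d * L1) := by
      exact_mod_cast Nat.factorial_le_pow _
    have h2 := Real.log_le_log (by positivity) h1
    rw [Real.log_pow] at h2
    exact_mod_cast h2
  have hcsum : -(γ1 * ((ν * d) * (ν * d - 1) / 2) + (T0 + |γ1|) * Θ1 ^ 2 * L1 ^ 2) ≤
      ∑ k ∈ Finset.range (ν * d), Real.log (c k) := by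
    have h1 : ∀ k ∈ Finset.range (ν * d), -(γ1 * k) - (if k < Θ1 * L1 then (T0 + |γ1|) * (Θ1 * L1) else 0) ≤ Real.log (c k) := by
      intro k _
      simp only [hcdef]
      split_ifs with h
      · rw [Real.log_exp]
        have hk : (k : ℝ) ≤ Θ1 * L1 := by exact_mod_cast h.le
        have h3 : -γ1 * k ≤ |γ1| * (Θ1 * L1) := by
          have := neg_abs_le γ1
          have h4 : -γ1 * k ≤ |γ1| * k := by gcongr; exact neg_le_abs γ1
          exact h4.trans (by gcongr)
        push_cast
        nlinarith
      · rw [Real.log_exp]; linarith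
    refine le_trans ?_ (Finset.sum_le_sum h1)
    rw [Finset.sum_sub_distrib, Finset.sum_neg_distrib, ← Finset.mul_sum, ← Nat.cast_sum, hP]
    have h5 : ∑ k ∈ Finset.range (ν * d), (if k < Θ1 * L1 then (T0 + |γ1|) * (Θ1 * L1) else 0 : ℝ)
        ≤ (T0 + |γ1|) * Θ1 ^ 2 * L1 ^ 2 := by
      rw [← Finset.sum_filter, Finset.sum_const, nsmul_eq_mul]
      have h6 : ((Finset.range (ν * d)).filter (fun k => k < Θ1 * L1)).card ≤ Θ1 * L1 := by
        calc _ ≤ (Finset.range (Θ1 * L1)).card := Finset.card_le_card (by intro x hx; simp at hx ⊢; exact hx.2)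
          _ = _ := Finset.card_range _
      have h7 : (((Finset.range (ν * d)).filter (fun k => k < Θ1 * L1)).card : ℝ) ≤ Θ1 * L1 := by exact_mod_cast h6
      have h8 : 0 ≤ (T0 + |γ1|) * (Θ1 * L1) := by positivity
      nlinarith
    push_cast
    linarith
  have := mul_le_mul_of_nonneg_left hcsum (by positivity : (0:ℝ) ≤ L1)
  linarith

open Polynomial Filter Topology

lemma gp_lim (A B C2 M d : ℝ) (hd : 0 < d) (B' L : ℝ) (hM : 0 < M)
    (h : ∀ ν : ℕ, 0 < ν → A * (1 - 1 / ν) ≤ B * (1 - 1 / (ν * d)) + C2 + B' * (Real.log (ν ^ 2 * M) / (d * ν)) + 2 * L / ν) :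
    A ≤ B + C2 := by
  have t0 : Tendsto (fun ν : ℕ => 1 / (ν : ℝ)) atTop (𝓝 0) := tendsto_one_div_atTop_nhds_zero_nat
  have tl : Tendsto (fun ν : ℕ => Real.log (ν : ℝ) / ν) atTop (𝓝 0) := by
    have h1 : Tendsto (fun x : ℝ => Real.log x / x) atTop (𝓝 0) := by
      simpa using Real.tendsto_pow_log_div_mul_add_atTop 1 0 1 one_ne_zero
    exact h1.comp tendsto_natCast_atTop_atTop
  have t1 : Tendsto (fun ν : ℕ => A * (1 - 1 / (ν:ℝ))) atTop (𝓝 A) := by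
    simpa using (t0.const_sub 1).const_mul A
  have t2 : Tendsto (fun ν : ℕ => B * (1 - (1 / (ν:ℝ)) / d) + C2 + B' * ((2 * (Real.log ν / ν) + Real.log M * (1 / ν)) / d)
      + 2 * L * (1 / (ν:ℝ))) atTop (𝓝 (B + C2)) := by
    have := (((((t0.div_const d).const_sub 1).const_mul B).add_const C2).add
      ((((tl.const_mul 2).add (t0.const_mul (Real.log M))).div_const d).const_mul B')).add (t0.const_mul (2 * L))
    simpa using this
  refine le_of_tendsto_of_tendsto t1 t2 ?_
  filter_upwards [eventually_gt_atTop 0] with ν hν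
  refine (h ν hν).trans (le_of_eq ?_)
  have hν' : (ν : ℝ) ≠ 0 := by positivity
  rw [Real.log_mul (by positivity) hM.ne', Real.log_pow]
  push_cast
  field_simp

set_option maxHeartbeats 2000000 in
lemma gp_alg (K Θ ν d j j1 θ T0 γ1 Θ1 LR LR' γF γG Λ A Q C2 LL : ℝ) (hK1 : 1 < K) (hΘ1' : 1 < Θ) (hνr : 0 < ν) (hdr : 0 < d)
    (hj1pos : 1 ≤ j1) (hj0 : 0 ≤ j) (hjj1 : j ≤ j1) (hj1d : Θ * j1 ≤ d) (hθ : θ = j / (K * j1)) (hθ0 : 0 ≤ θ) (hθ1 : θ ≤ 1)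
    (hT0 : 0 ≤ T0) (hlR : 0 ≤ LR) (hlR' : 0 ≤ LR') (hQ : Q = 16 * (T0 + |γ1|) * Θ1 ^ 2 * K ^ 2 + (2 * K + 4) * LR')
    (hC2 : C2 = Q / Θ + 2 * LR / K) (hA : A = Λ / d ^ 2 + γF + γG)
    (hLL : LL = Real.log (ν ^ 2 * (d * (K * j1 + j))))
    (h : K * ν * j1 * (ν * (ν - 1) / 2 * Λ) -
      (K * ν * j1 + ν * j) * (γ1 * ((ν * d) * (ν * d - 1) / 2) + (T0 + |γ1|) * Θ1 ^ 2 * (K * ν * j1 + ν * j) ^ 2) ≤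
     (ν * d * (K * ν * j1 + ν * j)) * Real.log (ν * d * (K * ν * j1 + ν * j)) + (K * ν * j1 * (d * (ν * (ν - 1) / 2) * (-γF * d + -γG * d) +
       (ν * d) * (d * LR + K * ν * j1 * LR')) + (ν * j) * ((ν * d) * ((ν * d) * LR + (K * ν * j1 + ν * j) * LR')))) :
    A * (1 - 1 / ν) ≤ (1 + θ) * γ1 * (1 - 1 / (ν * d)) + C2 + 2 * (1 + θ) * (LL / (d * ν)) + 2 * LR / ν := by
  have hK0 : 0 < K := by linarith
  have hΘ0 : 0 < Θ := by linarith
  have hj1p : 0 < j1 := by linarith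
  have hH0 : 0 < K * ν * j1 := by positivity
  have hΛ : Λ = d ^ 2 * (A - γF - γG) := by rw [hA]; field_simp; ring
  rw [hΛ] at h
  obtain ⟨D, hD⟩ : ∃ D : ℝ, D = (K * ν * j1) * d ^ 2 * ν ^ 2 / 2 := ⟨_, rfl⟩
  have hD0 : 0 < D := by rw [hD]; positivity
  rw [← mul_le_mul_iff_right₀ hD0]
  have hjθ : (j:ℝ) = θ * (K * j1) := by rw [hθ]; field_simp
  have hL1 : (K * ν * j1 + ν * j : ℝ) = K * ν * j1 * (1 + θ) := by rw [hjθ]; ring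
  have e3 : (ν:ℝ) * d * (K * ν * j1 + ν * j) = ν ^ 2 * (d * (K * j1 + j)) := by ring
  rw [e3] at h
  rw [hL1] at h
  rw [← hLL] at h
  have b1 : K * ν * j1 * (1 + θ) * ((T0 + |γ1|) * Θ1 ^ 2 * (K * ν * j1 * (1 + θ)) ^ 2)
      ≤ D * (16 * (T0 + |γ1|) * Θ1 ^ 2 * K ^ 2 / Θ) := by
    have h1 : (1 + θ) ^ 3 ≤ 8 := by
      have : (1 + θ) ^ 3 ≤ 2 ^ 3 := by gcongr; linarith
      linarith
    have h2 : (j1:ℝ) ^ 2 ≤ d ^ 2 / Θ := by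
      rw [le_div_iff₀ hΘ0]
      calc j1 ^ 2 * Θ = j1 ^ 2 * (1 * Θ) := by ring
        _ ≤ j1 ^ 2 * (Θ * Θ) := by gcongr
        _ = (Θ * j1) ^ 2 := by ring
        _ ≤ d ^ 2 := by gcongr
    calc _ = (K * ν * j1) * ν ^ 2 * ((T0 + |γ1|) * Θ1 ^ 2 * K ^ 2) * ((1 + θ) ^ 3 * j1 ^ 2) := by ring
      _ ≤ (K * ν * j1) * ν ^ 2 * ((T0 + |γ1|) * Θ1 ^ 2 * K ^ 2) * (8 * (d ^ 2 / Θ)) := by gcongr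
      _ = _ := by rw [hD]; ring
  have b2 : K * ν * j1 * ((ν * d) * (d * LR + K * ν * j1 * LR'))
      ≤ D * (2 * LR / ν + 2 * K * LR' / Θ) := by
    have h2 : (j1:ℝ) ≤ d / Θ := by rw [le_div_iff₀ hΘ0]; linarith
    calc _ = (K * ν * j1) * (ν * d * (d * LR)) + (K * ν * j1) * (ν * d * (K * ν * LR')) * j1 := by ring
      _ ≤ (K * ν * j1) * (ν * d * (d * LR)) + (K * ν * j1) * (ν * d * (K * ν * LR')) * (d / Θ) := by gcongr
      _ = _ := by rw [hD]; field_simp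
  have b3 : ν * j * ((ν * d) * ((ν * d) * LR + K * ν * j1 * (1 + θ) * LR'))
      ≤ D * (2 * LR / K + 4 * LR' / Θ) := by
    have h2 : (j1:ℝ) ≤ d / Θ := by rw [le_div_iff₀ hΘ0]; linarith
    have h3 : (1 + θ) * j ≤ 2 * j1 := mul_le_mul (by linarith) hjj1 hj0 (by norm_num)
    calc _ = ν * (ν * d) * ((ν * d) * LR) * j + ν * (ν * d) * (K * ν * LR') * j1 * ((1 + θ) * j) := by ring
      _ ≤ ν * (ν * d) * ((ν * d) * LR) * j1 + ν * (ν * d) * (K * ν * LR') * (d / Θ) * (2 * j1) := by gcongr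
      _ = _ := by rw [hD]; field_simp; ring
  have b0 : D * (A * (1 - 1 / ν)) = K * ν * j1 * (ν * (ν - 1) / 2 * (d ^ 2 * A)) := by rw [hD]; field_simp
  have b4 : D * ((1 + θ) * γ1 * (1 - 1 / (ν * d))) = K * ν * j1 * (1 + θ) * (γ1 * ((ν * d) * (ν * d - 1) / 2)) := by
    rw [hD]; field_simp
  have b5 : D * (2 * (1 + θ) * (LL / (d * ν))) = ν ^ 2 * (d * (K * j1 + j)) * LL := by
    rw [hD, show ((K:ℝ) * j1 + j) = K * j1 * (1 + θ) by rw [hjθ]; ring]; field_simp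
  have b6 : C2 = 16 * (T0 + |γ1|) * Θ1 ^ 2 * K ^ 2 / Θ + 2 * K * LR' / Θ + (2 * LR / K + 4 * LR' / Θ) := by
    rw [hC2, hQ]; ring
  rw [mul_add, mul_add, mul_add, b0, b4, b5, b6]
  rw [mul_add] at b2
  rw [mul_add D, mul_add D (16 * _ * _ * _ / _)]
  linarith

lemma gp_thmA0 (R R' T0 γ1 ε : ℝ) (Θ1 : ℕ) (hR : 1 ≤ R) (hR' : 1 ≤ R') (hT0 : 0 ≤ T0) (hΘ1 : 1 ≤ Θ1) (hε : 0 < ε) :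
    ∃ Θ : ℕ, 1 ≤ Θ ∧ ∀ (E : Set (ℂ × ℂ)), (∀ ζ ∈ E, ‖ζ.1‖ ≤ R) → (∀ ζ ∈ E, ‖ζ.2‖ ≤ R') →
      gpT E T0 → gpL E γ1 Θ1 → ∀ (F G : ℂ[X][X]) (d j : ℕ) (γF γG : ℝ), Θ ≤ d → Θ * j ≤ d →
      F.natDegree ≤ d → G.natDegree ≤ d → (F.map (evalRingHom 0)).natDegree = d → gpWD F j → gpWD G j →
      (∀ ζ ∈ E, ‖gpEv F ζ.1 ζ.2‖ ≤ Real.exp (-γF * d)) → (∀ ζ ∈ E, ‖gpEv G ζ.1 ζ.2‖ ≤ Real.exp (-γG * d)) →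
      ∀ Res : ℂ, Res = (F.map (evalRingHom 0)).leadingCoeff ^ d *
      ((F.map (evalRingHom 0)).roots.map fun z => gpEv G z 0).prod → Res ≠ 0 →
      Real.log ‖Res‖ / d ^ 2 + γF + γG ≤ γ1 + ε := by
  have hlR : 0 ≤ Real.log R := Real.log_nonneg hR
  have hlR' : 0 ≤ Real.log R' := Real.log_nonneg hR'
  obtain ⟨K, hK⟩ := exists_nat_gt (max 1 (4 * (|γ1| + 2 * Real.log R) / ε))
  have hK1 : (1:ℝ) < K := (le_max_left _ _).trans_lt hK
  have hK2 : 4 * (|γ1| + 2 * Real.log R) / ε < K := (le_max_right _ _).trans_lt hK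
  have hK0 : (0:ℝ) < K := by linarith
  set Q := 16 * (T0 + |γ1|) * Θ1 ^ 2 * K ^ 2 + (2 * K + 4) * Real.log R' with hQ
  have hQ0 : 0 ≤ Q := by positivity
  obtain ⟨Θ, hΘ⟩ := exists_nat_gt (max 1 (4 * Q / ε))
  have hΘ1' : (1:ℝ) < Θ := (le_max_left _ _).trans_lt hΘ
  have hΘ2 : 4 * Q / ε < Θ := (le_max_right _ _).trans_lt hΘ
  have hΘ0 : (0:ℝ) < Θ := by linarith
  refine ⟨Θ, by exact_mod_cast hΘ1'.le, ?_⟩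
  intro E hEx hEy hT hL F G d j γF γG hd1 hd2 hF hG hf hFj hGj hBF hBG Res hRes hRes0
  have hd : 0 < d := lt_of_lt_of_le (by exact_mod_cast hΘ0) hd1
  have hdr : (0:ℝ) < d := Nat.cast_pos.mpr hd
  set j1 := max j 1 with hj1
  have hj1d : (Θ:ℝ) * j1 ≤ d := by
    rcases max_choice j 1 with h | h <;> rw [hj1, h]
    · exact_mod_cast hd2
    · simpa using (by exact_mod_cast hd1 : (Θ:ℝ) ≤ d)
  have hj1pos : (1:ℝ) ≤ j1 := by exact_mod_cast le_max_right j 1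
  have hjj1 : (j:ℝ) ≤ j1 := by exact_mod_cast le_max_left j 1
  have hj0 : (0:ℝ) ≤ j := Nat.cast_nonneg j
  set A := Real.log ‖Res‖ / d ^ 2 + γF + γG with hA
  set θ : ℝ := j / (K * j1) with hθ
  have hj1p : (0:ℝ) < j1 := by linarith
  have hKj : (0:ℝ) < K * j1 := by positivity
  have hθ0 : 0 ≤ θ := by positivity
  have hθK : θ ≤ 1 / K := by
    rw [hθ, div_le_div_iff₀ hKj hK0, one_mul, mul_comm]; gcongr
  have hθ1 : θ ≤ 1 := hθK.trans (by rw [div_le_one hK0]; exact hK1.le)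
  set C2 : ℝ := Q / Θ + 2 * Real.log R / K with hC2
  have hjd : (j1:ℝ) / d ≤ 1 / Θ := by rw [div_le_div_iff₀ hdr hΘ0]; linarith
  have hΘinv : (1:ℝ) / Θ ≤ 1 := by rw [div_le_one hΘ0]; exact hΘ1'.le
  have hmain : A ≤ (1 + θ) * γ1 + C2 := by
    refine gp_lim A _ C2 (d * (K * j1 + j)) d hdr (2 * (1 + θ)) (Real.log R) (by positivity) ?_
    intro ν hν
    have hνr : (0:ℝ) < ν := Nat.cast_pos.mpr hν
    have hH0 : 0 < K * ν * j1 := by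
      have : 0 < K := by exact_mod_cast hK0
      positivity
    have h := gp_thmA_log R R' T0 γ1 Θ1 hR hR' hT0 hΘ1 E hEx hEy hT hL F G d ν (K * ν * j1) (K * ν * j1 + ν * j) j hd γF γG
      hF hG hf hFj hGj rfl (by omega) hBF hBG hν Res hRes hRes0
    push_cast at h
    exact gp_alg K Θ ν d j j1 θ T0 γ1 Θ1 (Real.log R) (Real.log R') γF γG _ A Q C2 _ hK1 hΘ1' hνr hdr hj1pos hj0 hjj1 hj1d hθ hθ0 hθ1 hT0
      hlR hlR' hQ hC2 hA rfl h
  have f1 : θ * γ1 ≤ |γ1| / K := by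
    calc θ * γ1 ≤ θ * |γ1| := by gcongr; exact le_abs_self _
      _ ≤ 1 / K * |γ1| := by gcongr
      _ = _ := by ring
  have f2 : |γ1| / K + 2 * Real.log R / K ≤ ε / 4 := by
    rw [← add_div, div_le_iff₀ hK0]
    rw [div_lt_iff₀ hε] at hK2; linarith
  have f3 : Q / Θ ≤ ε / 4 := by
    rw [div_le_iff₀ hΘ0]
    rw [div_lt_iff₀ hε] at hΘ2; linarith
  rw [hC2] at hmain
  linarith

open Polynomial Filter Topology

noncomputable def gpSh (c : ℂ) (F : ℂ[X][X]) : ℂ[X][X] := F.map (taylorAlgHom c : ℂ[X] →ₐ[ℂ] ℂ[X]).toRingHom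

lemma gpSh_inj (c : ℂ) : Function.Injective (taylorAlgHom c : ℂ[X] →ₐ[ℂ] ℂ[X]).toRingHom := by
  intro p q h
  exact taylor_injective c (by simpa using h)

lemma gpSh_natDegree (c : ℂ) (F : ℂ[X][X]) : (gpSh c F).natDegree = F.natDegree :=
  natDegree_map_eq_of_injective (gpSh_inj c) F

lemma gpSh_WD (c : ℂ) (F : ℂ[X][X]) (j : ℕ) (h : gpWD F j) : gpWD (gpSh c F) j := by
  intro k
  simpa [gpSh, natDegree_taylor] using h k

lemma gpSh_monic (c : ℂ) (F : ℂ[X][X]) (h : F.leadingCoeff.Monic) : (gpSh c F).leadingCoeff.Monic := by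
  rw [gpSh, leadingCoeff_map_of_injective (gpSh_inj c)]
  simpa [taylor_apply] using h.comp_X_add_C c

lemma gpSh_map (c ω : ℂ) (F : ℂ[X][X]) : (gpSh c F).map (evalRingHom ω) = F.map (evalRingHom (ω + c)) := by
  rw [gpSh, Polynomial.map_map]
  congr 1
  ext x <;> simp [taylor_apply]

lemma gpEv_sh (c : ℂ) (F : ℂ[X][X]) (x w : ℂ) : gpEv (gpSh c F) x w = gpEv F x (w + c) := by
  rw [gpEv, gpSh_map, gpEv]

lemma gp_thmA (R R' T0 γ1 ε ρ0 : ℝ) (Θ1 : ℕ) (hR : 1 ≤ R) (hR' : 1 ≤ R') (hT0 : 0 ≤ T0) (hΘ1 : 1 ≤ Θ1) (hε : 0 < ε) (hρ0 : 0 ≤ ρ0) :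
    ∃ Θ : ℕ, 1 ≤ Θ ∧ ∀ (E : Set (ℂ × ℂ)), (∀ ζ ∈ E, ‖ζ.1‖ ≤ R) → (∀ ζ ∈ E, ‖ζ.2‖ ≤ R') →
      gpT E T0 → gpL E γ1 Θ1 → ∀ (F G : ℂ[X][X]) (d j : ℕ) (γF γG : ℝ) (ω : ℂ), ‖ω‖ ≤ ρ0 → Θ ≤ d → Θ * j ≤ d →
      F.natDegree ≤ d → G.natDegree ≤ d → (F.map (evalRingHom ω)).natDegree = d → gpWD F j → gpWD G j →
      (∀ ζ ∈ E, ‖gpEv F ζ.1 ζ.2‖ ≤ Real.exp (-γF * d)) → (∀ ζ ∈ E, ‖gpEv G ζ.1 ζ.2‖ ≤ Real.exp (-γG * d)) →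
      ∀ Res : ℂ, Res = (F.map (evalRingHom ω)).leadingCoeff ^ d *
      ((F.map (evalRingHom ω)).roots.map fun z => gpEv G z ω).prod → Res ≠ 0 →
      Real.log ‖Res‖ / d ^ 2 + γF + γG ≤ γ1 + ε := by
  obtain ⟨Θ, hΘ, h⟩ := gp_thmA0 R (R' + ρ0) T0 γ1 ε Θ1 hR (by linarith) hT0 hΘ1 hε
  refine ⟨Θ, hΘ, ?_⟩
  intro E hEx hEy hT hL F G d j γF γG ω hω hd hdj hF hG hf hFj hGj hBF hBG Res hRes hRes0
  refine h ((fun ζ : ℂ × ℂ => (ζ.1, ζ.2 - ω)) '' E) ?_ ?_ ?_ ?_ (gpSh ω F) (gpSh ω G) d j γF γG hd hdj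
    (by rwa [gpSh_natDegree]) (by rwa [gpSh_natDegree]) (by rwa [gpSh_map, zero_add]) (gpSh_WD _ _ _ hFj) (gpSh_WD _ _ _ hGj) ?_ ?_ Res
    (by simpa [gpSh_map, gpEv_sh] using hRes) hRes0
  · rintro _ ⟨ζ, hζ, rfl⟩; exact hEx ζ hζ
  · rintro _ ⟨ζ, hζ, rfl⟩
    exact (norm_sub_le _ _).trans (add_le_add (hEy ζ hζ) hω)
  · intro D F hD hF h1 h2
    obtain ⟨ζ, hζ, h3⟩ := hT D (gpSh (-ω) F) hD (gpSh_monic _ _ hF) (by rwa [gpSh_natDegree]) (gpSh_WD _ _ _ h2)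
    exact ⟨_, ⟨ζ, hζ, rfl⟩, by rwa [gpEv_sh, ← sub_eq_add_neg] at h3⟩
  · intro j F hF h1 h2 h3
    obtain ⟨ζ, hζ, h3⟩ := hL j (gpSh (-ω) F) (gpSh_monic _ _ hF) (by rwa [gpSh_natDegree]) (gpSh_WD _ _ _ h2) (by rwa [gpSh_natDegree])
    exact ⟨_, ⟨ζ, hζ, rfl⟩, by rwa [gpEv_sh, ← sub_eq_add_neg, gpSh_natDegree] at h3⟩
  · rintro _ ⟨ζ, hζ, rfl⟩
    simpa [gpEv_sh] using hBF ζ hζ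
  · rintro _ ⟨ζ, hζ, rfl⟩
    simpa [gpEv_sh] using hBG ζ hζ

lemma gp_norm_prod {α : Type*} (s : Multiset α) (g : α → ℂ) : ‖(s.map g).prod‖ = (s.map fun a => ‖g a‖).prod := by
  induction s using Multiset.induction with
  | empty => simp
  | cons a s ih => simp [ih]

lemma gp_lemU (s : Multiset ℂ) (c : ℝ) (hc : 0 ≤ c) :
    ∃ u : ℂ, ‖u‖ = 1 ∧ (s.map fun a => max ‖a‖ c).prod ≤ ‖(s.map fun a => a + u * c).prod‖ := by
  set g : ℂ → ℂ → ℂ := fun u a => if c ≤ ‖a‖ then a + u * c else c + (starRingEnd ℂ) a * u with hg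
  set Q : ℂ → ℂ := fun u => (s.map (g u)).prod with hQ
  have hdiff : Differentiable ℂ Q := by
    rw [hQ]
    induction s using Multiset.induction with
    | empty => simp
    | cons a s ih =>
      simp only [Multiset.map_cons, Multiset.prod_cons]
      refine Differentiable.mul ?_ (ih rfl)
      simp only [hg]
      split_ifs <;> fun_prop
  have h0 : ‖Q 0‖ = (s.map fun a => max ‖a‖ c).prod := by
    rw [hQ]
    simp only [gp_norm_prod]
    congr 1
    refine Multiset.map_congr rfl fun a _ => ?_
    simp only [hg]
    split_ifs with h
    · simp [h]
    · simp [(not_le.mp h).le, abs_of_nonneg hc]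
  have h1 : ∀ u : ℂ, ‖u‖ = 1 → ‖Q u‖ = ‖(s.map fun a => a + u * c).prod‖ := by
    intro u hu
    rw [hQ]
    simp only [gp_norm_prod]
    congr 1
    refine Multiset.map_congr rfl fun a _ => ?_
    simp only [hg]
    split_ifs with h
    · rfl
    · have hu' : u * (starRingEnd ℂ) u = 1 := by rw [Complex.mul_conj, Complex.normSq_eq_norm_sq, hu]; simp
      have : (c : ℂ) + (starRingEnd ℂ) a * u = u * (starRingEnd ℂ) (a + u * c) := by
        simp only [map_add, map_mul, Complex.conj_ofReal]
        linear_combination (-(c:ℂ)) * hu'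
      rw [this, norm_mul, hu, one_mul, RCLike.norm_conj]
  obtain ⟨u, hu, hmax⟩ := Complex.exists_mem_frontier_isMaxOn_norm (Metric.isBounded_ball (x := (0:ℂ)) (r := 1))
    ⟨0, by simp⟩ hdiff.diffContOnCl
  rw [frontier_ball _ one_ne_zero] at hu
  have hu1 : ‖u‖ = 1 := by simpa using hu
  refine ⟨u, hu1, ?_⟩
  rw [← h0, ← h1 u hu1]
  exact hmax (subset_closure (by simp))

open Polynomial Filter Topology

lemma gp_log_prod {α : Type*} (s : Multiset α) (g : α → ℝ) (hg : ∀ a ∈ s, g a ≠ 0) :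
    Real.log (s.map g).prod = (s.map fun a => Real.log (g a)).sum := by
  induction s using Multiset.induction with
  | empty => simp
  | cons a s ih =>
    simp only [Multiset.map_cons, Multiset.prod_cons, Multiset.sum_cons]
    rw [Real.log_mul (hg a (by simp)), ih fun b hb => hg b (by simp [hb])]
    refine Multiset.prod_ne_zero ?_
    simp only [Multiset.mem_map, not_exists, not_and]
    exact fun b hb => hg b (by simp [hb])

lemma gp_thmB (R R' T0 γ1 ε ρ0 : ℝ) (Θ1 : ℕ) (hR : 1 ≤ R) (hR' : 1 ≤ R') (hT0 : 0 ≤ T0) (hΘ1 : 1 ≤ Θ1) (hε : 0 < ε) (hρ0 : 0 ≤ ρ0) :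
    ∃ Θ : ℕ, 1 ≤ Θ ∧ ∀ (E : Set (ℂ × ℂ)), (∀ ζ ∈ E, ‖ζ.1‖ ≤ R) → (∀ ζ ∈ E, ‖ζ.2‖ ≤ R') →
      gpT E T0 → gpL E γ1 Θ1 → ∀ (F P : ℂ[X][X]) (n m j j' : ℕ) (γ0 γ : ℝ) (ω : ℂ), ‖ω‖ ≤ ρ0 → Θ ≤ n → Θ ≤ m → Θ * j ≤ n → Θ * j' ≤ m →
      F.natDegree = n → P.natDegree ≤ m → 1 ≤ ‖F.leadingCoeff.eval ω‖ → gpWD F j → gpWD P j' →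
      (∀ ζ ∈ E, ‖gpEv F ζ.1 ζ.2‖ ≤ Real.exp (-γ0 * n)) → (∀ ζ ∈ E, ‖gpEv P ζ.1 ζ.2‖ ≤ Real.exp (-γ * m)) →
      m * Real.log ‖F.leadingCoeff.eval ω‖ + ((F.map (evalRingHom ω)).roots.map fun z => Real.log (max ‖gpEv P z ω‖ (Real.exp (-γ * m)))).sum
      ≤ n * m * (γ1 + ε - γ0 - γ) + n * Real.log 2 := by
  obtain ⟨Θ, hΘ, h⟩ := gp_thmA R R' T0 γ1 ε ρ0 Θ1 hR hR' hT0 hΘ1 hε hρ0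
  refine ⟨Θ, hΘ, ?_⟩
  intro E hEx hEy hT hL F P n m j j' γ0 γ ω hω hn hm hnj hmj hF hP hb hFj hPj hBF hBP
  have hn0 : 0 < n := by omega
  have hm0 : 0 < m := by omega
  have hnr : (0:ℝ) < n := by exact_mod_cast hn0
  have hmr : (0:ℝ) < m := by exact_mod_cast hm0
  set f := F.map (evalRingHom ω) with hf
  have hb0 : evalRingHom ω F.leadingCoeff ≠ 0 := by
    intro h0
    rw [coe_evalRingHom] at h0
    rw [h0, norm_zero] at hb; linarith
  have hfd : f.natDegree = n := by rw [hf, natDegree_map_of_leadingCoeff_ne_zero _ hb0, hF]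
  have hfl : f.leadingCoeff = F.leadingCoeff.eval ω := by
    rw [hf, leadingCoeff_map_of_leadingCoeff_ne_zero _ hb0, coe_evalRingHom]
  set c := Real.exp (-γ * m) with hc
  have hc0 : 0 < c := Real.exp_pos _
  obtain ⟨u, hu, hU⟩ := gp_lemU (f.roots.map fun z => gpEv P z ω) c hc0.le
  rw [Multiset.map_map, Multiset.map_map] at hU
  simp only [Function.comp_def] at hU
  set G0 : ℂ[X][X] := P + C (C (u * c)) with hG0
  have hG0e : ∀ x w, gpEv G0 x w = gpEv P x w + u * c := by intro x w; rw [hG0, gpEv_add, gpEv_C]; simp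
  have hfm : (F ^ m).map (evalRingHom ω) = f ^ m := by rw [Polynomial.map_pow]
  set Z := (f.roots.map fun z => gpEv P z ω + u * c).prod with hZ
  have hZpos : 0 < (f.roots.map fun z => max ‖gpEv P z ω‖ c).prod := by
    refine Multiset.prod_pos ?_
    simp only [Multiset.mem_map]
    rintro _ ⟨z, _, rfl⟩
    exact lt_max_of_lt_right hc0
  have hZ0 : Z ≠ 0 := by
    intro h0
    rw [h0, norm_zero] at hU; linarith
  have hRes : ((f.leadingCoeff ^ m * Z) ^ (n * m)) = ((F ^ m).map (evalRingHom ω)).leadingCoeff ^ (n * m) *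
      (((F ^ m).map (evalRingHom ω)).roots.map fun z => gpEv (G0 ^ n) z ω).prod := by
    rw [hfm, leadingCoeff_pow, roots_pow, Multiset.map_nsmul, Multiset.prod_nsmul, mul_pow]
    simp only [gpEv_pow, hG0e]
    rw [Multiset.prod_map_pow, ← hZ, ← pow_mul Z]
  have hj2 : Θ * max (m * j) (n * j') ≤ n * m := by
    rcases max_choice (m * j) (n * j') with h | h <;> rw [h]
    · calc Θ * (m * j) = (Θ * j) * m := by ring
        _ ≤ n * m := Nat.mul_le_mul_right _ hnj
    · calc Θ * (n * j') = n * (Θ * j') := by ring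
        _ ≤ n * m := Nat.mul_le_mul_left _ hmj
  have hG0d : G0.natDegree ≤ m := (natDegree_add_le _ _).trans (max_le hP (by rw [natDegree_C]; exact Nat.zero_le _))
  have hR0 : (f.leadingCoeff ^ m * Z) ^ (n * m) ≠ 0 := by
    have : f.leadingCoeff ≠ 0 := by rw [hfl]; exact hb0
    positivity
  have key := h E hEx hEy hT hL (F ^ m) (G0 ^ n) (n * m) (max (m * j) (n * j')) γ0 (γ - Real.log 2 / m) ω hω
    (hn.trans (Nat.le_mul_of_pos_right _ hm0)) hj2 ?_ ?_ ?_ ?_ ?_ ?_ ?_ _ hRes hR0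
  · have hA : Real.log ‖(f.leadingCoeff ^ m * Z) ^ (n * m)‖ = n * m * (m * Real.log ‖F.leadingCoeff.eval ω‖ + Real.log ‖Z‖) := by
      rw [norm_pow, norm_mul, norm_pow, Real.log_pow, Real.log_mul (by rw [hfl]; positivity) (by positivity), Real.log_pow, hfl]
      push_cast; ring
    have hB : (f.roots.map fun z => Real.log (max ‖gpEv P z ω‖ c)).sum ≤ Real.log ‖Z‖ := by
      rw [← gp_log_prod _ _ (fun a _ => (lt_max_of_lt_right hc0).ne')]
      exact Real.log_le_log hZpos hU
    rw [hA] at key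
    push_cast at key
    have : (n * m * (m * Real.log ‖F.leadingCoeff.eval ω‖ + Real.log ‖Z‖)) / ((n:ℝ) * m) ^ 2 = (m * Real.log ‖F.leadingCoeff.eval ω‖ + Real.log ‖Z‖) / (n * m) := by
      field_simp
    rw [this] at key
    have k2 : (m * Real.log ‖F.leadingCoeff.eval ω‖ + Real.log ‖Z‖) / (n * m) ≤ γ1 + ε - γ0 - γ + Real.log 2 / m := by linarith
    rw [div_le_iff₀ (by positivity)] at k2
    have k3 : (γ1 + ε - γ0 - γ + Real.log 2 / m) * (n * m) = n * m * (γ1 + ε - γ0 - γ) + n * Real.log 2 := by field_simp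
    linarith
  · rw [mul_comm n m]; exact natDegree_pow_le.trans (Nat.mul_le_mul_left _ hF.le)
  · exact natDegree_pow_le.trans (Nat.mul_le_mul_left _ hG0d)
  · rw [hfm, natDegree_pow, hfd, mul_comm]
  · exact (hFj.pow m).mono (le_max_left _ _)
  · exact (((hPj.add (gpWD_C (by rw [natDegree_C]; exact Nat.zero_le _)))).pow n).mono (le_max_right _ _)
  · intro ζ hζ
    rw [gpEv_pow, norm_pow]
    calc _ ≤ (Real.exp (-γ0 * n)) ^ m := by gcongr; exact hBF ζ hζ
      _ = _ := by rw [← Real.exp_nat_mul]; push_cast; ring_nf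
  · intro ζ hζ
    rw [gpEv_pow, norm_pow, hG0e]
    have : ‖gpEv P ζ.1 ζ.2 + u * c‖ ≤ 2 * c := by
      refine (norm_add_le _ _).trans ?_
      rw [norm_mul, hu, one_mul, Complex.norm_real, Real.norm_of_nonneg hc0.le]
      linarith [hBP ζ hζ]
    calc _ ≤ (2 * c) ^ n := by gcongr
      _ = (Real.exp (Real.log 2 + -γ * m)) ^ n := by rw [Real.exp_add, Real.exp_log (by norm_num)]
      _ = _ := by
        rw [← Real.exp_nat_mul]; congr 1; push_cast; field_simp; ring

open Polynomial Filter Topology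

def gpK (E : Set (ℂ × ℂ)) (γ : ℝ) : Prop :=
  ∀ Θ : ℕ, ∃ (F : ℂ[X][X]) (j : ℕ), F.leadingCoeff.Monic ∧ Θ ≤ F.natDegree ∧ gpWD F j ∧ Θ * j ≤ F.natDegree ∧
    ∀ ζ ∈ E, ‖gpEv F ζ.1 ζ.2‖ ≤ Real.exp (-γ * F.natDegree)

lemma gp_kappa (E : Set (ℂ × ℂ)) (R T0 : ℝ) (hR : 1 ≤ R) (hEx : ∀ ζ ∈ E, ‖ζ.1‖ ≤ R) (hT : gpT E T0) :
    ∃ κ : ℝ, κ ≤ T0 ∧ ∀ ε > 0, gpK E (κ - ε) ∧ ∃ Θ : ℕ, 1 ≤ Θ ∧ gpL E (κ + ε) Θ := by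
  have hb : ∀ γ ∈ {γ | gpK E γ}, γ ≤ T0 := by
    intro γ hγ
    by_contra! hlt
    obtain ⟨F, j, h1, h2, h3, h4, h5⟩ := hγ 1
    obtain ⟨ζ, hζ, h6⟩ := hT F.natDegree F h2 h1 le_rfl (h3.mono (by omega))
    have h7 := h6.trans_le (h5 ζ hζ)
    rw [Real.exp_lt_exp] at h7
    have : (0:ℝ) ≤ F.natDegree := Nat.cast_nonneg _
    nlinarith
  have hne : {γ | gpK E γ}.Nonempty := by
    refine ⟨-Real.log R, fun Θ => ⟨X ^ Θ, 0, by simp, by simp, by simpa using gpWD_X.pow Θ, by simp, ?_⟩⟩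
    intro ζ hζ
    rw [gpEv_pow, gpEv_X, norm_pow, natDegree_X_pow, neg_neg, mul_comm, Real.exp_nat_mul, Real.exp_log (by linarith)]
    have := hEx ζ hζ
    gcongr
  refine ⟨sSup {γ | gpK E γ}, csSup_le hne hb, fun ε hε => ⟨?_, ?_⟩⟩
  · obtain ⟨γ, hγ, hlt⟩ := exists_lt_of_lt_csSup hne (show sSup {γ | gpK E γ} - ε < sSup {γ | gpK E γ} by linarith)
    intro Θ
    obtain ⟨F, j, h1, h2, h3, h4, h5⟩ := hγ Θ
    refine ⟨F, j, h1, h2, h3, h4, fun ζ hζ => (h5 ζ hζ).trans ?_⟩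
    gcongr
  · have : ¬ gpK E (sSup {γ | gpK E γ} + ε) := fun h => by
      have := le_csSup ⟨T0, hb⟩ h
      linarith
    rw [gpK] at this
    push Not at this
    obtain ⟨Θ, h⟩ := this
    refine ⟨max Θ 1, le_max_right _ _, ?_⟩
    intro j F h1 h2 h3 h4
    exact h F j h1 ((le_max_left _ _).trans h2) h3 ((Nat.mul_le_mul_right _ (le_max_left _ _)).trans h4)

lemma gp_one_le_prod {α : Type*} (s : Multiset α) (g : α → ℝ) (h : ∀ a, 1 ≤ g a) : 1 ≤ (s.map g).prod := by
  induction s using Multiset.induction with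
  | empty => simp
  | cons a s ih =>
    simp only [Multiset.map_cons, Multiset.prod_cons]
    exact one_le_mul_of_one_le_of_one_le (h a) ih

lemma gp_prod_cmp {α : Type*} [DecidableEq α] (S : Finset α) (a b : α → ℝ) (ha : ∀ x, 0 < a x) (hb : ∀ x, 0 ≤ b x) (hba : ∀ x, b x ≤ 2 * a x)
    (h : ∏ x ∈ S, a x ≤ ∏ x ∈ S, b x) (x : α) (hx : x ∈ S) : a x ≤ b x * 2 ^ S.card := by
  rw [← Finset.mul_prod_erase S a hx, ← Finset.mul_prod_erase S b hx] at h
  have h1 : ∏ y ∈ S.erase x, b y ≤ 2 ^ S.card * ∏ y ∈ S.erase x, a y := by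
    calc ∏ y ∈ S.erase x, b y ≤ ∏ y ∈ S.erase x, 2 * a y := Finset.prod_le_prod (fun y _ => hb y) (fun y _ => hba y)
      _ = 2 ^ (S.erase x).card * ∏ y ∈ S.erase x, a y := by rw [Finset.prod_mul_distrib, Finset.prod_const]
      _ ≤ _ := by
        gcongr
        · exact Finset.prod_nonneg fun y _ => (ha y).le
        · norm_num
        · exact Finset.erase_subset _ _
  have h2 : 0 < ∏ y ∈ S.erase x, a y := Finset.prod_pos fun y _ => ha y
  have h3 : a x * ∏ y ∈ S.erase x, a y ≤ (b x * 2 ^ S.card) * ∏ y ∈ S.erase x, a y := by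
    refine h.trans ((mul_le_mul_of_nonneg_left h1 (hb x)).trans (le_of_eq (by ring)))
  exact le_of_mul_le_mul_right h3 h2

lemma gp_C0 (R R' T0 ρ0 : ℝ) (hR : 1 ≤ R) (hR' : 1 ≤ R') (hT0 : 0 ≤ T0) (hρ0 : 1 ≤ ρ0) (E : Set (ℂ × ℂ))
    (hEx : ∀ ζ ∈ E, ‖ζ.1‖ ≤ R) (hEy : ∀ ζ ∈ E, ‖ζ.2‖ ≤ R') (hT : gpT E T0) :
    ∃ Θ : ℕ → ℕ, (∀ k, 1 ≤ Θ k) ∧ ∀ (i : ℕ) (S : Finset ℂ), ∃ (ω : ℂ) (s : Multiset ℂ), ‖ω‖ = ρ0 ∧ s ≠ 0 ∧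
      (∀ x ∈ S, Real.exp (-(T0 + 4) * s.card) ≤ (s.map fun z => ‖x - z‖).prod) ∧
      ∀ k ≤ i, ∀ (P : ℂ[X][X]) (m j : ℕ) (γ : ℝ), Θ k ≤ m → Θ k * j ≤ m → P.natDegree ≤ m → gpWD P j →
        (∀ ζ ∈ E, ‖gpEv P ζ.1 ζ.2‖ ≤ Real.exp (-γ * m)) →
        (s.map fun z => Real.log (max ‖gpEv P z ω‖ (Real.exp (-γ * m)))).sum ≤ s.card * (m * (1 / (k + 1) - γ) + Real.log 2) := by
  obtain ⟨κ, hκ, hκ2⟩ := gp_kappa E R T0 hR hEx hT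
  have hpos : ∀ k : ℕ, (0:ℝ) < 1 / (4 * (k + 1)) := fun k => by positivity
  choose Θ1 hΘ1 hL using fun k : ℕ => (hκ2 _ (hpos k)).2
  choose Θ hΘ hB using fun k : ℕ => gp_thmB R R' T0 _ _ ρ0 (Θ1 k) hR hR' hT0 (hΘ1 k) (hpos k) (by linarith)
  refine ⟨Θ, hΘ, fun i S => ?_⟩
  set Θm := (Finset.range (i + 1)).sup Θ with hΘm
  have hΘle : ∀ k ≤ i, Θ k ≤ Θm := fun k hk => Finset.le_sup (f := Θ) (by simp; omega)
  obtain ⟨F, j, h1, h2, h3, h4, h5⟩ := (hκ2 _ (hpos i)).1 (Θm + S.card + 4 * (i + 1))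
  set n := F.natDegree with hn
  have hnr : (0:ℝ) < n := by exact_mod_cast (by omega : 0 < n)
  obtain ⟨u, hu, hU⟩ := gp_lemU (F.leadingCoeff.roots.map fun z => -z) ρ0 (by linarith)
  set ω : ℂ := u * ρ0 with hω
  have hωn : ‖ω‖ = ρ0 := by rw [hω, norm_mul, hu, one_mul, Complex.norm_real, Real.norm_of_nonneg (by linarith)]
  have hbω : 1 ≤ ‖F.leadingCoeff.eval ω‖ := by
    rw [(IsAlgClosed.splits F.leadingCoeff).eval_eq_prod_roots_of_monic h1]
    rw [Multiset.map_map, Multiset.map_map] at hU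
    refine le_trans ?_ (hU.trans (le_of_eq ?_))
    · exact gp_one_le_prod _ _ fun z => le_max_of_le_right hρ0
    · congr 3
      ext z; simp; ring
  set γ0 := κ - 1 / (4 * (i + 1)) with hγ0
  set τ := Real.exp (-γ0 * n) with hτ
  have hτ0 : 0 < τ := Real.exp_pos _
  obtain ⟨v, hv, hV⟩ := gp_lemU (S.val.map fun x => gpEv F x ω) τ hτ0.le
  set F' : ℂ[X][X] := F + C (C (v * τ)) with hF'
  have hFe : ∀ x w, gpEv F' x w = gpEv F x w + v * τ := by intro x w; rw [hF', gpEv_add, gpEv_C]; simp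
  have hdeg : (C (C (v * (τ:ℂ)))).degree < F.degree := by
    refine lt_of_le_of_lt degree_C_le ?_
    rw [← natDegree_pos_iff_degree_pos]; omega
  have hlc : F'.leadingCoeff = F.leadingCoeff := leadingCoeff_add_of_degree_lt' hdeg
  have hnd : F'.natDegree = n := natDegree_add_eq_left_of_degree_lt hdeg
  have hFj : gpWD F' j := h3.add (gpWD_C (by rw [natDegree_C]; exact Nat.zero_le _))
  have hFb : ∀ ζ ∈ E, ‖gpEv F' ζ.1 ζ.2‖ ≤ Real.exp (-(γ0 - Real.log 2 / n) * n) := by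
    intro ζ hζ
    rw [hFe]
    have : ‖gpEv F ζ.1 ζ.2 + v * τ‖ ≤ 2 * τ := by
      refine (norm_add_le _ _).trans ?_
      rw [norm_mul, hv, one_mul, Complex.norm_real, Real.norm_of_nonneg hτ0.le]
      linarith [h5 ζ hζ]
    refine this.trans (le_of_eq ?_)
    rw [show -(γ0 - Real.log 2 / n) * n = Real.log 2 + -γ0 * n by field_simp; ring, Real.exp_add, Real.exp_log (by norm_num)]
  set fp := F'.map (evalRingHom ω) with hfp
  have hb0 : evalRingHom ω F'.leadingCoeff ≠ 0 := by
    intro h0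
    rw [hlc, coe_evalRingHom] at h0
    rw [h0, norm_zero] at hbω; linarith
  have hfd : fp.natDegree = n := by rw [hfp, natDegree_map_of_leadingCoeff_ne_zero _ hb0, hnd]
  have hfl : fp.leadingCoeff = F.leadingCoeff.eval ω := by
    rw [hfp, leadingCoeff_map_of_leadingCoeff_ne_zero _ hb0, coe_evalRingHom, hlc]
  have hcard : fp.roots.card = n := by rw [← (IsAlgClosed.splits fp).natDegree_eq_card_roots, hfd]
  have key : ∀ k ≤ i, ∀ (P : ℂ[X][X]) (m j : ℕ) (γ : ℝ), Θ k ≤ m → Θ k * j ≤ m → P.natDegree ≤ m → gpWD P j →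
        (∀ ζ ∈ E, ‖gpEv P ζ.1 ζ.2‖ ≤ Real.exp (-γ * m)) →
        m * Real.log ‖F.leadingCoeff.eval ω‖ + (fp.roots.map fun z => Real.log (max ‖gpEv P z ω‖ (Real.exp (-γ * m)))).sum ≤ n * (m * (1 / (k + 1) - γ) + Real.log 2) := by
    intro k hk P m j' γ hm hmj hPm hPj hPE
    have hΘk := hΘle k hk
    have := hB k E hEx hEy hT (hL k) F' P n m j j' (γ0 - Real.log 2 / n) γ ω hωn.le (by omega) hm
      ((Nat.mul_le_mul_right _ (by omega)).trans h4) hmj hnd hPm (by rwa [hlc]) hFj hPj hFb hPE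
    rw [hlc] at this
    refine this.trans ?_
    have e1 : (1:ℝ) / (4 * (i + 1)) ≤ 1 / (4 * (k + 1)) := by gcongr
    have e2 : Real.log 2 / n ≤ 1 / (4 * (i + 1)) := by
      gcongr
      · linarith [Real.log_two_lt_d9]
      · exact_mod_cast (by omega : 4 * (i + 1) ≤ n)
    have e3 : (1:ℝ) / (k + 1) = 4 * (1 / (4 * (k + 1))) := by field_simp
    have e4 : κ + 1 / (4 * (k + 1)) + 1 / (4 * (k + 1)) - (γ0 - Real.log 2 / n) - γ ≤ 1 / (k + 1) - γ := by
      rw [hγ0, e3]; linarith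
    calc _ ≤ n * m * (1 / (k + 1) - γ) + n * Real.log 2 := by gcongr
      _ = _ := by ring
  refine ⟨ω, fp.roots, hωn, ?_, ?_, ?_⟩
  · intro h0; rw [h0] at hcard; simp at hcard; omega
  · intro x hx
    have hbl := key 0 (Nat.zero_le _) 1 (Θ 0) 0 0 le_rfl (by simp) (by simp) (gpWD_C (p := 1) (by simp)) (by simp [gpEv])
    have hone : ∀ z, gpEv 1 z ω = 1 := by simp [gpEv]
    simp only [hone, neg_zero, zero_mul, Real.exp_zero, norm_one, max_self, Real.log_one, Multiset.map_const', Multiset.sum_replicate, smul_zero, add_zero] at hbl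
    have hl2 : Real.log 2 ≤ 1 := by linarith [Real.log_two_lt_d9]
    have hl0 : 0 ≤ Real.log 2 := Real.log_nonneg (by norm_num)
    have hb2 : Real.log ‖F.leadingCoeff.eval ω‖ ≤ 2 * n := by
      have h1 : (1:ℝ) ≤ Θ 0 := by exact_mod_cast hΘ 0
      have h2 : (Θ 0 : ℝ) * Real.log ‖F.leadingCoeff.eval ω‖ ≤ Θ 0 * (2 * n) := by
        refine hbl.trans ?_
        rw [Nat.cast_zero, zero_add, div_one, sub_zero, mul_one]
        calc (n:ℝ) * (Θ 0 + Real.log 2) ≤ n * (Θ 0 + Θ 0) := by gcongr; linarith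
          _ = _ := by ring
      exact le_of_mul_le_mul_left h2 (by linarith)
    have hev : ‖gpEv F' x ω‖ = ‖F.leadingCoeff.eval ω‖ * (fp.roots.map fun z => ‖x - z‖).prod := by
      rw [gpEv, ← hfp, (IsAlgClosed.splits fp).eval_eq_prod_roots, hfl, norm_mul, gp_norm_prod]
    have hcmp := gp_prod_cmp S (fun x => max ‖gpEv F x ω‖ τ) (fun x => ‖gpEv F' x ω‖) (fun x => lt_max_of_lt_right hτ0) (fun x => norm_nonneg _)
      (fun x => by
        rw [hFe]
        refine (norm_add_le _ _).trans ?_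
        rw [norm_mul, hv, one_mul, Complex.norm_real, Real.norm_of_nonneg hτ0.le, two_mul]
        exact add_le_add (le_max_left _ _) (le_max_right _ _)) (by
        rw [gp_norm_prod, Multiset.map_map, Multiset.map_map] at hV
        simp only [hFe]
        exact hV) x hx
    have h7 : τ ≤ ‖F.leadingCoeff.eval ω‖ * (fp.roots.map fun z => ‖x - z‖).prod * 2 ^ S.card := by
      rw [← hev]; exact (le_max_right _ _).trans hcmp
    rw [hcard]
    have h8 : ‖F.leadingCoeff.eval ω‖ ≤ Real.exp (2 * n) := by
      rw [← Real.log_le_iff_le_exp (by linarith)]; exact hb2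
    have h9 : (2:ℝ) ^ S.card ≤ Real.exp n := by
      calc (2:ℝ) ^ S.card ≤ (Real.exp 1) ^ S.card := by gcongr; linarith [Real.add_one_le_exp 1]
        _ = Real.exp S.card := by rw [← Real.exp_nat_mul, mul_one]
        _ ≤ _ := by gcongr; omega
    have hp0 : 0 ≤ (fp.roots.map fun z => ‖x - z‖).prod := by rw [← gp_norm_prod]; positivity
    have h10 : Real.exp (-(T0 + 4) * n) * (Real.exp (2 * n) * Real.exp n) ≤ (fp.roots.map fun z => ‖x - z‖).prod * (Real.exp (2 * n) * Real.exp n) := by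
      calc _ = Real.exp (-(T0 + 1) * n) := by rw [← Real.exp_add, ← Real.exp_add]; congr 1; ring
        _ ≤ τ := by
          rw [hτ, Real.exp_le_exp]
          have := (hpos i)
          gcongr
          rw [hγ0]; linarith
        _ ≤ _ := h7
        _ ≤ Real.exp (2 * n) * (fp.roots.map fun z => ‖x - z‖).prod * Real.exp n := by gcongr
        _ = _ := by ring
    exact le_of_mul_le_mul_right h10 (by positivity)
  · intro k hk P m j γ a1 a2 a3 a4 a5
    have := key k hk P m j γ a1 a2 a3 a4 a5
    rw [hcard]
    refine le_trans ?_ this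
    have : 0 ≤ m * Real.log ‖F.leadingCoeff.eval ω‖ := mul_nonneg (Nat.cast_nonneg _) (Real.log_nonneg hbω)
    linarith


lemma gp_emp {α : Type*} [TopologicalSpace α] [MeasurableSpace α] [BorelSpace α] [T2Space α] (t : Multiset α) (ht : t ≠ 0) :
    ∃ ν : ProbabilityMeasure α, ∀ g : α → ℝ, ∫ x, g x ∂(ν : Measure α) = (t.map g).sum / t.card := by
  have h1 : ∀ t : Multiset α, (t.map fun a => Measure.dirac a).sum Set.univ = t.card := by
    intro t
    induction t using Multiset.induction with
    | empty => simp
    | cons a t ih => simp [ih, add_comm]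
  have h2 : ∀ (g : α → ℝ) (t : Multiset α), Integrable g (t.map fun a => Measure.dirac a).sum ∧
      ∫ x, g x ∂(t.map fun a => Measure.dirac a).sum = (t.map g).sum := by
    intro g t
    induction t using Multiset.induction with
    | empty => simp
    | cons a t ih =>
      have hd : Integrable g (Measure.dirac a) := integrable_dirac (by simp)
      simp only [Multiset.map_cons, Multiset.sum_cons]
      refine ⟨hd.add_measure ih.1, ?_⟩
      rw [integral_add_measure hd ih.1, ih.2, integral_dirac]
  have hc : (t.card : ENNReal) ≠ 0 := by simpa using ht
  refine ⟨⟨(t.card : ENNReal)⁻¹ • (t.map fun a => Measure.dirac a).sum, ⟨?_⟩⟩, fun g => ?_⟩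
  · rw [Measure.smul_apply, h1, smul_eq_mul]
    exact ENNReal.inv_mul_cancel hc (by simp)
  · simp only [ProbabilityMeasure.coe_mk]
    rw [integral_smul_measure, (h2 g t).2]
    simp [div_eq_inv_mul]

lemma gp_weak {ι : Type*} (U : Ultrafilter ι) (ρ : ℝ) (s : ι → Multiset ℂ) (hne : ∀ i, s i ≠ 0) (hs : ∀ i, ∀ z ∈ s i, ‖z‖ ≤ ρ) :
    ∃ β : Measure ℂ, IsProbabilityMeasure β ∧ β (Metric.closedBall 0 ρ)ᶜ = 0 ∧
      ∀ g : ℂ → ℝ, Continuous g → Tendsto (fun i => ((s i).map g).sum / (s i).card) U (𝓝 (∫ z, g z ∂β)) := by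
  have : CompactSpace (Metric.closedBall (0:ℂ) ρ) := isCompact_iff_compactSpace.mp (isCompact_closedBall 0 ρ)
  have hl : ∀ i, ∃ t : Multiset (Metric.closedBall (0:ℂ) ρ), t.map Subtype.val = s i := by
    intro i
    refine ⟨(s i).attach.map fun z => ⟨z.1, by simpa using hs i z.1 z.2⟩, ?_⟩
    rw [Multiset.map_map]
    exact Multiset.attach_map_val (s i)
  choose t ht using hl
  have htne : ∀ i, t i ≠ 0 := fun i h0 => hne i (by rw [← ht i, h0]; simp)
  choose ν hν using fun i => gp_emp (t i) (htne i)
  obtain ⟨β, -, hβ⟩ := isCompact_univ.ultrafilter_le_nhds (U.map ν) (by simp)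
  have hβ' : Tendsto ν U (𝓝 β) := hβ
  rw [ProbabilityMeasure.tendsto_iff_forall_integral_tendsto] at hβ'
  have hm : Measurable (Subtype.val : Metric.closedBall (0:ℂ) ρ → ℂ) := measurable_subtype_coe
  refine ⟨(β : Measure (Metric.closedBall (0:ℂ) ρ)).map Subtype.val, Measure.isProbabilityMeasure_map hm.aemeasurable, ?_, ?_⟩
  · rw [Measure.map_apply hm Metric.isClosed_closedBall.measurableSet.compl]
    convert measure_empty (μ := (β : Measure (Metric.closedBall (0:ℂ) ρ)))
    ext z; simpa using z.2
  · intro g hg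
    have hg' : Continuous fun z : Metric.closedBall (0:ℂ) ρ => g z := hg.comp continuous_subtype_val
    have := hβ' (BoundedContinuousFunction.mkOfCompact ⟨_, hg'⟩)
    rw [integral_map hm.aemeasurable hg.aestronglyMeasurable]
    simp only [BoundedContinuousFunction.mkOfCompact_apply, ContinuousMap.coe_mk, hν] at this
    refine this.congr fun i => ?_
    rw [← ht i, Multiset.map_map, Multiset.card_map]; rfl


lemma gp_cont (P : ℂ[X][X]) : Continuous fun p : ℂ × ℂ => gpEv P p.1 p.2 := by
  induction P using Polynomial.induction_on' with
  | add p q hp hq => simp only [gpEv_add]; exact hp.add hq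
  | monomial n a =>
    simp only [← C_mul_X_pow_eq_monomial, gpEv_mul, gpEv_C, gpEv_pow, gpEv_X]
    exact (a.continuous.comp continuous_snd).mul (continuous_fst.pow n)

lemma gp_lip (a b r : ℝ) (hr : 0 < r) : Real.log (max a r) ≤ Real.log (max b r) + |a - b| / r := by
  have hb : 0 < max b r := lt_max_of_lt_right hr
  have h1 : max a r ≤ max b r * (1 + |a - b| / r) := by
    have h2 : |a - b| ≤ max b r * (|a - b| / r) := by
      rw [mul_div_assoc', le_div_iff₀ hr, mul_comm]
      gcongr; exact le_max_right _ _
    have h3 := le_abs_self (a - b)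
    rw [mul_add, mul_one]
    refine max_le ?_ ?_
    · linarith [le_max_left b r]
    · linarith [le_max_right b r, abs_nonneg (a - b)]
  calc Real.log (max a r) ≤ Real.log (max b r * (1 + |a - b| / r)) := Real.log_le_log (lt_max_of_lt_right hr) h1
    _ = Real.log (max b r) + Real.log (1 + |a - b| / r) := Real.log_mul hb.ne' (by positivity)
    _ ≤ _ := by
      gcongr
      have := Real.log_le_sub_one_of_pos (show 0 < 1 + |a - b| / r by positivity)
      linarith

lemma gp_sum_mono {α : Type*} (s : Multiset α) (g h : α → ℝ) (hgh : ∀ a ∈ s, g a ≤ h a) : (s.map g).sum ≤ (s.map h).sum :=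
  Multiset.sum_map_le_sum_map _ _ hgh

lemma gp_logc {α : Type*} [TopologicalSpace α] (g : α → ℝ) (hg : Continuous g) (c : ℝ) (hc : 0 < c) : Continuous fun x => Real.log (max (g x) c) :=
  (hg.max continuous_const).log fun x => (lt_max_of_lt_right hc).ne'

lemma gp_far (R : ℝ) (hR : 1 ≤ R) (E : Set (ℂ × ℂ)) (hEx : ∀ ζ ∈ E, ‖ζ.1‖ ≤ R) (Θ : ℕ) (e : ℝ) (ω : ℂ) (s : Multiset ℂ)
    (h : ∀ (P : ℂ[X][X]) (m j : ℕ) (γ : ℝ), Θ ≤ m → Θ * j ≤ m → P.natDegree ≤ m → gpWD P j →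
        (∀ ζ ∈ E, ‖gpEv P ζ.1 ζ.2‖ ≤ Real.exp (-γ * m)) →
        (s.map fun z => Real.log (max ‖gpEv P z ω‖ (Real.exp (-γ * m)))).sum ≤ s.card * (m * (e - γ) + Real.log 2)) :
    (s.map fun z => Real.log (max ‖z‖ R) - Real.log R).sum ≤ s.card * e := by
  have hR0 : 0 < R := by linarith
  set A := (s.map fun z => Real.log (max ‖z‖ R) - Real.log R).sum with hA
  have hA' : A = (s.map fun z => Real.log (max ‖z‖ R)).sum - s.card * Real.log R := by
    rw [hA, Multiset.sum_map_sub]; simp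
  have key : ∀ m : ℕ, Θ + 1 ≤ m → A ≤ s.card * e + s.card * Real.log 2 * (1 / m) := by
    intro m hm
    have hm0 : (0:ℝ) < m := by exact_mod_cast (by omega : 0 < m)
    have h1 := h (X ^ m) m 0 (-Real.log R) (by omega) (by simp) (by simp) (by simpa using gpWD_X.pow m) ?_
    · have e1 : Real.exp (- -Real.log R * m) = R ^ m := by
        rw [neg_neg, mul_comm, Real.exp_nat_mul, Real.exp_log hR0]
      have e2 : ∀ z : ℂ, Real.log (max ‖gpEv (X ^ m) z ω‖ (R ^ m)) = m * Real.log (max ‖z‖ R) := by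
        intro z
        rw [gpEv_pow, gpEv_X, norm_pow, ← Real.log_pow]
        congr 1
        rcases le_total ‖z‖ R with hz | hz
        · rw [max_eq_right hz, max_eq_right (by gcongr)]
        · rw [max_eq_left hz, max_eq_left (by gcongr)]
      simp only [e1, e2, Multiset.sum_map_mul_left] at h1
      rw [hA']
      have h2 : (m:ℝ) * ((s.map fun z => Real.log (max ‖z‖ R)).sum) ≤ m * (s.card * Real.log R + s.card * e + s.card * Real.log 2 * (1 / m)) := by
        refine h1.trans (le_of_eq ?_)
        field_simp; ring
      have := le_of_mul_le_mul_left h2 hm0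
      linarith
    · intro ζ hζ
      rw [gpEv_pow, gpEv_X, norm_pow, neg_neg, mul_comm, Real.exp_nat_mul, Real.exp_log hR0]
      have := hEx ζ hζ
      gcongr
  have ht : Tendsto (fun m : ℕ => s.card * e + s.card * Real.log 2 * (1 / (m:ℝ))) atTop (𝓝 (s.card * e)) := by
    simpa using (tendsto_one_div_atTop_nhds_zero_nat (𝕜 := ℝ)).const_mul (s.card * Real.log 2) |>.const_add (s.card * e)
  exact ge_of_tendsto ht (eventually_atTop.mpr ⟨Θ + 1, key⟩)


noncomputable def gpTr (R : ℝ) (z : ℂ) : ℂ := if ‖z‖ ≤ 2 * R then z else ((2 * R : ℝ) : ℂ)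

lemma gpTr_norm (R : ℝ) (hR : 1 ≤ R) (z : ℂ) : ‖gpTr R z‖ ≤ 2 * R := by
  unfold gpTr; split_ifs with h
  · exact h
  · rw [Complex.norm_real, Real.norm_of_nonneg (by linarith)]

lemma gp_lg_nonneg (R : ℝ) (hR : 1 ≤ R) (z : ℂ) : 0 ≤ Real.log (max ‖z‖ R) - Real.log R := by
  have := Real.log_le_log (by linarith) (le_max_right ‖z‖ R)
  linarith

lemma gp_t1 (R r : ℝ) (hR : 1 ≤ R) (hr : 0 < r) (hr1 : r ≤ 1) (x z : ℂ) (hx : ‖x‖ ≤ R) (hxz : 0 < ‖x - z‖) :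
    Real.log ‖x - z‖ ≤ Real.log (max ‖x - gpTr R z‖ r) + (Real.log (max ‖z‖ R) - Real.log R) + Real.log (2 * R) := by
  have h0 := gp_lg_nonneg R hR z
  have h2 : 0 ≤ Real.log (2 * R) := Real.log_nonneg (by linarith)
  unfold gpTr; split_ifs with h
  · have := Real.log_le_log hxz (le_max_left ‖x - z‖ r)
    linarith
  · push Not at h
    have h3 : 1 ≤ max ‖x - ((2 * R : ℝ) : ℂ)‖ r := by
      refine le_max_of_le_left ?_
      have := norm_sub_norm_le (((2 * R : ℝ) : ℂ)) x
      rw [norm_sub_rev, Complex.norm_real, Real.norm_of_nonneg (by linarith)] at this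
      linarith
    have h4 := Real.log_nonneg h3
    rw [max_eq_left (by linarith : R ≤ ‖z‖)]
    have h5 : Real.log ‖x - z‖ ≤ Real.log (2 * ‖z‖) := Real.log_le_log hxz ((norm_sub_le _ _).trans (by linarith))
    rw [Real.log_mul (by norm_num) (by linarith)] at h5 ⊢
    linarith

lemma gp_t2 (R K lc : ℝ) (hR : 1 ≤ R) (g : ℂ → ℝ) (hK : 0 ≤ K) (hg : ∀ z, lc ≤ g z) (hg2 : g ((2 * R : ℝ) : ℂ) ≤ lc + K) (z : ℂ) :
    g (gpTr R z) ≤ g z + K / Real.log 2 * (Real.log (max ‖z‖ R) - Real.log R) := by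
  have h0 := gp_lg_nonneg R hR z
  have hl : 0 < Real.log 2 := Real.log_pos (by norm_num)
  unfold gpTr; split_ifs with h
  · have : 0 ≤ K / Real.log 2 * (Real.log (max ‖z‖ R) - Real.log R) := by positivity
    linarith
  · push Not at h
    have h3 : Real.log 2 ≤ Real.log (max ‖z‖ R) - Real.log R := by
      rw [le_sub_iff_add_le, ← Real.log_mul (by norm_num) (by linarith)]
      exact Real.log_le_log (by linarith) (le_max_of_le_left h.le)
    have h4 : K ≤ K / Real.log 2 * (Real.log (max ‖z‖ R) - Real.log R) := by
      calc K = K / Real.log 2 * Real.log 2 := by field_simp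
        _ ≤ _ := by gcongr
    linarith [hg z]

lemma gp_C1 (R R' T0 ρ0 : ℝ) (hR : 1 ≤ R) (hR' : 1 ≤ R') (hT0 : 0 ≤ T0) (hρ0 : 1 ≤ ρ0) (E : Set (ℂ × ℂ))
    (hEx : ∀ ζ ∈ E, ‖ζ.1‖ ≤ R) (hEy : ∀ ζ ∈ E, ‖ζ.2‖ ≤ R') (hT : gpT E T0) (Y : Set ℂ) (hY : IsCompact Y) (hYR : ∀ x ∈ Y, ‖x‖ ≤ R) :
    ∃ (β : Measure ℂ) (ω : ℂ), IsProbabilityMeasure β ∧ β (Metric.closedBall 0 (2 * R))ᶜ = 0 ∧ ‖ω‖ = ρ0 ∧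
      (∃ C : ℝ, ∀ x ∈ Y, ∀ r : ℝ, 0 < r → r ≤ 1 → -C ≤ ∫ z, Real.log (max ‖x - z‖ r) ∂β) ∧
      ∀ k : ℕ, ∃ Θ : ℕ, ∀ (P : ℂ[X][X]) (m j : ℕ) (γ : ℝ), Θ ≤ m → Θ * j ≤ m → P.natDegree ≤ m → gpWD P j →
        (∀ ζ ∈ E, ‖gpEv P ζ.1 ζ.2‖ ≤ Real.exp (-γ * m)) →
        ∫ z, Real.log (max ‖gpEv P z ω‖ (Real.exp (-γ * m))) ∂β ≤ m * (1 / (k + 1) - γ) + Real.log 2 := by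
  obtain ⟨Θ, hΘ, hC0⟩ := gp_C0 R R' T0 ρ0 hR hR' hT0 hρ0 E hEx hEy hT
  have hnet : ∀ i : ℕ, ∃ S : Finset ℂ, (↑S : Set ℂ) ⊆ Y ∧ ∀ x ∈ Y, ∃ y ∈ S, ‖x - y‖ ≤ 1 / ((i:ℝ) + 1) := by
    intro i
    obtain ⟨t, ht, hfin, hcov⟩ := hY.finite_cover_balls (show (0:ℝ) < 1 / ((i:ℝ) + 1) by positivity)
    refine ⟨hfin.toFinset, by simpa using ht, fun x hx => ?_⟩
    obtain ⟨y, hy, hxy⟩ := Set.mem_iUnion₂.mp (hcov hx)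
    exact ⟨y, by simpa using hy, by rw [← dist_eq_norm]; exact (Metric.mem_ball.mp hxy).le⟩
  choose S hSY hS using hnet
  choose ω s hω hs0 hsa hsb using fun i => hC0 i (S i)
  set U : Ultrafilter ℕ := hyperfilter ℕ with hU
  have hUat : (U : Filter ℕ) ≤ atTop := by
    rw [hU, ← Nat.cofinite_eq_atTop]; exact hyperfilter_le_cofinite
  obtain ⟨ωs, hωs, hωlim⟩ := (isCompact_sphere (0:ℂ) ρ0).ultrafilter_le_nhds (U.map ω) (by
    rw [le_principal_iff]
    have : ∀ᶠ i in (U : Filter ℕ), ω i ∈ Metric.sphere (0:ℂ) ρ0 := Filter.Eventually.of_forall fun i => by simpa using hω i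
    exact this)
  have hωlim' : Tendsto ω U (𝓝 ωs) := hωlim
  obtain ⟨β, hβp, hβs, hβ⟩ := gp_weak U (2 * R) (fun i => (s i).map (gpTr R)) (fun i => by simpa using hs0 i) (fun i z hz => by
    obtain ⟨y, _, rfl⟩ := Multiset.mem_map.mp hz
    exact gpTr_norm R hR y)
  have hcard : ∀ i, (0:ℝ) < (s i).card := fun i => by exact_mod_cast Multiset.card_pos.mpr (hs0 i)
  have hfar : ∀ i, ((s i).map fun z => Real.log (max ‖z‖ R) - Real.log R).sum ≤ (s i).card * (1 / (i + 1)) := fun i =>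
    gp_far R hR E hEx (Θ i) _ (ω i) (s i) (hsb i i le_rfl)
  have ht0 : Tendsto (fun i : ℕ => 1 / ((i:ℝ) + 1)) U (𝓝 0) := tendsto_one_div_add_atTop_nhds_zero_nat.mono_left hUat
  refine ⟨β, ωs, hβp, hβs, by simpa using hωs, ⟨T0 + 6 + Real.log (2 * R), ?_⟩, fun k => ⟨Θ k, ?_⟩⟩
  · intro x hx r hr hr1
    have hlim := hβ (fun z => Real.log (max ‖x - z‖ r)) (gp_logc _ (by fun_prop) r hr)
    refine ge_of_tendsto hlim ?_
    filter_upwards [ht0.eventually (gt_mem_nhds hr)] with i hi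
    obtain ⟨y, hy, hxy⟩ := hS i x hx
    rw [Multiset.card_map, Multiset.map_map, le_div_iff₀ (hcard i)]
    have hprod := hsa i y hy
    have hpos : 0 < ((s i).map fun z => ‖y - z‖).prod := (Real.exp_pos _).trans_le hprod
    have hne : ∀ z ∈ s i, 0 < ‖y - z‖ := by
      intro z hz
      refine lt_of_le_of_ne (norm_nonneg _) fun h0 => hpos.ne' ?_
      exact Multiset.prod_eq_zero (Multiset.mem_map.mpr ⟨z, hz, h0.symm⟩)
    have h1 : -(T0 + 4) * (s i).card ≤ ((s i).map fun z => Real.log ‖y - z‖).sum := by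
      rw [← gp_log_prod _ _ fun z hz => (hne z hz).ne', Real.le_log_iff_exp_le hpos]
      exact hprod
    have h2 : ((s i).map fun z => Real.log ‖y - z‖).sum ≤ ((s i).map fun z => (Real.log (max ‖x - gpTr R z‖ r) +
        (Real.log (max ‖z‖ R) - Real.log R)) + (1 + Real.log (2 * R))).sum := by
      refine gp_sum_mono _ _ _ fun z hz => ?_
      have e1 := gp_t1 R r hR hr hr1 y z (hYR y (hSY i hy)) (hne z hz)
      have e2 := gp_lip ‖y - gpTr R z‖ ‖x - gpTr R z‖ r hr
      have e3 : |‖y - gpTr R z‖ - ‖x - gpTr R z‖| / r ≤ 1 := by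
        rw [div_le_one hr]
        refine (abs_norm_sub_norm_le _ _).trans ?_
        rw [sub_sub_sub_cancel_right, norm_sub_rev]; linarith
      linarith
    rw [Multiset.sum_map_add, Multiset.sum_map_add] at h2
    have h3 := hfar i
    have h4 : (s i).card * (1 / ((i:ℝ) + 1)) ≤ (s i).card := by
      have : (1:ℝ) / (i + 1) ≤ 1 := by linarith
      exact mul_le_of_le_one_right (hcard i).le this
    simp only [Multiset.map_const', Multiset.sum_replicate, nsmul_eq_mul] at h2
    simp only [Function.comp_def]
    linarith
  · intro P m j γ h1 h2 h3 h4 h5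
    set c := Real.exp (-γ * m) with hc
    have hc0 : 0 < c := Real.exp_pos _
    set G : ℂ → ℂ → ℝ := fun w z => Real.log (max ‖gpEv P z w‖ c) with hG
    have hGc : Continuous fun p : ℂ × ℂ => G p.1 p.2 :=
      gp_logc (fun p : ℂ × ℂ => ‖gpEv P p.2 p.1‖) (((gp_cont P).comp continuous_swap).norm) c hc0
    have hGlow : ∀ w z, Real.log c ≤ G w z := fun w z => Real.log_le_log hc0 (le_max_right _ _)
    have hunif : ∀ δ > 0, ∀ᶠ i in (U : Filter ℕ), ∀ z ∈ Metric.closedBall (0:ℂ) (2 * R), |G (ω i) z - G ωs z| < δ := by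
      intro δ hδ
      refine hωlim'.eventually (p := fun w => ∀ z ∈ Metric.closedBall (0:ℂ) (2 * R), |G w z - G ωs z| < δ) ?_
      refine (isCompact_closedBall (0:ℂ) (2 * R)).eventually_forall_of_forall_eventually fun z hz => ?_
      have hcc : Continuous fun p : ℂ × ℂ => |G p.1 p.2 - G ωs p.2| :=
        (hGc.sub (hGc.comp (continuous_const.prodMk continuous_snd))).abs
      refine (hcc.tendsto (ωs, z)).eventually (gt_mem_nhds ?_)
      simpa using hδ
    have hlim := hβ (G ωs) (hGc.comp (continuous_const.prodMk continuous_id))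
    set K := G ωs ((2 * R : ℝ) : ℂ) + 1 - Real.log c with hK
    have hK0 : 0 ≤ K := by have := hGlow ωs ((2 * R : ℝ) : ℂ); rw [hK]; linarith
    refine le_of_forall_pos_le_add fun δ hδ => ?_
    have ht1 : Tendsto (fun i : ℕ => (m * (1 / ((k:ℝ) + 1) - γ) + Real.log 2) + δ + K / Real.log 2 * (1 / ((i:ℝ) + 1))) U (𝓝 ((m * (1 / ((k:ℝ) + 1) - γ) + Real.log 2) + δ)) := by
      simpa using (ht0.const_mul (K / Real.log 2)).const_add _
    refine le_of_tendsto_of_tendsto hlim ht1 ?_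
    filter_upwards [hunif δ hδ, hunif 1 one_pos, hUat (eventually_ge_atTop k)] with i hi hi1 hik
    rw [Multiset.card_map, Multiset.map_map, div_le_iff₀ (hcard i)]
    have hb := hsb i k hik P m j γ h1 h2 h3 h4 h5
    have hmem : ((2 * R : ℝ) : ℂ) ∈ Metric.closedBall (0:ℂ) (2 * R) := by
      rw [mem_closedBall_zero_iff, Complex.norm_real, Real.norm_of_nonneg (by linarith)]
    have hg2 : G (ω i) ((2 * R : ℝ) : ℂ) ≤ Real.log c + K := by
      have := (abs_lt.mp (hi1 _ hmem)).2
      rw [hK]; linarith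
    have e1 : ((s i).map (G ωs ∘ gpTr R)).sum ≤ ((s i).map fun z => G (ω i) z + K / Real.log 2 * (Real.log (max ‖z‖ R) - Real.log R) + δ).sum := by
      refine gp_sum_mono _ _ _ fun z hz => ?_
      have a1 := gp_t2 R K (Real.log c) hR (G (ω i)) hK0 (hGlow _) hg2 z
      have a2 := (abs_lt.mp (hi (gpTr R z) (by simpa using gpTr_norm R hR z))).1
      simp only [Function.comp]
      linarith
    rw [Multiset.sum_map_add, Multiset.sum_map_add, Multiset.sum_map_mul_left] at e1
    simp only [Multiset.map_const', Multiset.sum_replicate, nsmul_eq_mul] at e1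
    have e2 := mul_le_mul_of_nonneg_left (hfar i) (show 0 ≤ K / Real.log 2 by have := Real.log_pos (show (1:ℝ) < 2 by norm_num); positivity)
    refine e1.trans ?_
    calc _ ≤ (s i).card * (m * (1 / (k + 1) - γ) + Real.log 2) + K / Real.log 2 * ((s i).card * (1 / (i + 1))) + (s i).card * δ := by
          gcongr
      _ = _ := by ring


lemma gp_int (β : Measure ℂ) [IsProbabilityMeasure β] (K : Set ℂ) (hK : IsCompact K) (hβ : β Kᶜ = 0) (g : ℂ → ℝ) (hg : Continuous g) :
    Integrable g β := by
  have h1 : β.restrict K = β := Measure.restrict_eq_self_of_ae_mem (by rw [ae_iff]; exact hβ)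
  have h2 := hg.continuousOn.integrableOn_compact (μ := β) hK
  rwa [IntegrableOn, h1] at h2

lemma gp_ae_le (R : ℝ) (β : Measure ℂ) [IsProbabilityMeasure β] (hβ : β (Metric.closedBall 0 R)ᶜ = 0) (E : Set (ℂ × ℂ)) (ω : ℂ)
    (hB : ∀ k : ℕ, ∃ Θ : ℕ, ∀ (P : ℂ[X][X]) (m j : ℕ) (γ : ℝ), Θ ≤ m → Θ * j ≤ m → P.natDegree ≤ m → gpWD P j →
        (∀ ζ ∈ E, ‖gpEv P ζ.1 ζ.2‖ ≤ Real.exp (-γ * m)) →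
        ∫ z, Real.log (max ‖gpEv P z ω‖ (Real.exp (-γ * m))) ∂β ≤ m * (1 / (k + 1) - γ) + Real.log 2)
    (p : ℂ[X]) (c : ℝ) (hc : 0 < c) (hp : ∀ ζ ∈ E, ‖p.eval ζ.1‖ ≤ c) : β {z | c < ‖p.eval z‖} = 0 := by
  set q : ℂ[X][X] := p.map C with hq
  have hqe : ∀ z w, gpEv q z w = p.eval z := by
    intro z w; rw [gpEv, hq, Polynomial.map_map]
    have : (evalRingHom w).comp C = RingHom.id ℂ := by ext x <;> simp
    rw [this, Polynomial.map_id]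
  set d := p.natDegree + 1 with hd
  have hd0 : (0:ℝ) < d := by exact_mod_cast (by omega : 0 < d)
  set g : ℂ → ℝ := fun z => Real.log (max ‖p.eval z‖ c) - Real.log c with hg
  have hgc : Continuous g := (gp_logc _ p.continuous.norm c hc).sub continuous_const
  have hg0 : ∀ z, 0 ≤ g z := fun z => by
    have := Real.log_le_log hc (le_max_right ‖p.eval z‖ c)
    simp only [hg]; linarith
  have hgi : Integrable g β := gp_int β _ (isCompact_closedBall 0 R) hβ g hgc
  have key : ∀ k : ℕ, ∫ z, g z ∂β ≤ d * (1 / (k + 1)) := by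
    intro k
    obtain ⟨Θ, hΘ⟩ := hB k
    have h1 : ∀ N : ℕ, Θ + 1 ≤ N → ∫ z, g z ∂β ≤ d * (1 / (k + 1)) + Real.log 2 * (1 / N) := by
      intro N hN
      have hN0 : (0:ℝ) < N := by exact_mod_cast (by omega : 0 < N)
      have e1 : Real.exp (-(-Real.log c / d) * ((N * d : ℕ) : ℝ)) = c ^ N := by
        rw [← Real.exp_log hc, ← Real.exp_nat_mul, Real.log_exp]
        congr 1; push_cast; field_simp
      have h2 := hΘ (q ^ N) (N * d) 0 (-Real.log c / d) ((by omega : Θ ≤ N).trans (Nat.le_mul_of_pos_right _ (by omega))) (by simp)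
        (natDegree_pow_le.trans (Nat.mul_le_mul_left _ ((natDegree_map_le).trans (by omega)))) ?_ ?_
      · have e2 : ∀ z : ℂ, Real.log (max ‖gpEv (q ^ N) z ω‖ (c ^ N)) = N * g z + N * Real.log c := by
          intro z
          have : max ‖gpEv (q ^ N) z ω‖ (c ^ N) = (max ‖p.eval z‖ c) ^ N := by
            rw [gpEv_pow, hqe, norm_pow]
            rcases le_total ‖p.eval z‖ c with hz | hz
            · rw [max_eq_right hz, max_eq_right (by gcongr)]
            · rw [max_eq_left hz, max_eq_left (by gcongr)]
          rw [this, Real.log_pow]; simp only [hg]; ring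
        simp only [e1, e2] at h2
        rw [integral_add (hgi.const_mul _) (integrable_const _), integral_const_mul] at h2
        simp only [integral_const, probReal_univ, one_smul] at h2
        have h3 : N * ∫ z, g z ∂β ≤ N * (d * (1 / (k + 1)) + Real.log 2 * (1 / N)) := by
          have e3 : ((N * d : ℕ) : ℝ) * (1 / (k + 1) - -Real.log c / d) = N * (d * (1 / (k + 1))) + N * Real.log c := by
            push_cast; field_simp; ring
          have e4 : (N:ℝ) * (d * (1 / (k + 1)) + Real.log 2 * (1 / N)) = N * (d * (1 / (k + 1))) + Real.log 2 := by field_simp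
          linarith
        exact le_of_mul_le_mul_left h3 hN0
      · have : gpWD q 0 := by intro i; rw [hq, coeff_map, natDegree_C]
        simpa using this.pow N
      · intro ζ hζ
        rw [e1, gpEv_pow, hqe, norm_pow]
        have := hp ζ hζ
        gcongr
    have ht : Tendsto (fun N : ℕ => d * (1 / ((k:ℝ) + 1)) + Real.log 2 * (1 / (N:ℝ))) atTop (𝓝 (d * (1 / ((k:ℝ) + 1)))) := by
      simpa using (tendsto_one_div_atTop_nhds_zero_nat (𝕜 := ℝ)).const_mul (Real.log 2) |>.const_add (d * (1 / ((k:ℝ) + 1)))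
    exact ge_of_tendsto ht (eventually_atTop.mpr ⟨Θ + 1, h1⟩)
  have hle : ∫ z, g z ∂β ≤ 0 := by
    have ht : Tendsto (fun k : ℕ => d * (1 / ((k:ℝ) + 1))) atTop (𝓝 0) := by
      simpa using (tendsto_one_div_add_atTop_nhds_zero_nat (𝕜 := ℝ)).const_mul (d:ℝ)
    exact ge_of_tendsto' ht key
  have hz : g =ᵐ[β] 0 := (integral_eq_zero_iff_of_nonneg hg0 hgi).mp (le_antisymm hle (integral_nonneg hg0))
  refine measure_mono_null ?_ (ae_iff.mp hz)
  intro z hz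
  simp only [Set.mem_setOf_eq] at hz ⊢
  have : Real.log c < Real.log (max ‖p.eval z‖ c) := Real.log_lt_log hc (lt_max_of_lt_left hz)
  simp only [hg, Pi.zero_apply]
  linarith

lemma gp_supp (R R2 : ℝ) (hR : 1 ≤ R) (β : Measure ℂ) [IsProbabilityMeasure β] (hβ : β (Metric.closedBall 0 R2)ᶜ = 0) (E : Set (ℂ × ℂ)) (ω : ℂ)
    (hB : ∀ k : ℕ, ∃ Θ : ℕ, ∀ (P : ℂ[X][X]) (m j : ℕ) (γ : ℝ), Θ ≤ m → Θ * j ≤ m → P.natDegree ≤ m → gpWD P j →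
        (∀ ζ ∈ E, ‖gpEv P ζ.1 ζ.2‖ ≤ Real.exp (-γ * m)) →
        ∫ z, Real.log (max ‖gpEv P z ω‖ (Real.exp (-γ * m))) ∂β ≤ m * (1 / (k + 1) - γ) + Real.log 2)
    (Y : Set ℂ) (hY : IsCompact Y) (hYR : ∀ x ∈ Y, ‖x‖ ≤ R) (hYr : ∀ x ∈ Y, ((x.re : ℝ) : ℂ) = x) (hE : ∀ ζ ∈ E, ζ.1 ∈ Y) : β Yᶜ = 0 := by
  refine measure_null_of_locally_null _ fun z0 hz0 => ?_
  obtain ⟨δ, hδ, hδY⟩ : ∃ δ > 0, ∀ x ∈ Y, δ ≤ ‖x - z0‖ := by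
    obtain ⟨δ, hδ, hb⟩ := Metric.isOpen_iff.mp hY.isClosed.isOpen_compl z0 hz0
    refine ⟨δ, hδ, fun x hx => ?_⟩
    by_contra! h
    exact hb (by rwa [Metric.mem_ball, dist_eq_norm]) hx
  set δ' := min δ 1 with hδ'
  have hδ0 : 0 < δ' := lt_min hδ one_pos
  set A : ℝ := (R + |z0.re|) ^ 2 + 1 with hA
  set p : ℂ[X] := C (A:ℂ) - (X - C (z0.re : ℂ)) ^ 2 with hp
  set c : ℝ := A + z0.im ^ 2 - δ' ^ 2 with hc
  have hδ1 : δ' ^ 2 ≤ 1 := by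
    have : δ' ≤ 1 := min_le_right _ _
    nlinarith
  have hc0 : 0 < c := by
    have : 0 < R + |z0.re| := by positivity
    have : 0 < (R + |z0.re|) ^ 2 := by positivity
    rw [hc, hA]; nlinarith [sq_nonneg z0.im]
  have hpY : ∀ ζ ∈ E, ‖p.eval ζ.1‖ ≤ c := by
    intro ζ hζ
    have hx := hE ζ hζ
    set x := ζ.1.re with hxd
    have hxe : ζ.1 = (x:ℂ) := (hYr _ hx).symm
    have hxR : |x| ≤ R := by
      have := hYR _ hx
      rwa [hxe, Complex.norm_real] at this
    have e1 : p.eval ζ.1 = ((A - (x - z0.re) ^ 2 : ℝ) : ℂ) := by rw [hxe, hp]; simp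
    have e2 : (x - z0.re) ^ 2 ≤ (R + |z0.re|) ^ 2 := by
      rw [← sq_abs]
      have := abs_sub x z0.re
      gcongr
      linarith
    have e3 : δ' ^ 2 ≤ (x - z0.re) ^ 2 + z0.im ^ 2 := by
      have h1 : δ' ≤ ‖ζ.1 - z0‖ := (min_le_left _ _).trans (hδY _ hx)
      have h2 : δ' ^ 2 ≤ ‖ζ.1 - z0‖ ^ 2 := by gcongr
      rw [← Complex.normSq_eq_norm_sq, Complex.normSq_apply, hxe] at h2
      simp at h2; nlinarith
    rw [e1, Complex.norm_real, Real.norm_of_nonneg (by rw [hA]; linarith), hc]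
    linarith
  have h0 := gp_ae_le R2 β hβ E ω hB p c hc0 hpY
  refine ⟨_, mem_nhdsWithin_of_mem_nhds ((isOpen_lt continuous_const p.continuous.norm).mem_nhds ?_), h0⟩
  have e1 : p.eval z0 = ((A + z0.im ^ 2 : ℝ) : ℂ) := by
    have : z0 - (z0.re : ℂ) = z0.im * Complex.I := by
      apply Complex.ext <;> simp
    rw [hp]; simp only [eval_sub, eval_C, eval_pow, eval_X, this, mul_pow, Complex.I_sq]; push_cast; ring
  show c < ‖p.eval z0‖
  rw [e1, Complex.norm_real, Real.norm_of_nonneg (by positivity), hc]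
  have : 0 < δ' ^ 2 := by positivity
  linarith


lemma gp_phi (r s t t' : ℝ) (hs : 0 < s) (hsr : s ≤ r) (ht : t' ≤ t) (h0 : 0 ≤ t') :
    Real.log (max t r) - Real.log (max t s) ≤ Real.log (max t' r) - Real.log (max t' s) := by
  have hr : 0 < r := by linarith
  have a1 : 0 < max t r := lt_max_of_lt_right hr
  have a2 : 0 < max t s := lt_max_of_lt_right hs
  have a3 : 0 < max t' r := lt_max_of_lt_right hr
  have a4 : 0 < max t' s := lt_max_of_lt_right hs
  rw [← Real.log_div a1.ne' a2.ne', ← Real.log_div a3.ne' a4.ne']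
  refine Real.log_le_log (by positivity) ?_
  rw [div_le_div_iff₀ a2 a4]
  rcases max_cases t r with ⟨h1, h1'⟩ | ⟨h1, h1'⟩ <;> rcases max_cases t s with ⟨h2, h2'⟩ | ⟨h2, h2'⟩ <;>
    rcases max_cases t' r with ⟨h3, h3'⟩ | ⟨h3, h3'⟩ <;> rcases max_cases t' s with ⟨h4, h4'⟩ | ⟨h4, h4'⟩ <;>
    rw [h1, h2, h3, h4] <;> nlinarith

lemma gp_intl (β : Measure ℂ) [IsProbabilityMeasure β] (Y : Set ℂ) (hY : IsCompact Y) (hβ : β Yᶜ = 0) (s : ℝ) (hs : 0 < s) (z : ℂ) :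
    Integrable (fun ζ => Real.log (max ‖z - ζ‖ s)) β :=
  gp_int β Y hY hβ _ (gp_logc _ (by fun_prop) s hs)

lemma gp_Ilip (β : Measure ℂ) [IsProbabilityMeasure β] (Y : Set ℂ) (hY : IsCompact Y) (hβ : β Yᶜ = 0) (s : ℝ) (hs : 0 < s) (z z' : ℂ) :
    ∫ ζ, Real.log (max ‖z - ζ‖ s) ∂β ≤ ∫ ζ, Real.log (max ‖z' - ζ‖ s) ∂β + ‖z - z'‖ / s := by
  have h1 := integral_mono (gp_intl β Y hY hβ s hs z) ((gp_intl β Y hY hβ s hs z').add (integrable_const (‖z - z'‖ / s))) (fun ζ => by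
    refine (gp_lip _ ‖z' - ζ‖ s hs).trans ?_
    simp only [Pi.add_apply]
    gcongr
    refine (abs_norm_sub_norm_le _ _).trans ?_
    rw [sub_sub_sub_cancel_right])
  simpa [integral_add (gp_intl β Y hY hβ s hs z') (integrable_const (‖z - z'‖ / s))] using h1

lemma gp_Icont (β : Measure ℂ) [IsProbabilityMeasure β] (Y : Set ℂ) (hY : IsCompact Y) (hβ : β Yᶜ = 0) (s : ℝ) (hs : 0 < s) :
    Continuous fun z => ∫ ζ, Real.log (max ‖z - ζ‖ s) ∂β := by
  refine (LipschitzWith.of_le_add_mul (⟨1 / s, by positivity⟩ : NNReal) fun x y => ?_).continuous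
  have := gp_Ilip β Y hY hβ s hs x y
  rw [dist_eq_norm]
  show _ ≤ _ + 1 / s * _
  rw [one_div_mul_eq_div]; exact this

lemma gp_Imono (β : Measure ℂ) [IsProbabilityMeasure β] (Y : Set ℂ) (hY : IsCompact Y) (hβ : β Yᶜ = 0) (s s' : ℝ) (hs : 0 < s) (hss : s ≤ s') (z : ℂ) :
    ∫ ζ, Real.log (max ‖z - ζ‖ s) ∂β ≤ ∫ ζ, Real.log (max ‖z - ζ‖ s') ∂β := by
  refine integral_mono (gp_intl β Y hY hβ s hs z) (gp_intl β Y hY hβ s' (by linarith) z) fun ζ => ?_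
  exact Real.log_le_log (lt_max_of_lt_right hs) (max_le_max le_rfl hss)

lemma gp_C3 (β : Measure ℂ) [IsProbabilityMeasure β] (Y : Set ℂ) (hY : IsCompact Y) (hβ : β Yᶜ = 0) (C : ℝ)
    (hC : ∀ x ∈ Y, ∀ r, 0 < r → r ≤ 1 → -C ≤ ∫ ζ, Real.log (max ‖x - ζ‖ r) ∂β) (η : ℝ) (hη : 0 < η) :
    ∃ K' : Set ℂ, IsCompact K' ∧ K' ⊆ Y ∧ 1 / 2 ≤ β.real K' ∧ ∃ r, 0 < r ∧ r ≤ 1 / 2 ∧ ∀ ρ s, 0 < s → s ≤ r →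
      ∫ ζ in K', (Real.log (max ‖ζ - ρ‖ r) - Real.log (max ‖ζ - ρ‖ s)) ∂β ≤ η := by
  set I : ℝ → ℂ → ℝ := fun s z => ∫ ζ, Real.log (max ‖z - ζ‖ s) ∂β with hI
  have hmono : ∀ s s' z, 0 < s → s ≤ s' → I s z ≤ I s' z := fun s s' z h1 h2 => gp_Imono β Y hY hβ s s' h1 h2 z
  set B : ℕ → Set ℂ := fun n => {z | z ∈ Y ∧ ∀ s, 0 < s → s ≤ 1 / ((n:ℝ) + 1) → I (1 / ((n:ℝ) + 1)) z ≤ I s z + η} with hB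
  have hpos : ∀ n : ℕ, (0:ℝ) < 1 / (n + 1) := fun n => by positivity
  have hBc : ∀ n, IsClosed (B n) := by
    intro n
    have : B n = Y ∩ ⋂ (s : ℝ) (_ : 0 < s) (_ : s ≤ 1 / ((n:ℝ) + 1)), {z | I (1 / ((n:ℝ) + 1)) z ≤ I s z + η} := by
      ext z; simp [hB]
    rw [this]
    refine hY.isClosed.inter (isClosed_iInter fun s => isClosed_iInter fun hs => isClosed_iInter fun _ => ?_)
    exact isClosed_le (gp_Icont β Y hY hβ _ (hpos n)) ((gp_Icont β Y hY hβ s hs).add continuous_const)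
  have hBm : Monotone B := by
    intro n m hnm z hz
    have h0 : 1 / ((m:ℝ) + 1) ≤ 1 / ((n:ℝ) + 1) := by gcongr
    exact ⟨hz.1, fun s hs hsm => (hmono _ _ z (hpos m) h0).trans (hz.2 s hs (hsm.trans h0))⟩
  have hBU : Y ⊆ ⋃ n, B n := by
    intro z hz
    set S := (fun s => I s z) '' Set.Ioc (0:ℝ) 1 with hS
    have hSb : BddBelow S := ⟨-C, by rintro _ ⟨s, hs, rfl⟩; exact hC z hz s hs.1 hs.2⟩
    have hSne : S.Nonempty := ⟨_, 1, ⟨one_pos, le_rfl⟩, rfl⟩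
    obtain ⟨_, ⟨r0, hr0, rfl⟩, hlt⟩ := exists_lt_of_csInf_lt hSne (show sInf S < sInf S + η by linarith)
    obtain ⟨n, hn⟩ := exists_nat_one_div_lt hr0.1
    refine Set.mem_iUnion.mpr ⟨n, hz, fun s hs hsn => ?_⟩
    have h1 := hmono _ _ z (hpos n) hn.le
    have h2 : sInf S ≤ I s z := csInf_le hSb ⟨s, ⟨hs, hsn.trans (hn.le.trans hr0.2)⟩, rfl⟩
    simp only at hlt
    linarith
  have hU1 : β (⋃ n, B n) = 1 := by
    refine le_antisymm prob_le_one ?_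
    rw [← (prob_compl_eq_zero_iff hY.measurableSet).mp hβ]
    exact measure_mono hBU
  have ht := tendsto_measure_iUnion_atTop (μ := β) hBm
  rw [hU1] at ht
  obtain ⟨n, hn⟩ := (ht.eventually (lt_mem_nhds (show (1/2 : ENNReal) < 1 from ENNReal.half_lt_self (by simp) (by simp)))).exists
  have hBY : B n ⊆ Y := fun z hz => hz.1
  have hKc : IsCompact (B n) := hY.of_isClosed_subset (hBc n) hBY
  have hne : (B n).Nonempty := nonempty_of_measure_ne_zero (pos_of_gt hn).ne'
  refine ⟨B n, hKc, hBY, ?_, 1 / ((n:ℝ) + 1) / 2, by positivity, ?_, ?_⟩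
  · have := (ENNReal.toReal_le_toReal (by simp) (measure_ne_top _ _)).mpr hn.le
    simpa [Measure.real] using this
  · have : 1 / ((n:ℝ) + 1) ≤ 1 := by rw [div_le_one (by positivity)]; linarith [n.cast_nonneg (α := ℝ)]
    linarith
  · intro ρ s hs hsr
    set r := 1 / ((n:ℝ) + 1) / 2 with hr
    have hr0 : 0 < r := by positivity
    obtain ⟨z, hz, hzmin⟩ := hKc.exists_isMinOn hne (f := fun z => ‖z - ρ‖) (by fun_prop)
    have h2r : 2 * r = 1 / ((n:ℝ) + 1) := by rw [hr]; ring
    have hint : Integrable (fun ζ => Real.log (max ‖z - ζ‖ (2 * r)) - Real.log (max ‖z - ζ‖ (2 * s))) β :=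
      (gp_intl β Y hY hβ _ (by positivity) z).sub (gp_intl β Y hY hβ _ (by positivity) z)
    calc _ ≤ ∫ ζ in B n, (Real.log (max ‖z - ζ‖ (2 * r)) - Real.log (max ‖z - ζ‖ (2 * s))) ∂β := by
          refine setIntegral_mono_on ?_ hint.integrableOn (hBc n).measurableSet ?_
          · exact ((gp_int β Y hY hβ _ (gp_logc (fun ζ => ‖ζ - ρ‖) (by fun_prop) r hr0)).sub (gp_int β Y hY hβ _ (gp_logc (fun ζ => ‖ζ - ρ‖) (by fun_prop) s hs))).integrableOn
          · intro ζ hζ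
            have h1 : ‖z - ρ‖ ≤ ‖ζ - ρ‖ := hzmin hζ
            have h2 : ‖z - ζ‖ / 2 ≤ ‖ζ - ρ‖ := by
              have := norm_sub_le (z - ρ) (ζ - ρ)
              rw [sub_sub_sub_cancel_right] at this
              linarith
            refine (gp_phi r s _ _ hs hsr h2 (by positivity)).trans (le_of_eq ?_)
            have e1 : ∀ t : ℝ, 0 < t → Real.log (max (‖z - ζ‖ / 2) t) = Real.log (max ‖z - ζ‖ (2 * t)) - Real.log 2 := by
              intro t ht
              rw [← Real.log_div (lt_max_of_lt_right (by positivity)).ne' (by norm_num)]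
              congr 1
              rw [← max_div_div_right (by norm_num : (0:ℝ) ≤ 2)]
              congr 1
              field_simp
            rw [e1 r hr0, e1 s hs]; ring
      _ ≤ ∫ ζ, (Real.log (max ‖z - ζ‖ (2 * r)) - Real.log (max ‖z - ζ‖ (2 * s))) ∂β := by
          refine setIntegral_le_integral hint (Eventually.of_forall fun ζ => ?_)
          have := Real.log_le_log (lt_max_of_lt_right (show 0 < 2 * s by positivity)) (max_le_max (le_refl ‖z - ζ‖) (show 2 * s ≤ 2 * r by linarith))
          simp only [Pi.zero_apply]; linarith
      _ = I (2 * r) z - I (2 * s) z := integral_sub (gp_intl β Y hY hβ _ (by positivity) z) (gp_intl β Y hY hβ _ (by positivity) z)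
      _ ≤ η := by
          have := hz.2 (2 * s) (by positivity) (by rw [← h2r]; linarith)
          rw [h2r]; linarith


lemma gp_dist (Y : Set ℂ) (hY : IsCompact Y) (σ : Multiset ℂ) (h : ∀ x ∈ Y, ∀ ρ ∈ σ, x ≠ ρ) : ∃ δ > 0, ∀ x ∈ Y, ∀ ρ ∈ σ, δ ≤ ‖x - ρ‖ := by
  induction σ using Multiset.induction_on with
  | empty => exact ⟨1, one_pos, by simp⟩
  | cons z0 σ ih =>
    obtain ⟨δ, hδ, h1⟩ := ih fun x hx ρ hρ => h x hx ρ (Multiset.mem_cons_of_mem hρ)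
    obtain ⟨δ', hδ', hb⟩ := Metric.isOpen_iff.mp hY.isClosed.isOpen_compl z0 (fun hz => h z0 hz z0 (Multiset.mem_cons_self _ _) rfl)
    refine ⟨min δ δ', lt_min hδ hδ', fun x hx ρ hρ => ?_⟩
    rcases Multiset.mem_cons.mp hρ with rfl | hρ
    · refine (min_le_right _ _).trans ?_
      by_contra! h
      exact hb (by rwa [Metric.mem_ball, dist_eq_norm]) hx
    · exact (min_le_left _ _).trans (h1 x hx ρ hρ)

lemma gp_msum_int {α : Type*} [MeasurableSpace α] (β : Measure α) (σ : Multiset ℂ) (g : ℂ → α → ℝ) (hg : ∀ ρ ∈ σ, Integrable (g ρ) β) :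
    Integrable (fun x => (σ.map fun ρ => g ρ x).sum) β ∧ ∫ x, (σ.map fun ρ => g ρ x).sum ∂β = (σ.map fun ρ => ∫ x, g ρ x ∂β).sum := by
  induction σ using Multiset.induction_on with
  | empty => simp
  | cons z0 σ ih =>
    obtain ⟨h1, h2⟩ := ih fun ρ hρ => hg ρ (Multiset.mem_cons_of_mem hρ)
    have h3 := hg z0 (Multiset.mem_cons_self _ _)
    simp only [Multiset.map_cons, Multiset.sum_cons]
    exact ⟨h3.add h1, by rw [integral_add h3 h1, h2]⟩

lemma gp_thmC (R R' T0 M : ℝ) (hR : 1 ≤ R) (hR' : 1 ≤ R') (hT0 : 0 ≤ T0) (hM : 0 ≤ M) (E : Set (ℂ × ℂ)) (hEy : ∀ ζ ∈ E, ‖ζ.2‖ ≤ R')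
    (hT : gpT E T0) (Y : Set ℂ) (hY : IsCompact Y) (hYR : ∀ x ∈ Y, ‖x‖ ≤ R) (hYr : ∀ x ∈ Y, ((x.re : ℝ) : ℂ) = x) (hE : ∀ ζ ∈ E, ζ.1 ∈ Y)
    (a s η : ℝ) (ha : 0 < a) (hη : 0 < η) (hηa : η ≤ a / 20)
    (hd : ∀ r, 0 < r → r ≤ 1 / 2 → ∀ N : ℕ, ∃ m ≥ N, ∃ (σ : Multiset ℂ) (p q : ℂ[X]), σ.card = m ∧ p.natDegree ≤ m ∧ q.natDegree ≤ m ∧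
      (∀ x ∈ Y, q.eval x ≠ 0) ∧ (∀ x ∈ Y, ‖p.eval x‖ ≤ M * ‖q.eval x‖) ∧
      (∀ ζ ∈ E, ‖q.eval ζ.1 * ζ.2 - p.eval ζ.1‖ ≤ Real.exp (-a * m) * ‖q.eval ζ.1‖) ∧
      (∀ x ∈ Y, Real.log ‖q.eval x‖ ≤ m * (s + 2 * η)) ∧ (∀ x ∈ Y, ∀ ρ ∈ σ, x ≠ ρ) ∧
      (∀ x ∈ Y, (σ.map fun ρ => Real.log ‖x - ρ‖).sum - η * m ≤ Real.log ‖q.eval x‖) ∧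
      (∀ x ∈ Y, m * (s - η) ≤ (σ.map fun ρ => Real.log (max ‖x - ρ‖ r)).sum)) : False := by
  obtain ⟨β, ω, hβp, hβ0, hω, ⟨C₁, hC⟩, hB⟩ := gp_C1 R R' T0 (M + 1) hR hR' hT0 (by linarith) E (fun ζ hζ => hYR _ (hE ζ hζ)) hEy hT Y hY hYR
  have hβ := gp_supp R (2 * R) hR β hβ0 E ω hB Y hY hYR hYr hE
  obtain ⟨K', hKc, hKY, hK2, r, hr0, hr1, hK⟩ := gp_C3 β Y hY hβ C₁ hC η hη
  obtain ⟨k, hk⟩ := exists_nat_one_div_lt (show 0 < a / 10 by positivity)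
  obtain ⟨Θ, hΘ⟩ := hB k
  obtain ⟨N, hN⟩ := exists_nat_gt (Real.log 2 / (a / 10))
  obtain ⟨m, hm, σ, p, q, hσ, hp, hq, hq0, hpM, happ, hup, hne, hlow, hr⟩ := hd r hr0 hr1 (max N (max Θ 1))
  have hm0 : (0:ℝ) < m := by exact_mod_cast (by have := le_max_right N (max Θ 1); have := le_max_right Θ 1; omega : 0 < m)
  have hmΘ : Θ ≤ m := (le_max_left _ _).trans ((le_max_right _ _).trans hm)
  have hmN : Real.log 2 < m * (a / 10) := by
    rw [div_lt_iff₀ (by positivity)] at hN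
    refine hN.trans_le ?_
    gcongr
    exact (le_max_left _ _).trans hm
  set P : ℂ[X][X] := q.map C * C X - p.map C with hP
  have hmapC : ∀ (u : ℂ[X]) z w, gpEv (u.map C) z w = u.eval z := by
    intro u z w; rw [gpEv, Polynomial.map_map]
    have : (evalRingHom w).comp C = RingHom.id ℂ := by ext x <;> simp
    rw [this, Polynomial.map_id]
  have hPe : ∀ z w, gpEv P z w = q.eval z * w - p.eval z := by
    intro z w
    have e1 : P = q.map C * C X + C (-1) * p.map C := by rw [hP, C_neg, C_1]; ring
    rw [e1, gpEv_add, gpEv_mul, gpEv_mul, hmapC, hmapC, gpEv_C, gpEv_C]; simp; ring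
  have hPd : P.natDegree ≤ m := by
    refine (natDegree_sub_le _ _).trans (max_le ?_ ?_)
    · exact (natDegree_mul_C_le _ _).trans (natDegree_map_le.trans hq)
    · exact natDegree_map_le.trans hp
  have hPw : gpWD P 1 := by
    intro i
    rw [hP, coeff_sub, coeff_mul_C, coeff_map, coeff_map]
    refine (natDegree_sub_le _ _).trans (max_le ?_ (by simp))
    exact (natDegree_C_mul_le _ _).trans natDegree_X_le
  set γ := a - s - 2 * η with hγ
  have hPE : ∀ ζ ∈ E, ‖gpEv P ζ.1 ζ.2‖ ≤ Real.exp (-γ * m) := by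
    intro ζ hζ
    rw [hPe]
    refine (happ ζ hζ).trans ?_
    have hq1 := norm_pos_iff.mpr (hq0 _ (hE ζ hζ))
    have h1 : ‖q.eval ζ.1‖ ≤ Real.exp (m * (s + 2 * η)) := by
      rw [← Real.log_le_iff_le_exp hq1]; exact hup _ (hE ζ hζ)
    calc _ ≤ Real.exp (-a * m) * Real.exp (m * (s + 2 * η)) := by gcongr
      _ = _ := by rw [← Real.exp_add, hγ]; congr 1; ring
  have hmain := hΘ P m 1 γ hmΘ (by simpa using hmΘ) hPd hPw hPE
  set c := Real.exp (-γ * m) with hc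
  have hc0 : 0 < c := Real.exp_pos _
  have hlc : Real.log c = -γ * m := Real.log_exp _
  have hGi : Integrable (fun z => Real.log (max ‖gpEv P z ω‖ c)) β :=
    gp_int β Y hY hβ _ (gp_logc _ (((gp_cont P).comp (continuous_id.prodMk continuous_const)).norm) c hc0)
  have hGi' := hGi.add (integrable_const (γ * m))
  have hup2 : ∫ z in K', (Real.log (max ‖gpEv P z ω‖ c) + γ * m) ∂β ≤ m * (1 / (k + 1)) + Real.log 2 := by
    refine (setIntegral_le_integral hGi' (Eventually.of_forall fun z => ?_)).trans ?_
    · have := Real.log_le_log hc0 (le_max_right ‖gpEv P z ω‖ c)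
      simp only [Pi.zero_apply, Pi.add_apply]; linarith
    · simp only [Pi.add_apply]
      rw [integral_add hGi (integrable_const _)]
      simp only [integral_const, probReal_univ, one_smul]
      linarith
  obtain ⟨δ, hδ, hδY⟩ := gp_dist Y hY σ hne
  set t := min δ r with ht
  have ht0 : 0 < t := lt_min hδ hr0
  have hgi : ∀ u : ℝ, 0 < u → ∀ ρ ∈ σ, Integrable (fun z => Real.log (max ‖z - ρ‖ u)) (β.restrict K') := fun u hu ρ _ =>
    (gp_int β Y hY hβ _ (gp_logc (fun z => ‖z - ρ‖) (by fun_prop) u hu)).integrableOn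
  obtain ⟨i1, e1⟩ := gp_msum_int (β.restrict K') σ (fun ρ z => Real.log (max ‖z - ρ‖ t)) (hgi t ht0)
  obtain ⟨i2, e2⟩ := gp_msum_int (β.restrict K') σ (fun ρ z => Real.log (max ‖z - ρ‖ r)) (hgi r hr0)
  have hcmp : (σ.map fun ρ => ∫ z in K', Real.log (max ‖z - ρ‖ r) ∂β).sum ≤ (σ.map fun ρ => ∫ z in K', Real.log (max ‖z - ρ‖ t) ∂β + η).sum := by
    refine gp_sum_mono _ _ _ fun ρ hρ => ?_
    have h1 := hK ρ t ht0 (min_le_right _ _)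
    rw [integral_sub (hgi r hr0 ρ hρ) (hgi t ht0 ρ hρ)] at h1
    linarith
  rw [Multiset.sum_map_add, ← e1, ← e2] at hcmp
  simp only [Multiset.map_const', Multiset.sum_replicate, nsmul_eq_mul, hσ] at hcmp
  have hlow2 : ∫ z in K', ((σ.map fun ρ => Real.log (max ‖z - ρ‖ t)).sum + (γ * m - η * m)) ∂β ≤ ∫ z in K', (Real.log (max ‖gpEv P z ω‖ c) + γ * m) ∂β := by
    refine setIntegral_mono_on (i1.add (integrable_const _)) hGi'.integrableOn hKc.measurableSet fun z hz => ?_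
    have hzY := hKY hz
    have h1 := hlow z hzY
    have h2 : (σ.map fun ρ => Real.log (max ‖z - ρ‖ t)) = (σ.map fun ρ => Real.log ‖z - ρ‖) := by
      refine Multiset.map_congr rfl fun ρ hρ => ?_
      rw [max_eq_left ((min_le_left _ _).trans (hδY z hzY ρ hρ))]
    have hq1 := norm_pos_iff.mpr (hq0 _ hzY)
    have h3 : ‖q.eval z‖ ≤ ‖gpEv P z ω‖ := by
      rw [hPe]
      have := norm_sub_norm_le (q.eval z * ω) (p.eval z)
      rw [norm_mul, hω] at this
      have := hpM z hzY
      nlinarith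
    have h4 := Real.log_le_log hq1 (h3.trans (le_max_left _ c))
    rw [h2]; linarith
  have hlow3 : ∫ z in K', (m * (s - η)) ∂β ≤ ∫ z in K', (σ.map fun ρ => Real.log (max ‖z - ρ‖ r)).sum ∂β :=
    setIntegral_mono_on (integrable_const _) i2 hKc.measurableSet fun z hz => hr z (hKY hz)
  rw [integral_add i1 (integrable_const _)] at hlow2
  simp only [integral_const, measureReal_restrict_apply_univ, smul_eq_mul] at hlow2 hlow3
  set κ := β.real K' with hκ
  have f1 : m * (κ * (a - 4 * η) - η) ≤ m * (1 / (k + 1)) + Real.log 2 := by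
    have : m * (κ * (a - 4 * η) - η) = κ * (m * (s - η)) - m * η + κ * (γ * m - η * m) := by rw [hγ]; ring
    linarith
  have f2 : m * (1 / ((k:ℝ) + 1)) ≤ m * (a / 10) := by gcongr
  have f3 : a / 2 - 3 * η ≤ κ * (a - 4 * η) - η := by nlinarith
  have f4 : m * (a / 2 - 3 * η) ≤ m * (κ * (a - 4 * η) - η) := by gcongr
  have f5 : m * (7 * a / 20) ≤ m * (a / 2 - 3 * η) := by gcongr; linarith
  nlinarith


lemma gp_faraway (R R1 η : ℝ) (hR : 1 ≤ R) (hη : 0 < η) (hR1 : R1 = 2 * R + 4 * R / η) (x ρ : ℂ) (hx : ‖x‖ ≤ R) (hρ : R1 ≤ ‖ρ‖) :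
    |Real.log ‖x - ρ‖ - Real.log ‖ρ‖| ≤ η / 2 := by
  have hR0 : 0 < 4 * R / η := by positivity
  have h1 : 0 < ‖ρ‖ := by linarith
  have h2 : ‖ρ‖ - R ≤ ‖x - ρ‖ := by
    have := norm_sub_norm_le ρ x
    rw [norm_sub_rev] at this; linarith
  have h3 : ‖x - ρ‖ ≤ ‖ρ‖ + R := (norm_sub_le _ _).trans (by linarith)
  have h4 : 0 < ‖x - ρ‖ := by linarith
  have h5 : 4 * R ≤ η * ‖ρ‖ := by
    have : 4 * R / η ≤ ‖ρ‖ := by linarith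
    rw [div_le_iff₀ hη] at this; linarith
  rw [abs_le]
  constructor
  · have h := Real.log_le_sub_one_of_pos (show 0 < ‖ρ‖ / ‖x - ρ‖ by positivity)
    rw [Real.log_div h1.ne' h4.ne'] at h
    have : ‖ρ‖ / ‖x - ρ‖ - 1 ≤ η / 2 := by
      rw [sub_le_iff_le_add, div_le_iff₀ h4]
      nlinarith
    linarith
  · have h := Real.log_le_sub_one_of_pos (show 0 < ‖x - ρ‖ / ‖ρ‖ by positivity)
    rw [Real.log_div h4.ne' h1.ne'] at h
    have : ‖x - ρ‖ / ‖ρ‖ - 1 ≤ η / 2 := by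
      rw [sub_le_iff_le_add, div_le_iff₀ h1]
      nlinarith
    linarith

lemma gp_norm_q (R R1 η : ℝ) (hR : 1 ≤ R) (hη : 0 < η) (hR1 : R1 = 2 * R + 4 * R / η) (q : ℂ[X]) (hq : q ≠ 0) (m : ℕ) (hm : q.natDegree ≤ m) :
    ∃ (c : ℝ) (σ : Multiset ℂ), 0 < c ∧ σ.card = m ∧ (∀ ρ ∈ σ, ‖ρ‖ ≤ R1) ∧ (∀ ρ ∈ σ, q.eval ρ = 0 ∨ R < ‖ρ‖) ∧
      ∀ x : ℂ, ‖x‖ ≤ R → q.eval x ≠ 0 → |Real.log ‖(c : ℂ) * q.eval x‖ - (σ.map fun ρ => Real.log ‖x - ρ‖).sum| ≤ η * m := by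
  classical
  have hR0 : 0 < 4 * R / η := by positivity
  have hR10 : 0 < R1 := by linarith
  set s1 := q.roots.filter (fun ρ => ‖ρ‖ ≤ R1) with hs1
  set s2 := q.roots.filter (fun ρ => ¬ ‖ρ‖ ≤ R1) with hs2
  have hs : s1 + s2 = q.roots := Multiset.filter_add_not _ _
  have hcard : s1.card + s2.card ≤ m := by
    rw [← Multiset.card_add, hs]; exact (card_roots' q).trans hm
  set n := m - s1.card with hn
  set L := n * Real.log R1 - (s2.map fun ρ => Real.log ‖ρ‖).sum - Real.log ‖q.leadingCoeff‖ with hL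
  have hnR : ‖(R1:ℂ)‖ = R1 := by rw [Complex.norm_real, Real.norm_of_nonneg hR10.le]
  refine ⟨Real.exp L, s1 + Multiset.replicate n (R1:ℂ), Real.exp_pos _, ?_, ?_, ?_, ?_⟩
  · rw [Multiset.card_add, Multiset.card_replicate]; omega
  · intro ρ hρ
    rcases Multiset.mem_add.mp hρ with h | h
    · exact (Multiset.mem_filter.mp h).2
    · rw [Multiset.eq_of_mem_replicate h, hnR]
  · intro ρ hρ
    rcases Multiset.mem_add.mp hρ with h | h
    · left; exact (mem_roots hq).mp (Multiset.mem_filter.mp h).1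
    · right; rw [Multiset.eq_of_mem_replicate h, hnR]; linarith
  · intro x hx hqx
    have e1 : Real.log ‖q.eval x‖ = Real.log ‖q.leadingCoeff‖ + (s1.map fun ρ => Real.log ‖x - ρ‖).sum + (s2.map fun ρ => Real.log ‖x - ρ‖).sum := by
      have hsp := IsAlgClosed.splits q
      have e2 : q.eval x = q.leadingCoeff * (q.roots.map fun ρ => x - ρ).prod := hsp.eval_eq_prod_roots x
      have hpr : ∀ t : Multiset ℂ, (t.map fun ρ => x - ρ).prod ≠ 0 → Real.log ‖(t.map fun ρ => x - ρ).prod‖ = (t.map fun ρ => Real.log ‖x - ρ‖).sum := by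
        intro t
        induction t using Multiset.induction_on with
        | empty => simp
        | cons b t ih =>
          intro h
          simp only [Multiset.map_cons, Multiset.prod_cons, Multiset.sum_cons] at h ⊢
          have h1 := left_ne_zero_of_mul h
          have h2 := right_ne_zero_of_mul h
          rw [norm_mul, Real.log_mul (norm_ne_zero_iff.mpr h1) (norm_ne_zero_iff.mpr h2), ih h2]
      rw [e2] at hqx
      have h1 := left_ne_zero_of_mul hqx
      have h2 := right_ne_zero_of_mul hqx
      rw [e2, norm_mul, Real.log_mul (norm_ne_zero_iff.mpr h1) (norm_ne_zero_iff.mpr h2), hpr _ h2, ← hs, Multiset.map_add, Multiset.sum_add]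
      ring
    have e3 : Real.log ‖(Real.exp L : ℂ) * q.eval x‖ = L + Real.log ‖q.eval x‖ := by
      rw [norm_mul, Real.log_mul (by simp) (norm_ne_zero_iff.mpr hqx)]
      congr 1
      rw [Complex.norm_real, Real.norm_of_nonneg (Real.exp_pos _).le, Real.log_exp]
    have b1 : |(s2.map fun ρ => Real.log ‖x - ρ‖ - Real.log ‖ρ‖).sum| ≤ s2.card * (η / 2) := by
      have hb : ∀ ρ ∈ s2, |Real.log ‖x - ρ‖ - Real.log ‖ρ‖| ≤ η / 2 := fun ρ hρ =>
        gp_faraway R R1 η hR hη hR1 x ρ hx (not_le.mp (Multiset.mem_filter.mp hρ).2).le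
      rw [abs_le]
      constructor
      · have := gp_sum_mono s2 (fun _ => -(η / 2)) (fun ρ => Real.log ‖x - ρ‖ - Real.log ‖ρ‖) fun ρ hρ => (abs_le.mp (hb ρ hρ)).1
        simp only [Multiset.map_const', Multiset.sum_replicate, nsmul_eq_mul] at this
        linarith
      · have := gp_sum_mono s2 (fun ρ => Real.log ‖x - ρ‖ - Real.log ‖ρ‖) (fun _ => (η / 2)) fun ρ hρ => (abs_le.mp (hb ρ hρ)).2
        simpa only [Multiset.map_const', Multiset.sum_replicate, nsmul_eq_mul] using this
    rw [Multiset.sum_map_sub] at b1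
    have b2 := gp_faraway R R1 η hR hη hR1 x R1 hx hnR.ge
    rw [hnR] at b2
    have hnm : (n:ℝ) ≤ m := by exact_mod_cast Nat.sub_le _ _
    have hsm : (s2.card:ℝ) ≤ m := by exact_mod_cast (by omega : s2.card ≤ m)
    have b3 : |n * (Real.log ‖x - R1‖ - Real.log R1)| ≤ m * (η / 2) := by
      rw [abs_mul, Nat.abs_cast]; gcongr
    have b4 : s2.card * (η / 2) ≤ m * (η / 2) := by gcongr
    rw [e3, e1, Multiset.map_add, Multiset.sum_add, Multiset.map_replicate, Multiset.sum_replicate, nsmul_eq_mul]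
    have : L + (Real.log ‖q.leadingCoeff‖ + (s1.map fun ρ => Real.log ‖x - ρ‖).sum + (s2.map fun ρ => Real.log ‖x - ρ‖).sum) -
        ((s1.map fun ρ => Real.log ‖x - ρ‖).sum + n * Real.log ‖x - R1‖) =
        ((s2.map fun ρ => Real.log ‖x - ρ‖).sum - (s2.map fun ρ => Real.log ‖ρ‖).sum) - n * (Real.log ‖x - R1‖ - Real.log R1) := by
      rw [hL]; ring
    rw [this]
    refine (abs_sub _ _).trans ?_
    linarith


lemma gp_unif (U : Ultrafilter ℕ) (R1 : ℝ) (σ : ℕ → Multiset ℂ) (hne : ∀ i, σ i ≠ 0) (μ : Measure ℂ) [IsProbabilityMeasure μ]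
    (hμ : μ (Metric.closedBall 0 R1)ᶜ = 0)
    (hw : ∀ g : ℂ → ℝ, Continuous g → Tendsto (fun i => ((σ i).map g).sum / (σ i).card) U (𝓝 (∫ z, g z ∂μ)))
    (K : Set ℂ) (hK : IsCompact K) (r ε : ℝ) (hr : 0 < r) (hε : 0 < ε) :
    ∀ᶠ i in (U : Filter ℕ), ∀ x ∈ K, |((σ i).map fun ρ => Real.log (max ‖x - ρ‖ r)).sum - (σ i).card * ∫ z, Real.log (max ‖x - z‖ r) ∂μ| ≤ ε * (σ i).card := by
  refine hK.induction_on (p := fun S => ∀ᶠ i in (U : Filter ℕ), ∀ x ∈ S, |((σ i).map fun ρ => Real.log (max ‖x - ρ‖ r)).sum - (σ i).card * ∫ z, Real.log (max ‖x - z‖ r) ∂μ| ≤ ε * (σ i).card) ?_ ?_ ?_ ?_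
  · simp
  · intro s t hst ht
    filter_upwards [ht] with i hi x hx using hi x (hst hx)
  · intro s t hs ht
    filter_upwards [hs, ht] with i hi hi' x hx
    exact hx.elim (hi x) (hi' x)
  · intro x0 hx0
    refine ⟨Metric.ball x0 (ε / 3 * r), mem_nhdsWithin_of_mem_nhds (Metric.ball_mem_nhds x0 (by positivity)), ?_⟩
    have h1 := hw (fun ρ => Real.log (max ‖x0 - ρ‖ r)) (gp_logc _ (by fun_prop) r hr)
    filter_upwards [h1.eventually (Metric.ball_mem_nhds _ (show 0 < ε / 3 by positivity))] with i hi x hx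
    have hc : (0:ℝ) < (σ i).card := by
      exact_mod_cast Multiset.card_pos.mpr (hne i)
    have hx' : ‖x - x0‖ / r ≤ ε / 3 := by
      rw [Metric.mem_ball, dist_eq_norm] at hx
      rw [div_le_iff₀ hr]; exact hx.le
    have hx'' : ‖x0 - x‖ / r ≤ ε / 3 := by rwa [norm_sub_rev]
    have a1 := gp_Ilip μ _ (isCompact_closedBall 0 R1) hμ r hr x x0
    have a2 := gp_Ilip μ _ (isCompact_closedBall 0 R1) hμ r hr x0 x
    have hl : ∀ y y' : ℂ, ‖y - y'‖ / r ≤ ε / 3 → ((σ i).map fun ρ => Real.log (max ‖y - ρ‖ r)).sum ≤ ((σ i).map fun ρ => Real.log (max ‖y' - ρ‖ r)).sum + (σ i).card * (ε / 3) := by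
      intro y y' hy
      have := gp_sum_mono (σ i) (fun ρ => Real.log (max ‖y - ρ‖ r)) (fun ρ => Real.log (max ‖y' - ρ‖ r) + ε / 3) fun ρ hρ => by
        refine (gp_lip _ ‖y' - ρ‖ r hr).trans ?_
        have : |‖y - ρ‖ - ‖y' - ρ‖| / r ≤ ‖y - y'‖ / r := by
          gcongr
          refine (abs_norm_sub_norm_le _ _).trans ?_
          rw [sub_sub_sub_cancel_right]
        linarith
      rw [Multiset.sum_map_add] at this
      simpa only [Multiset.map_const', Multiset.sum_replicate, nsmul_eq_mul] using this
    have a3 := hl x x0 hx'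
    have a4 := hl x0 x hx''
    rw [Real.dist_eq, abs_lt, lt_sub_iff_add_lt, sub_lt_iff_lt_add, lt_div_iff₀ hc, div_lt_iff₀ hc] at hi
    rw [abs_le]
    set I := ∫ z, Real.log (max ‖x - z‖ r) ∂μ
    set I0 := ∫ z, Real.log (max ‖x0 - z‖ r) ∂μ
    have b1 : (σ i).card * I ≤ (σ i).card * (I0 + ε / 3) := by gcongr; linarith
    have b2 : (σ i).card * I0 ≤ (σ i).card * (I + ε / 3) := by gcongr; linarith
    constructor <;> nlinarith

lemma gp_pieces (R R' M a : ℝ) (hR : 1 ≤ R) (hR' : 1 ≤ R') (hM : 0 ≤ M) (ha : 0 < a) (K : Set ℂ) (hK : IsCompact K) (hKR : ∀ x ∈ K, ‖x‖ ≤ R)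
    (hKr : ∀ x ∈ K, ((x.re : ℝ) : ℂ) = x) (f : ℂ → ℂ) (hf : ∀ x ∈ K, ‖f x‖ ≤ R')
    (hap : ∀ N : ℕ, ∃ m ≥ N, ∃ p q : ℂ[X], p.natDegree ≤ m ∧ q.natDegree ≤ m ∧ (∀ x ∈ K, q.eval x ≠ 0) ∧ (∀ x ∈ K, ‖p.eval x‖ ≤ M * ‖q.eval x‖) ∧
      (∀ x ∈ K, ‖q.eval x * f x - p.eval x‖ ≤ Real.exp (-a * m) * ‖q.eval x‖)) (hKne : K.Nonempty) :
    ∃ (R1 : ℝ) (μ : Measure ℂ) (X : ℤ × ℕ → Set ℂ), IsProbabilityMeasure μ ∧ μ (Metric.closedBall 0 R1)ᶜ = 0 ∧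
      (∀ i, ∀ T : ℝ, ∃ (D : ℕ) (F : ℂ[X][X]), 1 ≤ D ∧ F.leadingCoeff.Monic ∧ F.natDegree ≤ D ∧ gpWD F D ∧ ∀ x ∈ X i, ‖gpEv F x (f x)‖ ≤ Real.exp (-T * D)) ∧
      ∀ x ∈ K, (∃ i, x ∈ X i) ∨ ∀ C : ℝ, ∃ r > 0, ∫ z, Real.log (max ‖x - z‖ r) ∂μ < C := by
  set η := a / 20 with hη
  have hη0 : 0 < η := by positivity
  obtain ⟨R1, hR1⟩ : ∃ R1, R1 = 2 * R + 4 * R / (η / 2) := ⟨_, rfl⟩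
  have hap' : ∀ i : ℕ, ∃ (m : ℕ) (p q : ℂ[X]) (σ : Multiset ℂ), i + 1 ≤ m ∧ p.natDegree ≤ m ∧ q.natDegree ≤ m ∧ (∀ x ∈ K, q.eval x ≠ 0) ∧ (∀ x ∈ K, ‖p.eval x‖ ≤ M * ‖q.eval x‖) ∧
      (∀ x ∈ K, ‖q.eval x * f x - p.eval x‖ ≤ Real.exp (-a * m) * ‖q.eval x‖) ∧ σ.card = m ∧ (∀ ρ ∈ σ, ‖ρ‖ ≤ R1) ∧ (∀ x ∈ K, ∀ ρ ∈ σ, x ≠ ρ) ∧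
      ∀ x ∈ K, |Real.log ‖q.eval x‖ - (σ.map fun ρ => Real.log ‖x - ρ‖).sum| ≤ (η / 2) * m := by
    intro i
    obtain ⟨m, hm, p, q, hp, hq, hq0, hpq, hfq⟩ := hap (i + 1)
    have hqne : q ≠ 0 := by
      obtain ⟨x, hx⟩ := hKne
      rintro rfl
      exact hq0 x hx (by simp)
    obtain ⟨c, σ, hc, hσ, hσR, hσ0, hh⟩ := gp_norm_q R R1 (η / 2) hR (by positivity) hR1 q hqne m hq
    have hcn : ‖(c:ℂ)‖ = c := by rw [Complex.norm_real, Real.norm_of_nonneg hc.le]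
    refine ⟨m, C (c:ℂ) * p, C (c:ℂ) * q, σ, hm, (natDegree_C_mul_le _ _).trans hp, (natDegree_C_mul_le _ _).trans hq, ?_, ?_, ?_, hσ, hσR, ?_, ?_⟩
    · intro x hx
      simp only [eval_mul, eval_C]
      exact mul_ne_zero (by exact_mod_cast hc.ne') (hq0 x hx)
    · intro x hx
      simp only [eval_mul, eval_C, norm_mul, hcn]
      have := mul_le_mul_of_nonneg_left (hpq x hx) hc.le
      linarith
    · intro x hx
      simp only [eval_mul, eval_C, norm_mul, hcn]
      rw [mul_assoc, ← mul_sub, norm_mul, hcn]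
      have := mul_le_mul_of_nonneg_left (hfq x hx) hc.le
      linarith
    · rintro x hx ρ hρ rfl
      rcases hσ0 x hρ with h | h
      · exact hq0 x hx h
      · have := hKR x hx; linarith
    · intro x hx
      have := hh x (hKR x hx) (hq0 x hx)
      simpa only [eval_mul, eval_C] using this
  choose m p q σ hm hp hq hq0 hpq hfq hσ hσR hσx hh using hap'
  set U : Ultrafilter ℕ := hyperfilter ℕ with hU
  have hσne : ∀ i, σ i ≠ 0 := by
    intro i h
    have := hσ i; rw [h] at this
    have := hm i
    simp at *; omega
  obtain ⟨μ, hμp, hμ, hw⟩ := gp_weak U R1 σ hσne hσR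
  set I : ℝ → ℂ → ℝ := fun r x => ∫ z, Real.log (max ‖x - z‖ r) ∂μ with hI
  have hIm : ∀ r r' x, 0 < r → r ≤ r' → I r x ≤ I r' x := fun r r' x h1 h2 => gp_Imono μ _ (isCompact_closedBall 0 R1) hμ r r' h1 h2 x
  have hIc : ∀ r, 0 < r → Continuous (I r) := fun r h => gp_Icont μ _ (isCompact_closedBall 0 R1) hμ r h
  set X : ℤ × ℕ → Set ℂ := fun i => {x | x ∈ K ∧ (∀ r, 0 < r → i.1 * η ≤ I r x) ∧ I (1 / ((i.2:ℝ) + 1)) x ≤ (i.1 + 1) * η} with hX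
  refine ⟨R1, μ, X, hμp, hμ, ?_, ?_⟩
  · rintro ⟨t, j⟩ T
    by_contra hcon
    push Not at hcon
    have hXc : IsCompact (X (t, j)) := by
      have : X (t, j) = K ∩ ((⋂ (r : ℝ) (_ : 0 < r), {x | t * η ≤ I r x}) ∩ {x | I (1 / ((j:ℝ) + 1)) x ≤ (t + 1) * η}) := by
        ext x; simp [hX]; tauto
      rw [this]
      refine hK.inter_right (IsClosed.inter ?_ ?_)
      · exact isClosed_iInter fun r => isClosed_iInter fun hr => isClosed_le continuous_const (hIc r hr)
      · exact isClosed_le (hIc _ (by positivity)) continuous_const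
    have hXK : ∀ x ∈ X (t, j), x ∈ K := fun x hx => hx.1
    set E : Set (ℂ × ℂ) := (fun x => (x, f x)) '' X (t, j) with hE
    have hT : gpT E (max T 0) := by
      intro D F hD hF h1 h2
      obtain ⟨x, hx, hxx⟩ := hcon D F hD hF h1 h2
      refine ⟨(x, f x), ⟨x, hx, rfl⟩, lt_of_le_of_lt ?_ hxx⟩
      gcongr
      exact le_max_left _ _
    refine gp_thmC R R' (max T 0) M hR hR' (le_max_right _ _) hM E ?_ hT (X (t, j)) hXc (fun x hx => hKR x (hXK x hx)) (fun x hx => hKr x (hXK x hx)) ?_ a (t * η) η ha hη0 le_rfl ?_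
    · rintro _ ⟨x, hx, rfl⟩; exact hf x (hXK x hx)
    · rintro _ ⟨x, hx, rfl⟩; exact hx
    · intro r hr hr1 N
      have h1 := gp_unif U R1 σ hσne μ hμ hw K hK r (η / 2) hr (by positivity)
      have h2 := gp_unif U R1 σ hσne μ hμ hw K hK (1 / ((j:ℝ) + 1)) (η / 2) (by positivity) (by positivity)
      have h3 : ∀ᶠ i in (U : Filter ℕ), N ≤ i := Nat.hyperfilter_le_atTop (eventually_ge_atTop N)
      obtain ⟨i, hi1, hi2, hi3⟩ := (h1.and (h2.and h3)).exists
      have hm0 : (0:ℝ) ≤ m i := by positivity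
      refine ⟨m i, by have := hm i; omega, σ i, p i, q i, hσ i, hp i, hq i, fun x hx => hq0 i x (hXK x hx), fun x hx => hpq i x (hXK x hx), ?_, ?_, fun x hx => hσx i x (hXK x hx), ?_, ?_⟩
      · rintro _ ⟨x, hx, rfl⟩; exact hfq i x (hXK x hx)
      · intro x hx
        have e1 := (abs_le.mp (hh i x (hXK x hx))).2
        have e2 := (abs_le.mp (hi2 x (hXK x hx))).2
        have e3 := gp_sum_mono (σ i) (fun ρ => Real.log ‖x - ρ‖) (fun ρ => Real.log (max ‖x - ρ‖ (1 / ((j:ℝ) + 1)))) fun ρ hρ =>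
          Real.log_le_log (norm_pos_iff.mpr (sub_ne_zero.mpr (hσx i x (hXK x hx) ρ hρ))) (le_max_left _ _)
        have e4 : (m i : ℝ) * I (1 / ((j:ℝ) + 1)) x ≤ m i * ((t + 1) * η) := by gcongr; exact hx.2.2
        rw [hσ] at e2
        simp only [hI] at e4
        nlinarith
      · intro x hx
        have e1 := (abs_le.mp (hh i x (hXK x hx))).1
        nlinarith
      · intro x hx
        have e2 := (abs_le.mp (hi1 x (hXK x hx))).1
        have e4 : (m i : ℝ) * (t * η) ≤ m i * I r x := by gcongr; exact hx.2.1 r hr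
        rw [hσ] at e2
        simp only [hI] at e4
        nlinarith
  · intro x hx
    by_cases hb : BddBelow ((fun r => I r x) '' Set.Ioi 0)
    · left
      set S := (fun r => I r x) '' Set.Ioi 0 with hS
      have hSne : S.Nonempty := ⟨_, 1, Set.mem_Ioi.mpr one_pos, rfl⟩
      set t := ⌊sInf S / η⌋ with ht
      have h1 : t * η ≤ sInf S := by
        have := Int.floor_le (sInf S / η)
        rwa [le_div_iff₀ hη0] at this
      have h2 : sInf S < (t + 1) * η := by
        have := Int.lt_floor_add_one (sInf S / η)
        rwa [div_lt_iff₀ hη0] at this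
      obtain ⟨_, ⟨r, hr, rfl⟩, hlt⟩ := exists_lt_of_csInf_lt hSne h2
      obtain ⟨j, hj⟩ := exists_nat_one_div_lt (show 0 < r from hr)
      refine ⟨(t, j), hx, fun r hr => h1.trans (csInf_le hb ⟨r, hr, rfl⟩), ?_⟩
      exact (hIm _ _ x (by positivity) hj.le).trans hlt.le
    · right
      intro C
      rw [not_bddBelow_iff] at hb
      obtain ⟨_, ⟨r, hr, rfl⟩, h⟩ := hb C
      exact ⟨r, hr, h⟩



lemma gp_step0 (a b : ℝ) (hab : a < b) (f : ℝ → ℝ) (hf : ContinuousOn f (Set.Icc a b))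
    (hG : Filter.liminf (fun n : ℕ => (rhoReal f a b n) ^ (1 / (n : ℝ))) Filter.atTop < 1) :
    ∃ α M : ℝ, 0 < α ∧ 1 ≤ M ∧ (∀ x ∈ Set.Icc a b, |f x| ≤ M) ∧ ∀ N : ℕ, ∃ m ≥ N, ∃ p q : ℂ[X], p.natDegree ≤ m ∧ q.natDegree ≤ m ∧
      (∀ x ∈ Set.Icc a b, q.eval (x:ℂ) ≠ 0) ∧ (∀ x ∈ Set.Icc a b, ‖p.eval (x:ℂ)‖ ≤ M * ‖q.eval (x:ℂ)‖) ∧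
      (∀ x ∈ Set.Icc a b, ‖q.eval (x:ℂ) * f x - p.eval (x:ℂ)‖ ≤ Real.exp (-α * m) * ‖q.eval (x:ℂ)‖) := by
  obtain ⟨B, hB⟩ := isCompact_Icc.exists_bound_of_continuousOn hf
  simp only [Real.norm_eq_abs] at hB
  set B1 := max B 1 with hB1
  have hB1' : ∀ x ∈ Set.Icc a b, |f x| ≤ B1 := fun x hx => (hB x hx).trans (le_max_left _ _)
  have h1B : 1 ≤ B1 := le_max_right _ _
  have hmem : ∀ n, B1 ∈ {t : ℝ | ∃ p q : Polynomial ℝ, p.natDegree ≤ n ∧ q.natDegree ≤ n ∧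
    (∀ x ∈ Set.Icc a b, q.eval x ≠ 0) ∧ ∀ x ∈ Set.Icc a b, |f x - p.eval x / q.eval x| ≤ t} := by
    intro n
    exact ⟨0, 1, by simp, by simp, by simp, by simpa using hB1'⟩
  have hlb : ∀ n, ∀ t ∈ {t : ℝ | ∃ p q : Polynomial ℝ, p.natDegree ≤ n ∧ q.natDegree ≤ n ∧
    (∀ x ∈ Set.Icc a b, q.eval x ≠ 0) ∧ ∀ x ∈ Set.Icc a b, |f x - p.eval x / q.eval x| ≤ t}, 0 ≤ t := by
    rintro n t ⟨p, q, _, _, _, h⟩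
    exact (abs_nonneg _).trans (h a ⟨le_rfl, hab.le⟩)
  have hr0 : ∀ n, 0 ≤ rhoReal f a b n := fun n => le_csInf ⟨_, hmem n⟩ (hlb n)
  have hrB : ∀ n, rhoReal f a b n ≤ B1 := fun n => csInf_le ⟨0, hlb n⟩ (hmem n)
  have hbd : ∀ n : ℕ, (rhoReal f a b n) ^ (1 / (n : ℝ)) ≤ B1 := by
    intro n
    rcases Nat.eq_zero_or_pos n with rfl | hn
    · simpa using h1B
    · calc _ ≤ B1 ^ (1 / (n:ℝ)) := Real.rpow_le_rpow (hr0 n) (hrB n) (by positivity)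
        _ ≤ B1 ^ (1:ℝ) := by
          refine Real.rpow_le_rpow_of_exponent_le h1B ?_
          rw [div_le_one (by positivity)]; exact_mod_cast hn
        _ = B1 := Real.rpow_one _
  obtain ⟨c, hc1, hc2⟩ := exists_between (max_lt hG (show (1:ℝ)/2 < 1 by norm_num))
  have hc0 : 0 < c := by
    have := (le_max_right _ _).trans_lt hc1
    linarith
  have hco : IsCoboundedUnder (· ≥ ·) atTop (fun n : ℕ => (rhoReal f a b n) ^ (1 / (n : ℝ))) :=
    IsBoundedUnder.isCoboundedUnder_ge ⟨B1, by simp only [eventually_map]; exact Eventually.of_forall hbd⟩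
  have hfr := frequently_lt_of_liminf_lt hco ((le_max_left _ _).trans_lt hc1)
  refine ⟨-Real.log c, B1 + 1, by have := Real.log_neg hc0 hc2; linarith, by linarith, fun x hx => (hB1' x hx).trans (by linarith), fun N => ?_⟩
  obtain ⟨m, hm, hmc⟩ := (frequently_atTop.mp hfr) (max N 1)
  have hm1 : 1 ≤ m := (le_max_right _ _).trans hm
  have hm0 : (0:ℝ) < m := by exact_mod_cast hm1
  have hlt : rhoReal f a b m < c ^ m := by
    have h1 := Real.rpow_lt_rpow (Real.rpow_nonneg (hr0 m) _) hmc hm0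
    rwa [← Real.rpow_mul (hr0 m), one_div_mul_cancel hm0.ne', Real.rpow_one, Real.rpow_natCast] at h1
  obtain ⟨t, ⟨p, q, hp, hq, hq0, hpq⟩, htc⟩ := exists_lt_of_csInf_lt ⟨_, hmem m⟩ hlt
  have he : Real.exp (- -Real.log c * m) = c ^ m := by
    rw [neg_neg, mul_comm, Real.exp_nat_mul, Real.exp_log hc0]
  have hcm : c ^ m ≤ 1 := pow_le_one₀ hc0.le hc2.le
  have hev : ∀ (u : ℝ[X]) (x : ℝ), (u.map Complex.ofRealHom).eval (x:ℂ) = ((u.eval x : ℝ) : ℂ) := by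
    intro u x
    exact eval_map_apply Complex.ofRealHom x
  refine ⟨m, (le_max_left _ _).trans hm, p.map Complex.ofRealHom, q.map Complex.ofRealHom, natDegree_map_le.trans hp, natDegree_map_le.trans hq, ?_, ?_, ?_⟩
  · intro x hx
    rw [hev]; exact_mod_cast hq0 x hx
  · intro x hx
    rw [hev, hev, Complex.norm_real, Complex.norm_real, Real.norm_eq_abs, Real.norm_eq_abs]
    have h1 := hpq x hx
    have h2 := hB1' x hx
    have h3 : |p.eval x / q.eval x| ≤ B1 + 1 := by
      have := abs_sub_abs_le_abs_sub (p.eval x / q.eval x) (f x)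
      rw [abs_sub_comm] at this
      linarith
    rwa [abs_div, div_le_iff₀ (abs_pos.mpr (hq0 x hx))] at h3
  · intro x hx
    rw [hev, hev, he, ← Complex.ofReal_mul, ← Complex.ofReal_sub, Complex.norm_real, Complex.norm_real, Real.norm_eq_abs, Real.norm_eq_abs]
    have h1 := (hpq x hx).trans htc.le
    have h0 := hq0 x hx
    have : q.eval x * f x - p.eval x = (f x - p.eval x / q.eval x) * q.eval x := by field_simp
    rw [this, abs_mul]
    gcongr



def gpSM (g : ℂ → ℝ) : Prop := Continuous g ∧ ∀ (c : ℂ) (r : ℝ), 0 < r → g c ≤ Real.circleAverage g c r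

lemma gp_ci (g : ℂ → ℝ) (hg : Continuous g) (c : ℂ) (r : ℝ) : CircleIntegrable g c r :=
  hg.continuousOn.circleIntegrable'

lemma gpSM.add {g h : ℂ → ℝ} (hg : gpSM g) (hh : gpSM h) : gpSM fun z => g z + h z := by
  refine ⟨hg.1.add hh.1, fun c r hr => ?_⟩
  rw [Real.circleAverage_fun_add (gp_ci g hg.1 c r) (gp_ci h hh.1 c r)]
  exact add_le_add (hg.2 c r hr) (hh.2 c r hr)

lemma gpSM.cmul {g : ℂ → ℝ} (hg : gpSM g) (a : ℝ) (ha : 0 ≤ a) : gpSM fun z => a * g z := by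
  refine ⟨continuous_const.mul hg.1, fun c r hr => ?_⟩
  have := Real.circleAverage_fun_smul (a := a) (f := g) (c := c) (R := r)
  simp only [smul_eq_mul] at this
  rw [this]
  exact mul_le_mul_of_nonneg_left (hg.2 c r hr) ha

lemma gpSM_const (a : ℝ) : gpSM fun _ => a := ⟨continuous_const, fun c r hr => by rw [Real.circleAverage_const]⟩

lemma gpSM.sum {g : ℕ → ℂ → ℝ} (hg : ∀ k, gpSM (g k)) (n : ℕ) : gpSM fun z => ∑ k ∈ Finset.range n, g k z := by
  induction n with
  | zero => simpa using gpSM_const 0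
  | succ n ih => simp only [Finset.sum_range_succ]; exact ih.add (hg n)

lemma gpSM_log1 (Φ : ℂ → ℂ) (hΦ : Differentiable ℂ Φ) : gpSM fun z => Real.log (max ‖Φ z‖ 1) := by
  have hc := gp_logc (fun z => ‖Φ z‖) hΦ.continuous.norm 1 one_pos
  have hl : ∀ z, 0 ≤ Real.log (max ‖Φ z‖ 1) := fun z => Real.log_nonneg (le_max_right _ _)
  refine ⟨hc, fun c r hr => ?_⟩
  rcases le_or_gt ‖Φ c‖ 1 with h | h
  · simp only [max_eq_right h]
    rw [← Real.circleAverage_const (Real.log 1) c r, Real.log_one]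
    exact Real.circleAverage_mono (gp_ci _ continuous_const c r) (gp_ci _ hc c r) fun x _ => hl x
  · have h0 : Φ c ≠ 0 := norm_pos_iff.mp (one_pos.trans h)
    have han : AnalyticOnNhd ℂ Φ (closedBall c |r|) := fun z _ => hΦ.analyticAt z
    have hj := han.circleAverage_log_norm hr.ne' h0
    have hnn : 0 ≤ ∑ᶠ u, (MeromorphicOn.divisor Φ (closedBall c |r|) u : ℝ) * Real.log (r * ‖c - u‖⁻¹) := by
      refine finsum_nonneg fun u => ?_
      by_cases hu : u ∈ closedBall c |r|
      · refine mul_nonneg (by exact_mod_cast (MeromorphicOn.AnalyticOnNhd.divisor_nonneg han) u) ?_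
        rcases eq_or_ne (‖c - u‖) 0 with h1 | h1
        · simp [h1]
        · refine Real.log_nonneg ?_
          rw [← div_eq_mul_inv, le_div_iff₀ (by positivity), one_mul]
          rw [mem_closedBall, dist_comm, dist_eq_norm, abs_of_pos hr] at hu
          exact hu
      · have : MeromorphicOn.divisor Φ (closedBall c |r|) u = 0 := Function.locallyFinsuppWithin.apply_eq_zero_of_notMem _ hu
        simp [this]
    show Real.log (max ‖Φ c‖ 1) ≤ _
    rw [max_eq_left h.le]
    calc _ ≤ Real.circleAverage (fun z => Real.log ‖Φ z‖) c r := by rw [hj]; linarith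
      _ ≤ _ := by
        have hi : CircleIntegrable (fun z => Real.log ‖Φ z‖) c r :=
          MeromorphicOn.circleIntegrable_log_norm (fun z hz => (hΦ.analyticAt z).meromorphicAt)
        refine Real.circleAverage_mono hi (gp_ci _ hc c r) fun x _ => ?_
        rcases eq_or_ne (Φ x) 0 with h1 | h1
        · simp [h1]
        · exact Real.log_le_log (norm_pos_iff.mpr h1) (le_max_left _ _)

lemma gpSM_log (Φ : ℂ → ℂ) (hΦ : Differentiable ℂ Φ) (s : ℝ) (hs : 0 < s) : gpSM fun z => Real.log (max ‖Φ z‖ s) := by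
  have h1 := (gpSM_log1 (fun z => Φ z / s) (hΦ.div_const _)).add (gpSM_const (Real.log s))
  have : ∀ z, Real.log (max ‖Φ z‖ s) = Real.log (max ‖Φ z / s‖ 1) + Real.log s := by
    intro z
    rw [← Real.log_mul (lt_max_of_lt_right one_pos).ne' hs.ne', max_mul_of_nonneg _ _ hs.le, one_mul, norm_div, Complex.norm_real,
      Real.norm_of_nonneg hs.le, div_mul_cancel₀ _ hs.ne']
  simpa only [this] using h1

lemma gpSM_int (μ : Measure ℂ) [IsProbabilityMeasure μ] (R1 : ℝ) (hμ : μ (closedBall 0 R1)ᶜ = 0) (s : ℝ) (hs : 0 < s) (a d : ℂ) :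
    gpSM fun w => ∫ ζ, Real.log (max ‖(a + w * d) - ζ‖ s) ∂μ := by
  have hK := isCompact_closedBall (0:ℂ) R1
  refine ⟨(gp_Icont μ _ hK hμ s hs).comp (by fun_prop), fun c r hr => ?_⟩
  have hcont : Continuous fun p : ℝ × ℂ => Real.log (max ‖(a + circleMap c r p.1 * d) - p.2‖ s) :=
    gp_logc (fun p : ℝ × ℂ => ‖(a + circleMap c r p.1 * d) - p.2‖) (by fun_prop) s hs
  have h1 : μ.restrict (closedBall 0 R1) = μ := Measure.restrict_eq_self_of_ae_mem (by rw [ae_iff]; exact hμ)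
  have hint : Integrable (fun p : ℝ × ℂ => Real.log (max ‖(a + circleMap c r p.1 * d) - p.2‖ s)) ((volume.restrict (Set.uIoc 0 (2 * Real.pi))).prod μ) := by
    rw [← h1, Measure.prod_restrict]
    refine IntegrableOn.mono_set (hcont.continuousOn.integrableOn_compact ((isCompact_Icc (a := (0:ℝ)) (b := 2 * Real.pi)).prod hK)) ?_
    refine Set.prod_mono ?_ subset_rfl
    rw [Set.uIoc_of_le (by positivity)]
    exact Set.Ioc_subset_Icc_self
  have hsw : Real.circleAverage (fun w => ∫ ζ, Real.log (max ‖(a + w * d) - ζ‖ s) ∂μ) c r = ∫ ζ, Real.circleAverage (fun w => Real.log (max ‖(a + w * d) - ζ‖ s)) c r ∂μ := by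
    unfold Real.circleAverage
    simp only [smul_eq_mul]
    rw [integral_const_mul]
    congr 1
    exact intervalIntegral_integral_swap hint
  rw [hsw]
  refine integral_mono (gp_intl μ _ hK hμ s hs _) ?_ fun ζ => ?_
  · simp only [Real.circleAverage, smul_eq_mul]
    refine Integrable.const_mul ?_ _
    have := hint.integral_prod_right
    simpa only [intervalIntegral.intervalIntegral_eq_integral_uIoc, if_pos (show (0:ℝ) ≤ 2 * Real.pi by positivity), one_smul] using this
  · exact (gpSM_log (fun w => (a + w * d) - ζ) (by fun_prop) s hs).2 c r hr

lemma gpSM.dom {g : ℂ → ℝ} (hg : gpSM g) (c : ℂ) (r : ℝ) (hr : 0 < r) (h : ℂ → ℝ) (hh : ContinuousOn h (closedBall c r))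
    (F : ℂ → ℂ) (hF : DifferentiableOn ℂ F (ball c r)) (hFh : ∀ z ∈ ball c r, h z = (F z).re) (ε : ℝ)
    (hs : ∀ z ∈ sphere c r, g z ≤ h z + ε) : ∀ z ∈ closedBall c r, g z ≤ h z + ε := by
  have key : ∀ e : ℝ, 0 < e → ∀ z ∈ closedBall c r, g z ≤ h z + ε + e * r ^ 2 := by
    intro e he
    set k : ℂ → ℝ := fun z => g z - h z + e * ‖z - c‖ ^ 2 with hk
    have hkc : ContinuousOn k (closedBall c r) := (hg.1.continuousOn.sub hh).add (by fun_prop)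
    obtain ⟨z0, hz0, hmax⟩ := (isCompact_closedBall c r).exists_isMaxOn ⟨c, mem_closedBall_self hr.le⟩ hkc
    have hsp : z0 ∈ sphere c r := by
      by_contra hns
      have hb : z0 ∈ ball c r := by
        rcases lt_or_eq_of_le (mem_closedBall.mp hz0) with h1 | h1
        · exact h1
        · exact absurd h1 hns
      obtain ⟨δ', hδ', hsub'⟩ := Metric.isOpen_iff.mp isOpen_ball z0 hb
      set δ := δ' / 2 with hδd
      have hδ : 0 < δ := by positivity
      have hsub : closedBall z0 δ ⊆ ball c r := (closedBall_subset_ball (by linarith)).trans hsub'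
      set Φ : ℂ → ℂ := fun z => F z + ((k z0 - e * ‖z0 - c‖ ^ 2 - e * δ ^ 2 : ℝ) : ℂ) - 2 * e * ((starRingEnd ℂ) (z0 - c) * (z - z0)) with hΦ
      have hΦd : DiffContOnCl ℂ Φ (ball z0 |δ|) := by
        rw [abs_of_pos hδ]
        refine DifferentiableOn.diffContOnCl ?_
        rw [closure_ball _ hδ.ne']
        exact ((hF.mono hsub).add_const _).sub (by fun_prop)
      have hmv := hΦd.circleAverage
      have hci : CircleIntegrable Φ z0 δ := by
        refine ContinuousOn.circleIntegrable hδ.le ?_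
        refine hΦd.continuousOn.mono ?_
        rw [abs_of_pos hδ, closure_ball _ hδ.ne']
        exact sphere_subset_closedBall
      have hre := Complex.reCLM.circleAverage_comp_comm hci
      rw [hmv] at hre
      have hcir : CircleIntegrable (Complex.reCLM ∘ Φ) z0 δ := by
        refine ContinuousOn.circleIntegrable hδ.le ?_
        refine Complex.reCLM.continuous.comp_continuousOn (hΦd.continuousOn.mono ?_)
        rw [abs_of_pos hδ, closure_ball _ hδ.ne']
        exact sphere_subset_closedBall
      have hle : Real.circleAverage g z0 δ ≤ Real.circleAverage (Complex.reCLM ∘ Φ) z0 δ := by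
        refine Real.circleAverage_mono (gp_ci g hg.1 z0 δ) hcir fun z hz => ?_
        rw [abs_of_pos hδ] at hz
        have hzb := hsub (sphere_subset_closedBall hz)
        have h1 : k z ≤ k z0 := hmax (ball_subset_closedBall hzb)
        have h2 : ‖z - c‖ ^ 2 = ‖z0 - c‖ ^ 2 + δ ^ 2 + 2 * ((starRingEnd ℂ) (z0 - c) * (z - z0)).re := by
          rw [mem_sphere, dist_eq_norm] at hz
          rw [← hz]
          simp only [← Complex.normSq_eq_norm_sq, Complex.normSq_apply]
          simp
          ring
        have h3 : (Complex.reCLM ∘ Φ) z = h z + (k z0 - e * ‖z0 - c‖ ^ 2 - e * δ ^ 2) - 2 * e * ((starRingEnd ℂ) (z0 - c) * (z - z0)).re := by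
          simp only [Function.comp, Complex.reCLM_apply, hΦ, Complex.sub_re, Complex.add_re, Complex.ofReal_re, hFh z hzb]
          congr 1
          have : (2 * (e:ℂ)) = ((2 * e : ℝ) : ℂ) := by push_cast; ring
          rw [this, Complex.re_ofReal_mul]
        rw [h3]
        have h4 : k z = g z - h z + e * ‖z - c‖ ^ 2 := rfl
        rw [h2] at h4
        linarith
      have h5 := hg.2 z0 δ hδ
      have h6 : Complex.reCLM (Φ z0) = h z0 + (k z0 - e * ‖z0 - c‖ ^ 2 - e * δ ^ 2) := by
        simp only [Complex.reCLM_apply, hΦ, sub_self, mul_zero, sub_zero, Complex.add_re, Complex.ofReal_re, hFh z0 hb]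
      have h7 : k z0 = g z0 - h z0 + e * ‖z0 - c‖ ^ 2 := rfl
      rw [hre, h6, h7] at hle
      have : 0 < e * δ ^ 2 := by positivity
      linarith
    intro z hz
    have h1 : k z ≤ k z0 := hmax hz
    have h2 := hs z0 hsp
    rw [mem_sphere, dist_eq_norm] at hsp
    have h3 : 0 ≤ e * ‖z - c‖ ^ 2 := by positivity
    simp only [hk, hsp] at h1
    linarith
  intro z hz
  have ht : Tendsto (fun e : ℝ => h z + ε + e * r ^ 2) (𝓝[>] 0) (𝓝 (h z + ε)) := by
    have : Tendsto (fun e : ℝ => h z + ε + e * r ^ 2) (𝓝 0) (𝓝 (h z + ε + 0 * r ^ 2)) := by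
      apply Continuous.tendsto; fun_prop
    simpa using this.mono_left nhdsWithin_le_nhds
  exact ge_of_tendsto ht (by filter_upwards [self_mem_nhdsWithin] with e he using key e he z hz)

lemma gp_psh (v : ℕ → ℂ × ℂ → ℝ) (hc : ∀ n, Continuous (v n)) (hm : ∀ p, Antitone fun n => v n p)
    (hv : ∀ n (a d : ℂ × ℂ), gpSM fun w => v n (a + w • d)) : PshFn (fun p => ⨅ n, (v n p : EReal)) := by
  have hnt : ∀ p, (⨅ n, (v n p : EReal)) ≠ ⊤ := fun p => ne_top_of_le_ne_top (EReal.coe_ne_top _) (iInf_le _ 0)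
  refine ⟨upperSemicontinuous_iInf fun n => (continuous_coe_real_ereal.comp (hc n)).upperSemicontinuous, hnt, fun a d => ⟨?_, fun w => hnt _, ?_⟩⟩
  · exact upperSemicontinuous_iInf fun n => (continuous_coe_real_ereal.comp ((hc n).comp (by fun_prop))).upperSemicontinuous
  · rintro c r hr h hh ⟨F, hF, hFh⟩ hs z hz
    refine EReal.le_of_forall_lt_iff_le.mp fun t ht => ?_
    set ε := t - h z with hε
    have hε0 : 0 < ε := by rw [hε]; linarith [EReal.coe_lt_coe_iff.mp ht]
    have hN : ∃ N, ∀ z ∈ sphere c r, v N (a + z • d) ≤ h z + ε := by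
      refine (isCompact_sphere c r).induction_on (p := fun S => ∃ N, ∀ z ∈ S, v N (a + z • d) ≤ h z + ε) ⟨0, by simp⟩ ?_ ?_ ?_
      · rintro s t hst ⟨N, hN⟩; exact ⟨N, fun z hz => hN z (hst hz)⟩
      · rintro s t ⟨N, hN⟩ ⟨N', hN'⟩
        refine ⟨max N N', fun z hz => hz.elim (fun h => ?_) (fun h => ?_)⟩
        · exact (hm _ (le_max_left _ _)).trans (hN z h)
        · exact (hm _ (le_max_right _ _)).trans (hN' z h)
      · intro x hx
        have h1 : (⨅ n, (v n (a + x • d) : EReal)) < ((h x + ε : ℝ) : EReal) := (hs x hx).trans_lt (by exact_mod_cast (by linarith : h x < h x + ε))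
        obtain ⟨N, hN⟩ := iInf_lt_iff.mp h1
        have hN' : v N (a + x • d) < h x + ε := by exact_mod_cast hN
        have hcv : ContinuousWithinAt (fun z => v N (a + z • d)) (sphere c r) x := ((hc N).comp (by fun_prop)).continuousWithinAt
        have hch : ContinuousWithinAt (fun z => h z + ε) (sphere c r) x := ((hh x (sphere_subset_closedBall hx)).mono sphere_subset_closedBall).add continuousWithinAt_const
        exact ⟨_, hcv.eventually_lt hch hN', N, fun z hz => le_of_lt hz⟩
    obtain ⟨N, hN⟩ := hN
    have h2 := (hv N a d).dom c r hr h hh F hF hFh ε hN z hz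
    refine (iInf_le _ N).trans ?_
    exact_mod_cast h2.trans (by rw [hε]; linarith)


lemma gp_pbd (p : ℂ[X]) (D : ℕ) (hp : p.natDegree ≤ D) (B : ℝ) (hB : ∀ i, ‖p.coeff i‖ ≤ B) (z : ℂ) :
    ‖p.eval z‖ ≤ B * ((D + 1) * (max ‖z‖ 1) ^ D) := by
  have hB0 : 0 ≤ B := (norm_nonneg _).trans (hB 0)
  rw [eval_eq_sum_range' (Nat.lt_succ_of_le hp)]
  refine (norm_sum_le _ _).trans ?_
  calc _ ≤ ∑ i ∈ Finset.range (D + 1), B * (max ‖z‖ 1) ^ D := by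
        refine Finset.sum_le_sum fun i hi => ?_
        rw [norm_mul, norm_pow]
        refine mul_le_mul (hB i) ?_ (by positivity) hB0
        exact (pow_le_pow_left₀ (norm_nonneg _) (le_max_left _ _) i).trans
          (pow_le_pow_right₀ (le_max_right _ _) (Nat.lt_succ_iff.mp (Finset.mem_range.mp hi)))
    _ = _ := by simp; ring

lemma gp_evbd (G : ℂ[X][X]) (D : ℕ) (hG : G.natDegree ≤ D) (hW : gpWD G D) (h1 : ∀ i j, ‖(G.coeff i).coeff j‖ ≤ 1) (z w : ℂ) :
    ‖gpEv G z w‖ ≤ ((D + 1) * (max ‖w‖ 1) ^ D) * ((D + 1) * (max ‖z‖ 1) ^ D) := by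
  refine gp_pbd _ D ((natDegree_map_le).trans hG) _ (fun i => ?_) z
  rw [coeff_map, coe_evalRingHom]
  have := gp_pbd (G.coeff i) D (hW i) 1 (h1 i) w
  rwa [one_mul] at this

lemma gp_evlog (G : ℂ[X][X]) (D : ℕ) (hD : 1 ≤ D) (hG : G.natDegree ≤ D) (hW : gpWD G D) (h1 : ∀ i j, ‖(G.coeff i).coeff j‖ ≤ 1) (z w : ℂ) :
    ‖gpEv G z w‖ ≤ Real.exp (D * (2 * Real.log 2 + Real.log (max ‖z‖ 1) + Real.log (max ‖w‖ 1))) := by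
  refine (gp_evbd G D hG hW h1 z w).trans ?_
  have h2 : ((D:ℝ) + 1) ≤ 2 ^ D := by exact_mod_cast Nat.lt_two_pow_self
  have hz : (0:ℝ) < max ‖z‖ 1 := lt_max_of_lt_right one_pos
  have hw : (0:ℝ) < max ‖w‖ 1 := lt_max_of_lt_right one_pos
  have e : Real.exp (D * (2 * Real.log 2 + Real.log (max ‖z‖ 1) + Real.log (max ‖w‖ 1))) = (2 ^ D * (max ‖w‖ 1) ^ D) * (2 ^ D * (max ‖z‖ 1) ^ D) := by
    rw [Real.exp_nat_mul, Real.exp_add, Real.exp_add, Real.exp_log hz, Real.exp_log hw, two_mul, Real.exp_add, Real.exp_log two_pos]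
    rw [mul_pow, mul_pow, mul_pow]; ring
  rw [e]
  gcongr

lemma gp_normz (F : ℂ[X][X]) (hF : F.leadingCoeff.Monic) (D : ℕ) (hD : F.natDegree ≤ D) (hW : gpWD F D) :
    ∃ G : ℂ[X][X], G.natDegree ≤ D ∧ gpWD G D ∧ (∀ i j, ‖(G.coeff i).coeff j‖ ≤ 1) ∧ (∃ i j, ‖(G.coeff i).coeff j‖ = 1) ∧
      ∀ z w, ‖gpEv G z w‖ ≤ ‖gpEv F z w‖ := by
  obtain ⟨⟨i, j⟩, -, hm⟩ := Finset.exists_max_image (Finset.range (D+1) ×ˢ Finset.range (D+1)) (fun ij => ‖(F.coeff ij.1).coeff ij.2‖)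
    ⟨(0,0), by simp⟩
  set M := ‖(F.coeff i).coeff j‖ with hM
  have hall : ∀ i j, ‖(F.coeff i).coeff j‖ ≤ M := by
    intro i' j'
    by_cases h1 : i' ≤ D
    · by_cases h2 : j' ≤ D
      · exact hm (i', j') (by simp; omega)
      · rw [coeff_eq_zero_of_natDegree_lt (lt_of_le_of_lt (hW i') (by omega))]; simp [hM]
    · rw [coeff_eq_zero_of_natDegree_lt (p := F) (by omega)]; simp [hM]
  have hM1 : 1 ≤ M := by
    have := hall F.natDegree F.leadingCoeff.natDegree
    have h2 : (F.coeff F.natDegree).coeff F.leadingCoeff.natDegree = 1 := hF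
    rw [h2, norm_one] at this; exact this
  have hM0 : 0 < M := one_pos.trans_le hM1
  have hn : ‖((M⁻¹:ℝ):ℂ)‖ = M⁻¹ := by rw [Complex.norm_real, Real.norm_of_nonneg (by positivity)]
  have hco : ∀ i j, ‖((C (C ((M⁻¹:ℝ):ℂ)) * F).coeff i).coeff j‖ = M⁻¹ * ‖(F.coeff i).coeff j‖ := by
    intro i j
    rw [coeff_C_mul, coeff_C_mul, norm_mul, hn]
  refine ⟨C (C ((M⁻¹:ℝ):ℂ)) * F, (natDegree_C_mul_le _ _).trans hD, fun i => ?_, fun i j => ?_, ⟨i, j, ?_⟩, fun z w => ?_⟩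
  · rw [coeff_C_mul]; exact (natDegree_C_mul_le _ _).trans (hW i)
  · rw [hco, inv_mul_le_iff₀ hM0, mul_one]; exact hall i j
  · rw [hco]; exact inv_mul_cancel₀ hM0.ne'
  · rw [gpEv_mul, gpEv_C, eval_C, norm_mul, hn]
    exact mul_le_of_le_one_left (norm_nonneg _) (inv_le_one_of_one_le₀ hM1)

lemma gp_mahler (g : ℂ[X]) (D : ℕ) (hD : g.natDegree ≤ D) (i : ℕ) (hg : g.coeff i ≠ 0) :
    Real.log ‖g.coeff i‖ - D * Real.log 2 ≤ g.logMahlerMeasure := by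
  have h := norm_coeff_le_choose_mul_mahlerMeasure i g
  have hg0 : g ≠ 0 := by rintro rfl; simp at hg
  have hpos := mahlerMeasure_pos_of_ne_zero hg0
  have hch : ((g.natDegree.choose i : ℕ) : ℝ) ≤ 2 ^ D := by
    exact_mod_cast (Nat.choose_le_two_pow _ _).trans (Nat.pow_le_pow_right (by norm_num) hD)
  have h2 : ‖g.coeff i‖ ≤ 2 ^ D * g.mahlerMeasure := h.trans (mul_le_mul_of_nonneg_right hch hpos.le)
  have h3 := Real.log_le_log (norm_pos_iff.mpr hg) h2
  rw [Real.log_mul (by positivity) hpos.ne', Real.log_pow, ← logMahlerMeasure_eq_log_MahlerMeasure] at h3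
  linarith

lemma gp_choose (c : ℕ → ℝ) (hc : ∀ k, 0 ≤ c k) (hcs : ∀ n, ∑ k ∈ Finset.range n, c k ≤ 1) (g : ℕ → ℂ[X]) (D : ℕ → ℕ) (hD1 : ∀ k, 1 ≤ D k)
    (hD : ∀ k, (g k).natDegree ≤ D k) (i : ℕ → ℕ) (hi : ∀ k, (g k).coeff (i k) ≠ 0) (A : ℝ) (hA0 : 0 ≤ A)
    (hA : ∀ k (z : ℂ), ‖z‖ = 1 → ‖(g k).eval z‖ ≤ Real.exp (D k * A)) (S : ℝ)
    (hS : ∀ n, - S ≤ ∑ k ∈ Finset.range n, c k * ((1 / D k) * Real.log ‖(g k).coeff (i k)‖)) :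
    ∃ z : ℂ, ‖z‖ = 1 ∧ (∀ k, (g k).eval z ≠ 0) ∧ ∃ L : ℝ, ∀ n, - L ≤ ∑ k ∈ Finset.range n, c k * ((1 / D k) * Real.log ‖(g k).eval z‖) := by
  set ν := (volume : Measure ℝ).restrict (Set.Ioc 0 (2 * Real.pi)) with hν
  set H : ℕ → ℝ → ℝ := fun k θ => c k * (A - (1 / D k) * Real.log ‖(g k).eval (circleMap 0 1 θ)‖) with hH
  have hDp : ∀ k, (0:ℝ) < D k := fun k => by exact_mod_cast hD1 k
  have hH0 : ∀ k θ, 0 ≤ H k θ := by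
    intro k θ
    refine mul_nonneg (hc k) (sub_nonneg.mpr ?_)
    rw [one_div, inv_mul_le_iff₀ (hDp k)]
    rcases eq_or_ne ((g k).eval (circleMap 0 1 θ)) 0 with h | h
    · rw [h]; simp; exact mul_nonneg (hDp k).le hA0
    · have := hA k (circleMap 0 1 θ) (by simp)
      rw [← Real.log_exp (D k * A)]
      exact Real.log_le_log (norm_pos_iff.mpr h) this
  have hpi : (0:ℝ) ≤ 2 * Real.pi := by positivity
  have hint0 : ∀ k, Integrable (fun θ => Real.log ‖(g k).eval (circleMap 0 1 θ)‖) ν := fun k =>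
    (intervalIntegrable_iff_integrableOn_Ioc_of_le hpi).mp (g k).intervalIntegrable_mahlerMeasure
  have hint : ∀ k, Integrable (H k) ν := fun k =>
    ((integrable_const A).sub ((hint0 k).const_mul _)).const_mul _
  have hval : ∀ k, ∫ θ, H k θ ∂ν ≤ 2 * Real.pi * (c k * (A + Real.log 2) - c k * ((1 / D k) * Real.log ‖(g k).coeff (i k)‖)) := by
    intro k
    have h1 := gp_mahler (g k) (D k) (hD k) (i k) (hi k)
    rw [logMahlerMeasure_def, Real.circleAverage_def, smul_eq_mul, intervalIntegral.integral_of_le hpi] at h1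
    rw [integral_const_mul, integral_sub (integrable_const A) ((hint0 k).const_mul _), integral_const_mul]
    have e : ∫ θ, A ∂ν = 2 * Real.pi * A := by
      rw [integral_const, hν]; simp [Measure.real, ENNReal.toReal_ofReal hpi]; exact Or.inl Real.pi_pos.le
    rw [e]
    set J := ∫ θ, Real.log ‖(g k).eval (circleMap 0 1 θ)‖ ∂ν
    have h2 : 2 * Real.pi * (Real.log ‖(g k).coeff (i k)‖ - D k * Real.log 2) ≤ J := by
      rw [← le_inv_mul_iff₀ (by positivity)]; exact h1
    have h3 : (1 / D k) * (2 * Real.pi * (Real.log ‖(g k).coeff (i k)‖ - D k * Real.log 2)) ≤ 1 / D k * J :=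
      mul_le_mul_of_nonneg_left h2 (by have := hDp k; positivity)
    have h4 : (1 / (D k:ℝ)) * (2 * Real.pi * (Real.log ‖(g k).coeff (i k)‖ - D k * Real.log 2)) =
      2 * Real.pi * ((1 / D k) * Real.log ‖(g k).coeff (i k)‖ - Real.log 2) := by
      have := (hDp k).ne'; field_simp
    rw [h4] at h3
    calc _ ≤ c k * (2 * Real.pi * A - 2 * Real.pi * ((1 / D k) * Real.log ‖(g k).coeff (i k)‖ - Real.log 2)) :=
          mul_le_mul_of_nonneg_left (by linarith) (hc k)
      _ = _ := by ring
  have hsum : ∀ n, ∑ k ∈ Finset.range n, ∫ θ, H k θ ∂ν ≤ 2 * Real.pi * (A + Real.log 2 + S) := by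
    intro n
    refine (Finset.sum_le_sum fun k _ => hval k).trans ?_
    rw [← Finset.mul_sum, Finset.sum_sub_distrib, ← Finset.sum_mul]
    refine mul_le_mul_of_nonneg_left ?_ hpi
    have : (∑ k ∈ Finset.range n, c k) * (A + Real.log 2) ≤ 1 * (A + Real.log 2) :=
      mul_le_mul_of_nonneg_right (hcs n) (add_nonneg hA0 (Real.log_nonneg one_le_two))
    linarith [hS n]
  have hsm : Summable fun k => ∫ θ, H k θ ∂ν := summable_of_sum_range_le (fun k => integral_nonneg (hH0 k)) hsum
  have hfin : ∫⁻ θ, ∑' k, ENNReal.ofReal (H k θ) ∂ν ≠ ⊤ := by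
    rw [lintegral_tsum fun k => (hint k).1.aemeasurable.ennreal_ofReal]
    simp_rw [← ofReal_integral_eq_lintegral_ofReal (hint _) (Eventually.of_forall (hH0 _))]
    exact hsm.tsum_ofReal_ne_top
  have hae : ∀ᵐ θ ∂ν, ∑' k, ENNReal.ofReal (H k θ) < ⊤ :=
    ae_lt_top' (AEMeasurable.ennreal_tsum fun k => (hint k).1.aemeasurable.ennreal_ofReal) hfin
  have hz : ∀ᵐ θ ∂ν, ∀ k, (g k).eval (circleMap 0 1 θ) ≠ 0 := by
    rw [ae_all_iff]
    intro k
    have hg0 : g k ≠ 0 := by intro h; have := hi k; rw [h] at this; simp at this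
    rw [hν, ae_restrict_iff' measurableSet_Ioc, ae_iff]
    refine Set.Finite.measure_zero ?_ _
    have hinj : Set.InjOn (circleMap 0 1) (Set.Ioc 0 (2 * Real.pi)) := by
      intro x hx y hy h
      have h1 := circleMap_eq_circleMap_iff (0:ℂ) (one_ne_zero) |>.mp h
      obtain ⟨n, hn⟩ := h1
      have h2 : (x:ℝ) = y + n * (2 * Real.pi) := by
        have : ((x:ℂ)) * Complex.I = ((y:ℂ) + n * (2 * Real.pi)) * Complex.I := by rw [hn]; ring
        exact_mod_cast mul_right_cancel₀ Complex.I_ne_zero this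
      have hp := Real.pi_pos
      have h3 : (n:ℝ) < 1 := by by_contra hh; push Not at hh; nlinarith [hx.1, hx.2, hy.1, hy.2]
      have h4 : (-1:ℝ) < n := by by_contra hh; push Not at hh; nlinarith [hx.1, hx.2, hy.1, hy.2]
      have : n = 0 := by
        have h5 : n < 1 := by exact_mod_cast h3
        have h6 : -1 < n := by exact_mod_cast h4
        omega
      rw [h2, this]; simp
    refine Set.Finite.of_finite_image (f := circleMap 0 1) (((g k).roots.toFinset.finite_toSet).subset ?_) (hinj.mono ?_)
    · rintro _ ⟨θ, hθ, rfl⟩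
      simp at hθ
      simp [hg0, hθ.2]
    · intro θ hθ
      simp at hθ
      exact ⟨hθ.1, hθ.2.1⟩
  have hne : NeBot (ae ν) := by
    rw [ae_neBot, hν]; intro h
    have := congrArg (fun m : Measure ℝ => m Set.univ) h
    simp [Real.pi_pos] at this
    linarith [Real.pi_pos]
  obtain ⟨θ, h1, h2⟩ := (hae.and hz).exists
  have hs : Summable fun k => H k θ := by
    have := ENNReal.summable_toReal h1.ne
    simpa [ENNReal.toReal_ofReal (hH0 _ θ)] using this
  refine ⟨circleMap 0 1 θ, by simp, h2, ∑' k, H k θ, fun n => ?_⟩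
  have h3 := hs.sum_le_tsum (Finset.range n) fun k _ => hH0 k θ
  have h4 : ∑ k ∈ Finset.range n, H k θ = (∑ k ∈ Finset.range n, c k) * A - ∑ k ∈ Finset.range n, c k * ((1 / D k) * Real.log ‖(g k).eval (circleMap 0 1 θ)‖) := by
    rw [Finset.sum_mul, ← Finset.sum_sub_distrib]
    exact Finset.sum_congr rfl fun k _ => by simp only [hH]; ring
  have h5 : 0 ≤ (∑ k ∈ Finset.range n, c k) * A := mul_nonneg (Finset.sum_nonneg fun k _ => hc k) hA0
  linarith


lemma gp_diff (P : ℂ[X][X]) (a b c d : ℂ) : Differentiable ℂ fun w : ℂ => gpEv P (a + w * b) (c + w * d) := by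
  induction P using Polynomial.induction_on' with
  | add p q hp hq => simp only [gpEv_add]; exact hp.add hq
  | monomial n p =>
    rw [← C_mul_X_pow_eq_monomial]
    simp only [gpEv_mul, gpEv_pow, gpEv_X, gpEv_C]
    exact (p.differentiable.comp (by fun_prop)).mul (by fun_prop)

lemma gp_nt (c : ℕ → ℝ) (hc : ∀ k, 0 ≤ c k) (hcs : ∀ n, ∑ k ∈ Finset.range n, c k ≤ 1) (G : ℕ → ℂ[X][X]) (D : ℕ → ℕ) (hD1 : ∀ k, 1 ≤ D k)
    (hD : ∀ k, (G k).natDegree ≤ D k) (hW : ∀ k, gpWD (G k) (D k)) (h1 : ∀ k i j, ‖((G k).coeff i).coeff j‖ ≤ 1)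
    (he : ∀ k, ∃ i j, ‖((G k).coeff i).coeff j‖ = 1) (R : ℝ) (hR : 1 ≤ R) :
    ∃ z w : ℂ, ‖z‖ = R ∧ (∀ k, gpEv (G k) z w ≠ 0) ∧ ∃ L : ℝ, ∀ n, - L ≤ ∑ k ∈ Finset.range n, c k * ((1 / D k) * Real.log ‖gpEv (G k) z w‖) := by
  choose i j hij using he
  have hDp : ∀ k, (0:ℝ) < D k := fun k => by exact_mod_cast hD1 k
  have hR0 : 0 < R := one_pos.trans_le hR
  obtain ⟨w, hw, hw0, L, hL⟩ := gp_choose c hc hcs (fun k => (G k).coeff (i k)) D hD1 (fun k => hW k _) j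
    (fun k h => by have := hij k; rw [h] at this; simp at this) (Real.log 2) (Real.log_nonneg one_le_two) (fun k z hz => by
      have h2 : ((D k:ℝ) + 1) ≤ 2 ^ (D k) := by exact_mod_cast Nat.lt_two_pow_self
      have := gp_pbd ((G k).coeff (i k)) (D k) (hW k _) 1 (h1 k _) z
      rw [hz] at this
      simp at this
      rw [Real.exp_nat_mul, Real.exp_log two_pos]
      linarith) 0 (fun n => by simp [hij])
  have hev : ∀ k z, (((G k).map (evalRingHom w)).comp (C (R:ℂ) * X)).eval z = gpEv (G k) (R * z) w := by
    intro k z; simp [gpEv]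
  have hco : ∀ k, (((G k).map (evalRingHom w)).comp (C (R:ℂ) * X)).coeff (i k) = ((G k).coeff (i k)).eval w * (R:ℂ) ^ (i k) := by
    intro k; rw [comp_C_mul_X_coeff, coeff_map, coe_evalRingHom]
  have hRc : (R:ℂ) ≠ 0 := by exact_mod_cast hR0.ne'
  obtain ⟨z, hz, hz0, L', hL'⟩ := gp_choose c hc hcs (fun k => ((G k).map (evalRingHom w)).comp (C (R:ℂ) * X)) D hD1 (fun k => by
      refine (natDegree_comp_le).trans ?_
      calc _ ≤ (D k) * 1 := Nat.mul_le_mul ((natDegree_map_le).trans (hD k)) ((natDegree_C_mul_le _ _).trans natDegree_X_le)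
        _ = _ := mul_one _) i (fun k => by
      rw [hco]; exact mul_ne_zero (hw0 k) (pow_ne_zero _ hRc)) (2 * Real.log 2 + Real.log R) (by
        have := Real.log_nonneg one_le_two; have := Real.log_nonneg hR; positivity) (fun k z hz => by
      rw [hev]
      have := gp_evlog (G k) (D k) (hD1 k) (hD k) (hW k) (h1 k) (R * z) w
      rw [hw, norm_mul, hz, Complex.norm_real, Real.norm_of_nonneg hR0.le, mul_one, max_eq_left hR] at this
      simpa using this) L (fun n => by
      refine (hL n).trans (Finset.sum_le_sum fun k _ => ?_)
      rw [hco, norm_mul, norm_pow, Complex.norm_real, Real.norm_of_nonneg hR0.le]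
      refine mul_le_mul_of_nonneg_left (mul_le_mul_of_nonneg_left (Real.log_le_log (norm_pos_iff.mpr (hw0 k)) ?_) (by have := hDp k; positivity)) (hc k)
      exact le_mul_of_one_le_right (norm_nonneg _) (one_le_pow₀ hR))
  simp only [hev] at hz0 hL'
  exact ⟨R * z, w, by rw [norm_mul, hz, Complex.norm_real, Real.norm_of_nonneg hR0.le, mul_one], hz0, L', hL'⟩

noncomputable def gpU (G : ℂ[X][X]) (D n : ℕ) (p : ℂ × ℂ) : ℝ := (1 / D) * Real.log (max ‖gpEv G p.1 p.2‖ (Real.exp (-(n * D))))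

noncomputable def gpB (p : ℂ × ℂ) : ℝ := 2 * Real.log 2 + Real.log (max ‖p.1‖ 1) + Real.log (max ‖p.2‖ 1)

lemma gpB_nn (p : ℂ × ℂ) : 0 ≤ gpB p := by
  have h1 := Real.log_nonneg one_le_two
  have h2 := Real.log_nonneg (le_max_right ‖p.1‖ 1)
  have h3 := Real.log_nonneg (le_max_right ‖p.2‖ 1)
  unfold gpB; linarith

lemma gpU_le (G : ℂ[X][X]) (D n : ℕ) (hD : 1 ≤ D) (p : ℂ × ℂ) (t : ℝ) (h1 : ‖gpEv G p.1 p.2‖ ≤ Real.exp (D * t)) (h2 : -(n:ℝ) ≤ t) : gpU G D n p ≤ t := by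
  have hDp : (0:ℝ) < D := by exact_mod_cast hD
  rw [gpU, one_div, inv_mul_le_iff₀ hDp, ← Real.log_exp (D * t)]
  refine Real.log_le_log (lt_max_of_lt_right (Real.exp_pos _)) (max_le h1 (Real.exp_le_exp.mpr ?_))
  nlinarith

lemma gpU_anti (G : ℂ[X][X]) (D n m : ℕ) (hnm : n ≤ m) (p : ℂ × ℂ) : gpU G D m p ≤ gpU G D n p := by
  refine mul_le_mul_of_nonneg_left (Real.log_le_log (lt_max_of_lt_right (Real.exp_pos _)) (max_le_max le_rfl (Real.exp_le_exp.mpr ?_))) (by positivity)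
  have : (n:ℝ) ≤ m := by exact_mod_cast hnm
  have hDp : (0:ℝ) ≤ D := by positivity
  nlinarith

lemma gpU_ge (G : ℂ[X][X]) (D n : ℕ) (p : ℂ × ℂ) (h : gpEv G p.1 p.2 ≠ 0) : (1 / D) * Real.log ‖gpEv G p.1 p.2‖ ≤ gpU G D n p :=
  mul_le_mul_of_nonneg_left (Real.log_le_log (norm_pos_iff.mpr h) (le_max_left _ _)) (by positivity)

lemma gp_csum (n : ℕ) : ∑ k ∈ Finset.range n, ((1:ℝ)/2) ^ (k+1) = 1 - (1/2) ^ n := by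
  induction n with
  | zero => simp
  | succ n ih => rw [Finset.sum_range_succ, ih]; ring

lemma gp_bot (v : ℕ → ℝ) (h : ∀ C : ℝ, ∃ n, v n ≤ C) : (⨅ n, (v n : EReal)) = ⊥ := by
  rw [EReal.eq_bot_iff_forall_lt]
  intro y
  obtain ⟨n, hn⟩ := h (y - 1)
  exact lt_of_le_of_lt (iInf_le _ n) (by exact_mod_cast (by linarith : v n < y))

lemma gp_enum : ∃ e : ℕ → ℤ × ℕ, ∀ i, {k | e k = i}.Infinite := by
  refine ⟨fun k => (Denumerable.eqv (ℤ × ℕ)).symm (Nat.unpair k).1, fun i => ?_⟩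
  refine Set.infinite_of_injective_forall_mem (f := fun m : ℕ => Nat.pair (Denumerable.eqv (ℤ × ℕ) i) m) (fun a b h => ?_) fun m => ?_
  · exact (Nat.pair_eq_pair.mp h).2
  · simp

lemma gp_final (R1 : ℝ) (μ : Measure ℂ) [IsProbabilityMeasure μ] (hμ : μ (Metric.closedBall 0 R1)ᶜ = 0) (X : ℤ × ℕ → Set ℂ) (f : ℂ → ℂ) (K : Set ℂ)
    (hX : ∀ i, ∀ T : ℝ, ∃ (D : ℕ) (F : ℂ[X][X]), 1 ≤ D ∧ F.leadingCoeff.Monic ∧ F.natDegree ≤ D ∧ gpWD F D ∧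
      ∀ x ∈ X i, ‖gpEv F x (f x)‖ ≤ Real.exp (-T * D))
    (hK : ∀ x ∈ K, (∃ i, x ∈ X i) ∨ ∀ C : ℝ, ∃ r > 0, ∫ z, Real.log (max ‖x - z‖ r) ∂μ < C) :
    Pluripolar {p : ℂ × ℂ | ∃ x ∈ K, p = (x, f x)} := by
  obtain ⟨e, he⟩ := gp_enum
  have hY := isCompact_closedBall (0:ℂ) R1
  have hG : ∀ k : ℕ, ∃ (D : ℕ) (G : ℂ[X][X]), 1 ≤ D ∧ G.natDegree ≤ D ∧ gpWD G D ∧ (∀ i j, ‖(G.coeff i).coeff j‖ ≤ 1) ∧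
      (∃ i j, ‖(G.coeff i).coeff j‖ = 1) ∧ ∀ x ∈ X (e k), ‖gpEv G x (f x)‖ ≤ Real.exp (D * (-(2 ^ (k+1)))) := by
    intro k
    obtain ⟨D, F, hD, hF, hd, hW, hx⟩ := hX (e k) (2 ^ (k+1))
    obtain ⟨G, h1, h2, h3, h4, h5⟩ := gp_normz F hF D hd hW
    exact ⟨D, G, hD, h1, h2, h3, h4, fun x hxx => (h5 _ _).trans ((hx x hxx).trans_eq (by ring_nf))⟩
  choose D G hD1 hD hW h1 hex hsm using hG
  set c : ℕ → ℝ := fun k => (1/2) ^ (k+1) with hc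
  have hc0 : ∀ k, 0 ≤ c k := fun k => by positivity
  have hcsum : ∀ n, ∑ k ∈ Finset.range n, c k = 1 - (1/2) ^ n := gp_csum
  have hUB : ∀ n k p, gpU (G k) (D k) n p ≤ gpB p := fun n k p =>
    gpU_le _ _ _ (hD1 k) p _ (gp_evlog (G k) (D k) (hD1 k) (hD k) (hW k) (h1 k) p.1 p.2)
      (by have := gpB_nn p; have : (0:ℝ) ≤ n := by positivity
          linarith)
  set I : ℕ → ℂ → ℝ := fun n z => ∫ ζ, Real.log (max ‖z - ζ‖ (Real.exp (-(n:ℝ)))) ∂μ with hI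
  have hIm : ∀ z (n m : ℕ), n ≤ m → I m z ≤ I n z := fun z n m h =>
    gp_Imono μ _ hY hμ _ _ (Real.exp_pos _) (Real.exp_le_exp.mpr (by have : (n:ℝ) ≤ m := by exact_mod_cast h
                                                                     linarith)) z
  set v : ℕ → ℂ × ℂ → ℝ := fun n p => ∑ k ∈ Finset.range n, c k * gpU (G k) (D k) n p + (1/2) ^ n * gpB p + I n p.1 with hv
  have hBsm : ∀ a d : ℂ × ℂ, gpSM fun w => gpB (a + w • d) := fun a d =>
    ((gpSM_const _).add (gpSM_log (fun w => a.1 + w * d.1) (by fun_prop) 1 one_pos)).add (gpSM_log (fun w => a.2 + w * d.2) (by fun_prop) 1 one_pos)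
  have hUsm : ∀ n k (a d : ℂ × ℂ), gpSM fun w => gpU (G k) (D k) n (a + w • d) := fun n k a d =>
    (gpSM_log (fun w => gpEv (G k) (a.1 + w * d.1) (a.2 + w * d.2)) (gp_diff _ _ _ _ _) _ (Real.exp_pos _)).cmul _ (by positivity)
  have hpsh := gp_psh v (fun n => by
      refine ((continuous_finsetSum _ fun k _ => continuous_const.mul (continuous_const.mul ?_)).add (continuous_const.mul ?_)).add ?_
      · exact gp_logc (fun p : ℂ × ℂ => ‖gpEv (G k) p.1 p.2‖) (gp_cont _).norm _ (Real.exp_pos _)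
      · exact (continuous_const.add (gp_logc (fun p : ℂ × ℂ => ‖p.1‖) (by fun_prop) 1 one_pos)).add (gp_logc (fun p : ℂ × ℂ => ‖p.2‖) (by fun_prop) 1 one_pos)
      · exact (gp_Icont μ _ hY hμ _ (Real.exp_pos _)).comp continuous_fst)
    (fun p => antitone_nat_of_succ_le fun n => by
      have e1 : ∑ k ∈ Finset.range n, c k * gpU (G k) (D k) (n+1) p ≤ ∑ k ∈ Finset.range n, c k * gpU (G k) (D k) n p :=
        Finset.sum_le_sum fun k _ => mul_le_mul_of_nonneg_left (gpU_anti _ _ _ _ (Nat.le_succ n) p) (hc0 k)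
      have e2 : c n * gpU (G n) (D n) (n+1) p ≤ (1/2) ^ (n+1) * gpB p := mul_le_mul_of_nonneg_left (hUB _ _ p) (hc0 n)
      have e3 := hIm p.1 n (n+1) (Nat.le_succ n)
      have e4 : ((1:ℝ)/2) ^ n * gpB p = (1/2) ^ (n+1) * gpB p + (1/2) ^ (n+1) * gpB p := by ring
      simp only [hv, Finset.sum_range_succ]
      linarith)
    (fun n a d => ((gpSM.sum (fun k => (hUsm n k a d).cmul _ (hc0 k)) n).add ((hBsm a d).cmul _ (by positivity))).add
      (gpSM_int μ R1 hμ _ (Real.exp_pos _) a.1 d.1))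
  refine ⟨_, hpsh, ?_, ?_⟩
  · obtain ⟨z, w, hz, hzw, L, hL⟩ := gp_nt c hc0 (fun n => by rw [hcsum]; linarith [pow_nonneg (by norm_num : (0:ℝ) ≤ 1/2) n])
      G D hD1 hD hW h1 hex (max 1 (R1 + 1)) (le_max_left _ _)
    refine ⟨(z, w), ?_⟩
    have hlow : ∀ n, -L ≤ v n (z, w) := by
      intro n
      have e1 : ∑ k ∈ Finset.range n, c k * ((1 / D k) * Real.log ‖gpEv (G k) z w‖) ≤ ∑ k ∈ Finset.range n, c k * gpU (G k) (D k) n (z, w) :=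
        Finset.sum_le_sum fun k _ => mul_le_mul_of_nonneg_left (gpU_ge (G k) (D k) n (z, w) (hzw k)) (hc0 k)
      have e2 : 0 ≤ ((1:ℝ)/2) ^ n * gpB (z, w) := mul_nonneg (by positivity) (gpB_nn _)
      have e3 : 0 ≤ I n z := by
        refine integral_nonneg_of_ae ?_
        have : ∀ᵐ ζ ∂μ, ζ ∈ Metric.closedBall (0:ℂ) R1 := by rw [ae_iff]; exact hμ
        filter_upwards [this] with ζ hζ
        refine Real.log_nonneg (le_max_of_le_left ?_)
        rw [mem_closedBall_zero_iff] at hζ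
        have h3 := norm_sub_norm_le z ζ
        have h4 := le_max_right 1 (R1 + 1)
        linarith
      have := hL n
      simp only [hv]
      linarith
    have : ((-L : ℝ) : EReal) ≤ ⨅ n, (v n (z, w) : EReal) := le_iInf fun n => by exact_mod_cast hlow n
    exact (lt_of_lt_of_le (EReal.bot_lt_coe _) this).ne'
  · rintro _ ⟨x, hx, rfl⟩
    refine gp_bot (fun n => v n (x, f x)) fun C => ?_
    set B := gpB (x, f x) with hB
    rcases hK x hx with ⟨i, hi⟩ | h
    · obtain ⟨L, hL⟩ := exists_nat_ge (B + I 0 x - C)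
      obtain ⟨S, hS, hcard⟩ := (he i).exists_subset_card_eq L
      obtain ⟨N, hN⟩ := S.exists_nat_subset_range
      have hnN : N ≤ 2 ^ (N+1) := (Nat.lt_two_pow_self).le.trans (Nat.pow_le_pow_right (by norm_num) (Nat.le_succ N))
      refine ⟨2 ^ (N+1), ?_⟩
      set n := 2 ^ (N+1) with hn
      have hterm : ∀ k ∈ Finset.range n, c k * gpU (G k) (D k) n (x, f x) ≤ c k * B - (if k ∈ S then 1 else 0) := by
        intro k _
        split_ifs with hk
        · have hek : e k = i := hS hk
          have hkN : k < N := Finset.mem_range.mp (hN hk)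
          have h3 := gpU_le (G k) (D k) n (hD1 k) (x, f x) (-(2 ^ (k+1))) (hsm k x (hek ▸ hi)) (by
            rw [hn]; push_cast
            exact neg_le_neg (pow_le_pow_right₀ one_le_two (by omega)))
          have h4 := mul_le_mul_of_nonneg_left h3 (hc0 k)
          have h5 : c k * (-(2:ℝ) ^ (k+1)) = -1 := by
            simp only [hc]; rw [mul_neg, ← mul_pow]; norm_num
          have h6 := mul_nonneg (hc0 k) (gpB_nn (x, f x))
          rw [← hB] at h6
          linarith
        · rw [sub_zero]; exact mul_le_mul_of_nonneg_left (hUB _ _ _) (hc0 k)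
      have h3 := Finset.sum_le_sum hterm
      rw [Finset.sum_sub_distrib, ← Finset.sum_mul, hcsum, Finset.sum_ite_mem, Finset.inter_eq_right.mpr (hN.trans (Finset.range_mono hnN))] at h3
      simp only [Finset.sum_const, hcard, nsmul_eq_mul, mul_one] at h3
      have h4 := hIm x 0 n (Nat.zero_le _)
      show ∑ k ∈ Finset.range n, c k * gpU (G k) (D k) n (x, f x) + (1/2) ^ n * B + I n x ≤ C
      linarith
    · obtain ⟨r, hr, hlt⟩ := h (C - B)
      obtain ⟨n, hn⟩ := exists_nat_ge (-Real.log r)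
      refine ⟨n, ?_⟩
      have h2 : I n x ≤ ∫ z, Real.log (max ‖x - z‖ r) ∂μ := gp_Imono μ _ hY hμ _ _ (Real.exp_pos _) (by
        rw [← Real.exp_log hr]; exact Real.exp_le_exp.mpr (by linarith)) x
      have h3 : ∑ k ∈ Finset.range n, c k * gpU (G k) (D k) n (x, f x) ≤ ∑ k ∈ Finset.range n, c k * B :=
        Finset.sum_le_sum fun k _ => mul_le_mul_of_nonneg_left (hUB _ _ _) (hc0 k)
      rw [← Finset.sum_mul, hcsum] at h3
      show ∑ k ∈ Finset.range n, c k * gpU (G k) (D k) n (x, f x) + (1/2) ^ n * B + I n x ≤ C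
      linarith

/-- **Pluripolarity of graphs of quasianalytic functions in the sense of Gonchar.**
If `f` is continuous on the segment `Δ = [a,b] ⊂ ℝ` and belongs to the Gonchar class
`R(Δ)`, i.e. `liminf ρ_n(f)^{1/n} < 1`, then the graph
`Γ_f = {(x, f(x)) : x ∈ Δ} ⊂ ℂ²` is pluripolar in `ℂ²`. -/
theorem graph_pluripolar_of_gonchar (a b : ℝ) (hab : a < b) (f : ℝ → ℝ)
    (hf : ContinuousOn f (Set.Icc a b))
    (hGonchar : Filter.liminf (fun n : ℕ => (rhoReal f a b n) ^ (1 / (n : ℝ)))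
      Filter.atTop < 1) :
    Pluripolar {p : ℂ × ℂ | ∃ x ∈ Set.Icc a b, p = ((x : ℂ), (f x : ℂ))} := by
  obtain ⟨α, M, hα, hM, hfM, hap⟩ := gp_step0 a b hab f hf hGonchar
  set K : Set ℂ := (fun x : ℝ => (x:ℂ)) '' Set.Icc a b with hK
  obtain ⟨R1, μ, X, hp, hμ, hX, hc⟩ := gp_pieces (max 1 (max |a| |b|)) M M α (le_max_left _ _) hM (by linarith) hα K
    (isCompact_Icc.image Complex.continuous_ofReal) (by
      rintro _ ⟨x, hx, rfl⟩
      simp only [Complex.norm_real, Real.norm_eq_abs]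
      exact (abs_le_max_abs_abs hx.1 hx.2).trans (le_max_right _ _)) (by
      rintro _ ⟨x, hx, rfl⟩; simp) (fun z => (f z.re : ℂ)) (by
      rintro _ ⟨x, hx, rfl⟩
      simpa using hfM x hx) (by
      intro N
      obtain ⟨m, hm, p, q, h1, h2, h3, h4, h5⟩ := hap N
      refine ⟨m, hm, p, q, h1, h2, ?_, ?_, ?_⟩
      · rintro _ ⟨x, hx, rfl⟩; exact h3 x hx
      · rintro _ ⟨x, hx, rfl⟩; exact h4 x hx
      · rintro _ ⟨x, hx, rfl⟩; simpa using h5 x hx) (⟨a, a, ⟨le_rfl, hab.le⟩, rfl⟩)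
  have := gp_final R1 μ hμ X (fun z => (f z.re : ℂ)) K hX hc
  convert this using 1
  ext p
  simp [hK]
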